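/- Let G be a graph and x, y two distinct vertices of G. Suppose G + xy is 2-connected, every vertex of G other than x and y has degree at least 4 in G, and G - x is triangle-free. Then G contains three (x,y)-paths P1, P2, P3 with ||P1|| > ||P2|| > ||P3|| ≥ 2 such that either (||P1||-||P2||, ||P2||-||P3||) = (2,2), or {||P1||-||P2||, ||P2||-||P3||} = {1,2}. -/

import Mathlib

open SimpleGraph

/-- `G` is `k`-connected: more than `k` vertices, and deleting any set of fewer than
`k` vertices leaves a connected graph. -/
def KConnected {V : Type*} (G : SimpleGraph V) (k : ℕ) : Prop :=
  k < Nat.card V ∧ ∀ S : Set V, S.Finite → S.ncard < k → (G.induce Sᶜ).Connected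

/-- `G + xy`: the graph `G` with the edge `xy` added (equal to `G` if already present). -/
def AddEdge {V : Type*} (G : SimpleGraph V) (x y : V) : SimpleGraph V :=
  G ⊔ SimpleGraph.fromEdgeSet {s(x, y)}

/-- `G` has a cycle of length `n`. -/
def HasCycleLength {V : Type*} (G : SimpleGraph V) (n : ℕ) : Prop :=
  ∃ (v : V) (c : G.Walk v v), c.IsCycle ∧ c.length = n

/-- `G` contains `k` cycles of consecutive lengths. -/
def HasConsecCycles {V : Type*} (G : SimpleGraph V) (k : ℕ) : Prop :=
  ∃ m : ℕ, ∀ i < k, HasCycleLength G (m + i)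
/-- Three path lengths `a > b > c ≥ 2` are *good* if they form an arithmetic progression
with common difference 2, or the two differences are `{1, 2}` in some order. -/
def GoodTriple (a b c : ℕ) : Prop :=
  2 ≤ c ∧ c < b ∧ b < a ∧
    ((a = b + 2 ∧ b = c + 2) ∨ (a = b + 1 ∧ b = c + 2) ∨ (a = b + 2 ∧ b = c + 1))

/-!
Delete the edge `xy` if present. The remaining graph with its roots `x` and `y` belongs to a class
closed under suitable contractions: a set `C` of non-root vertices, with its neighbours outside
contracted to two new roots, gives a smaller member of the class, and a path between the new roots
lifts to an `(x,y)`-path that is longer by a constant. As common shifts preserve length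
differences, induction applies to `C`; one vertex `z` is exempt from the degree condition to allow
for vertices that lose neighbours. Hence small separators do not occur in a minimal counterexample.

Two paths whose lengths differ by one or two need only degree at least three, and are found first.
For three paths, some vertex `u` shares a set `T` of at least two neighbours with `x`. A path from
`T` to `y` can be prolonged to `x` either directly or through `u` and another vertex of `T`, the
second way being longer by two. So two good paths in a part of the graph with lengths `a` and `b`
give `a`, `b` and `max a b + 2`, up to a shift. Applied to the components left by deleting `x`, `y`,
`u` and `T`, this shows that `T` consists of two vertices and contains all neighbours of `y`. The
rest of the graph, with the two vertices of `T` in place of `x` and `y`, or with `u` merged into one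
of them, is then a smaller counterexample.
-/

namespace GoodPaths

variable {V : Type*}

/-! ### Paths inside a set of vertices -/

/-- There is a path of length `n` from `a` to `b` in `G` with all vertices in `S`. Only the length
and a bound on the vertex set are recorded, so disjointness of paths is disjointness of sets. -/
def PathIn (G : SimpleGraph V) (S : Set V) (a b : V) (n : ℕ) : Prop :=
  ∃ p : G.Walk a b, p.IsPath ∧ p.length = n ∧ ∀ v ∈ p.support, v ∈ S

/-- `T` separates `A` from the rest of `G`: every neighbour of `A` outside `A` lies in `T`. The sets
`A` and `T` may overlap. -/
def SeparatedBy (G : SimpleGraph V) (A T : Set V) : Prop :=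
  ∀ a ∈ A, ∀ b, G.Adj a b → b ∈ A ∨ b ∈ T

/-- The component of `v` in the subgraph induced on `U`; it is empty when `v ∉ U`. -/
def componentIn (G : SimpleGraph V) (U : Set V) (v : V) : Set V :=
  {w | ∃ n, PathIn G U v w n}

section Paths

variable {G H : SimpleGraph V} {S T U W A D : Set V} {a b c v w x y : V} {m n : ℕ}

lemma PathIn.nil (h : a ∈ S) : PathIn G S a a 0 :=
  ⟨.nil, by simp, by simp, by simpa using h⟩

lemma PathIn.mono (h : PathIn G S a b n) (hST : S ⊆ T) : PathIn G T a b n :=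
  let ⟨p, hp, hl, hs⟩ := h
  ⟨p, hp, hl, fun v hv => hST (hs v hv)⟩

lemma PathIn.univ (h : PathIn G S a b n) : PathIn G Set.univ a b n :=
  h.mono (Set.subset_univ S)

lemma PathIn.symm (h : PathIn G S a b n) : PathIn G S b a n :=
  let ⟨p, hp, hl, hs⟩ := h
  ⟨p.reverse, hp.reverse, by simpa using hl, fun v hv => hs v (by simpa using hv)⟩

lemma PathIn.left_mem (h : PathIn G S a b n) : a ∈ S :=
  let ⟨p, _, _, hs⟩ := h
  hs a p.start_mem_support

lemma PathIn.right_mem (h : PathIn G S a b n) : b ∈ S :=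
  h.symm.left_mem

lemma PathIn.cons (hp : PathIn G S b c n) (h : G.Adj a b) (ha : a ∉ S) :
    PathIn G (insert a S) a c (n + 1) := by
  obtain ⟨p, hp, hl, hs⟩ := hp
  refine ⟨.cons h p, hp.cons fun hm => ha (hs a hm), by simp [hl], fun v hv => ?_⟩
  rw [Walk.support_cons, List.mem_cons] at hv
  exact hv.imp_right (hs v)

lemma PathIn.cons_of_sdiff (hp : PathIn G (S \ {a}) b c n) (h : G.Adj a b) (ha : a ∈ S) :
    PathIn G S a c (n + 1) :=
  (hp.cons h fun h' => h'.2 rfl).mono (Set.insert_subset ha Set.sdiff_subset)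

lemma PathIn.uncons (h : PathIn G S a c n) (hac : a ≠ c) :
    ∃ b m, n = m + 1 ∧ G.Adj a b ∧ PathIn G (S \ {a}) b c m := by
  obtain ⟨p, hp, hl, hs⟩ := h
  cases p with
  | nil => exact absurd rfl hac
  | cons hadj q =>
    rw [Walk.cons_isPath_iff] at hp
    refine ⟨_, q.length, by simpa using hl.symm, hadj, q, hp.1, rfl, fun v hv => ⟨?_, ?_⟩⟩
    · exact hs v (by simp [hv])
    · rintro rfl
      exact hp.2 hv

lemma PathIn.eq_zero (h : PathIn G S a a n) : n = 0 := by
  obtain ⟨p, hp, rfl, -⟩ := h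
  exact Walk.length_eq_zero_iff.2 (Walk.isPath_iff_nil.1 hp)

@[elab_as_elim]
lemma PathIn.induction {motive : ∀ S a n, PathIn G S a c n → Prop}
    (nil : ∀ S (hc : c ∈ S), motive S c 0 (.nil hc))
    (cons : ∀ S a b m (_ : a ≠ c) (ha : a ∈ S) (hab : G.Adj a b) (hb : PathIn G (S \ {a}) b c m),
      motive (S \ {a}) b m hb → motive S a (m + 1) (hb.cons_of_sdiff hab ha))
    {S : Set V} {a : V} {n : ℕ} (h : PathIn G S a c n) : motive S a n h := by
  induction n generalizing S a with
  | zero =>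
    obtain ⟨p, -, hl, -⟩ := id h
    obtain rfl := Walk.eq_of_length_eq_zero hl
    exact nil S h.left_mem
  | succ n ih =>
    have hac : a ≠ c := by
      rintro rfl
      exact absurd h.eq_zero n.succ_ne_zero
    obtain ⟨b, m, hm, hab, hb⟩ := h.uncons hac
    obtain rfl := Nat.succ_injective hm
    exact cons S a b n hac h.left_mem hab hb (ih hb)

lemma PathIn.append (h₁ : PathIn G S a b m) (h₂ : PathIn G T b c n)
    (hd : ∀ v ∈ S, v ∈ T → v = b) : PathIn G (S ∪ T) a c (m + n) := by
  induction h₁ using PathIn.induction with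
  | nil S _ =>
    rw [zero_add]
    exact h₂.mono Set.subset_union_right
  | cons S a b' m hab haS hadj _ ih =>
    rw [add_right_comm]
    refine (ih fun v hv => hd v hv.1).mono (fun v hv => ?_) |>.cons_of_sdiff hadj (Or.inl haS)
    rcases hv with hv | hv
    · exact ⟨Or.inl hv.1, hv.2⟩
    · refine ⟨Or.inr hv, ?_⟩
      rintro rfl
      exact hab (hd v haS hv)

lemma PathIn.transfer {C : Set V} (h : PathIn H S a b n) (ha : a ∈ C)
    (hstep : ∀ u ∈ C, ∀ v ∈ S, H.Adj u v → v ∈ C ∧ G.Adj u v) : PathIn G (S ∩ C) a b n := by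
  induction h using PathIn.induction with
  | nil S hb => exact .nil ⟨hb, ha⟩
  | cons S a b' m _ haS hadj hp ih =>
    obtain ⟨hbC, hadj'⟩ := hstep a ha b' hp.left_mem.1 hadj
    refine ((ih hbC fun u hu v hv => hstep u hu v hv.1).mono ?_).cons_of_sdiff hadj' ⟨haS, ha⟩
    exact fun v hv => ⟨⟨hv.1.1, hv.2⟩, hv.1.2⟩

lemma PathIn.mono_graph (h : PathIn H S a b n) (hle : H ≤ G) : PathIn G S a b n :=
  (h.transfer (Set.mem_univ a) fun _ _ v _ huv => ⟨Set.mem_univ v, hle huv⟩).mono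
    Set.inter_subset_left

lemma PathIn.mem_of_closed (h : PathIn G S a b n) (ha : a ∈ A)
    (hA : ∀ u ∈ A, ∀ v ∈ S, G.Adj u v → v ∈ A) : b ∈ A :=
  (h.transfer ha fun u hu v hv huv => ⟨hA u hu v hv huv, huv⟩).right_mem.2

lemma PathIn.exists_first_hit (h : PathIn G S a b n) (hb : b ∈ W) :
    ∃ w ∈ W, ∃ m, PathIn G (S \ (W \ {w})) a w m := by
  induction h using PathIn.induction with
  | nil S hS => exact ⟨b, hb, 0, .nil ⟨hS, by simp⟩⟩
  | cons S a b' _ _ haS hadj _ ih =>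
    by_cases haW : a ∈ W
    · exact ⟨a, haW, 0, .nil ⟨haS, by simp⟩⟩
    · obtain ⟨w, hw, m', hp'⟩ := ih
      refine ⟨w, hw, m' + 1, PathIn.cons_of_sdiff (hp'.mono ?_) hadj ⟨haS, fun h => haW h.1⟩⟩
      exact fun v hv => ⟨⟨hv.1.1, hv.2⟩, hv.1.2⟩

lemma PathIn.exists_before_entering (h : PathIn G S a b n) (ha : a ∉ D) (hb : b ∈ D)
    (hD : SeparatedBy G D T) : ∃ t ∈ T, ∃ m, PathIn G (S \ D) a t m := by
  induction h using PathIn.induction with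
  | nil S _ => exact absurd hb ha
  | cons S a b' _ _ haS hadj _ ih =>
    by_cases hb' : b' ∈ D
    · exact ⟨a, (hD b' hb' a hadj.symm).resolve_left ha, 0, .nil ⟨haS, ha⟩⟩
    · obtain ⟨t, ht, m', hp'⟩ := ih hb'
      refine ⟨t, ht, m' + 1, PathIn.cons_of_sdiff (hp'.mono ?_) hadj ⟨haS, ha⟩⟩
      exact fun v hv => ⟨⟨hv.1.1, hv.2⟩, hv.1.2⟩

lemma PathIn.exists_split (h : PathIn G S a b n) :
    ∃ S₀ ⊆ S, PathIn G S₀ a b n ∧ ∀ v ∈ S₀, ∃ S₁ S₂ m₁ m₂, S₁ ⊆ S₀ ∧ S₂ ⊆ S₀ ∧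
      PathIn G S₁ a v m₁ ∧ PathIn G S₂ v b m₂ ∧ ∀ w ∈ S₁, w ∈ S₂ → w = v := by
  obtain ⟨p, hp, hl, hs⟩ := h
  refine ⟨{v | v ∈ p.support}, hs, ⟨p, hp, hl, fun v hv => hv⟩, fun v hv => ?_⟩
  obtain ⟨q, r, hq, hr, rfl⟩ := hp.mem_support_iff_exists_append.1 hv
  refine ⟨{w | w ∈ q.support}, {w | w ∈ r.support}, _, _,
    Walk.support_subset_support_append_left _ _, Walk.support_subset_support_append_right _ _,
    ⟨q, hq, rfl, fun _ h => h⟩, ⟨r, hr, rfl, fun _ h => h⟩, fun w hwq hwr => ?_⟩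
  by_contra hwv
  have hnd := hp.support_nodup
  rw [Walk.support_append] at hnd
  have hwt : w ∈ r.support.tail := (Walk.mem_support_iff r).1 hwr |>.resolve_left hwv
  exact List.disjoint_of_nodup_append hnd hwq hwt

lemma pathIn_two (hxa : G.Adj x a) (hay : G.Adj a y) (hxy : x ≠ y) : PathIn G {x, a, y} x y 2 :=
  ((PathIn.nil (Set.mem_singleton y)).cons hay hay.ne).cons hxa (by simp [hxa.ne, hxy])

lemma pathIn_three (hxa : G.Adj x a) (hab : G.Adj a b) (hby : G.Adj b y) (hxy : x ≠ y)
    (hxb : x ≠ b) (hay : a ≠ y) : PathIn G {x, a, b, y} x y 3 :=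
  (pathIn_two hab hby hay).cons hxa (by simp [hxa.ne, hxb, hxy])

lemma componentIn_subset : componentIn G U v ⊆ U := fun _ ⟨_, h⟩ => h.right_mem

lemma mem_componentIn_self (h : v ∈ U) : v ∈ componentIn G U v := ⟨0, .nil h⟩

lemma mem_componentIn_of_adj (hw : w ∈ componentIn G U v) (h : G.Adj w a) (ha : a ∈ U) :
    a ∈ componentIn G U v := by
  obtain ⟨n, hn⟩ := hw
  obtain ⟨S₀, hS₀, hp, hsplit⟩ := hn.exists_split
  by_cases haS : a ∈ S₀
  · obtain ⟨S₁, -, m₁, -, h₁, -, p₁, -⟩ := hsplit a haS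
    exact ⟨m₁, p₁.mono (h₁.trans hS₀)⟩
  · exact ⟨n + 1, (hp.symm.cons h.symm haS).symm.mono (Set.insert_subset ha hS₀)⟩

lemma exists_pathIn_componentIn (hw : w ∈ componentIn G U v) :
    ∃ n, PathIn G (componentIn G U v) v w n := by
  obtain ⟨n, hn⟩ := hw
  obtain ⟨S₀, hS₀, hp, hsplit⟩ := hn.exists_split
  refine ⟨n, hp.mono fun u hu => ?_⟩
  obtain ⟨S₁, -, m₁, -, h₁, -, p₁, -⟩ := hsplit u hu
  exact ⟨m₁, p₁.mono (h₁.trans hS₀)⟩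

lemma componentIn_subset_of_closed (hA : A ⊆ componentIn G U v) (hne : A.Nonempty)
    (hcl : ∀ a ∈ A, ∀ b ∈ componentIn G U v, G.Adj a b → b ∈ A) : componentIn G U v ⊆ A := by
  obtain ⟨a, ha⟩ := hne
  obtain ⟨n, hn⟩ := exists_pathIn_componentIn (hA ha)
  have hv : v ∈ A := hn.symm.mem_of_closed ha hcl
  intro w hw
  obtain ⟨m, hm⟩ := exists_pathIn_componentIn hw
  exact hm.mem_of_closed hv hcl

lemma exists_adj_of_closed_in_componentIn (hA : A ⊆ componentIn G U v \ {v}) (hne : A.Nonempty)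
    (hcl : ∀ a ∈ A, ∀ b ∈ componentIn G U v \ {v}, G.Adj a b → b ∈ A) : ∃ a ∈ A, G.Adj a v := by
  by_contra! hv
  have hsub := componentIn_subset_of_closed (hA.trans Set.sdiff_subset) hne fun a ha b hb hab => by
    by_cases hbv : b = v
    · exact absurd (hbv ▸ hab) (hv a ha)
    · exact hcl a ha b ⟨hb, hbv⟩ hab
  obtain ⟨a, ha⟩ := hne
  obtain ⟨n, hn⟩ := (hA ha).1
  exact (hA (hsub (mem_componentIn_self hn.left_mem))).2 rfl

lemma false_of_triangle (h : G.CliqueFreeOn S 3) (ha : a ∈ S) (hb : b ∈ S) (hc : c ∈ S)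
    (hab : G.Adj a b) (hbc : G.Adj b c) (hac : G.Adj a c) : False := by
  classical
  refine h (t := {a, b, c}) ?_ (is3Clique_triple_iff.2 ⟨hab, hac, hbc⟩)
  simp [Set.insert_subset_iff, ha, hb, hc]

lemma cliqueFreeOn_three
    (h : ∀ a ∈ S, ∀ b ∈ S, ∀ c ∈ S, G.Adj a b → G.Adj b c → G.Adj a c → False) :
    G.CliqueFreeOn S 3 := by
  classical
  intro t ht htc
  obtain ⟨a, b, c, hab, hac, hbc, rfl⟩ := is3Clique_iff.1 htc
  exact h a (ht (by simp)) b (ht (by simp)) c (ht (by simp)) hab hbc hac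

end Paths

/-! ### Rooted graphs and contractions -/

/-- Two of the lengths in `L` differ by one or two. -/
def HasGoodPair (L : ℕ → Prop) : Prop :=
  ∃ a b, L a ∧ L b ∧ (a = b + 1 ∨ a = b + 2)

/-- Three of the lengths in `L` form a good triple; the bound `2 ≤ c` of `GoodTriple` is left out
because it does not survive shifting the lengths. -/
def HasGoodTriple (L : ℕ → Prop) : Prop :=
  ∃ a b c, L a ∧ L b ∧ L c ∧
    ((a = b + 2 ∧ b = c + 2) ∨ (a = b + 1 ∧ b = c + 2) ∨ (a = b + 2 ∧ b = c + 1))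

/-- `L` has `k` lengths in the pattern sought, for `k = 2` and `k = 3`; no condition for other
values of `k`. -/
def HasGoodLengths (k : ℕ) (L : ℕ → Prop) : Prop :=
  (k = 2 → HasGoodPair L) ∧ (k = 3 → HasGoodTriple L)

/-- A graph with roots `x`, `y` and remaining vertices `I`. The vertex `z` is exempt from the degree
condition, and the vertex sets contained in `E` are exempt from the condition that no set of
non-root vertices is cut off from both roots by a single vertex. -/
structure Rooted (k : ℕ) (E : Set V) (G : SimpleGraph V) (I : Set V) (x y z : V) : Prop where
  ne : x ≠ y
  x_notMem : x ∉ I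
  y_notMem : y ∉ I
  adj_mem : ∀ {a b}, G.Adj a b → a ∈ I ∨ a = x ∨ a = y
  not_adj : ¬ G.Adj x y
  not_separatedBy : ∀ A ⊆ I, ¬ A ⊆ E → ∀ p, ¬ SeparatedBy G A {p}
  deg : ∀ v ∈ I, v ≠ z → k + 1 ≤ (G.neighborSet v).ncard
  exists_ne : ∃ v ∈ I, v ≠ z
  cliqueFreeOn : k = 3 → G.CliqueFreeOn {x}ᶜ 3 ∨ G.CliqueFreeOn {y}ᶜ 3

/-- All rooted graphs with fewer than `N` non-root vertices have good path lengths: the induction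
hypothesis for the number of non-root vertices. -/
def GoodBelow (V : Type*) (k N : ℕ) : Prop :=
  ∀ (G : SimpleGraph V) (I : Set V) (x y z : V), Rooted k ∅ G I x y z → I.ncard < N →
    HasGoodLengths k (PathIn G Set.univ x y)

/-- The subgraph of `G` induced on `C`, together with `P` contracted to the vertex `x` and `Q`
contracted to the vertex `y`. The vertices outside `C`, `x`, `y` are kept, but are isolated. -/
def contract (G : SimpleGraph V) (C P Q : Set V) (x y : V) : SimpleGraph V :=
  SimpleGraph.fromRel fun a b =>
    b ∈ C ∧ (a ∈ C ∧ G.Adj a b ∨ (a = x ∧ ∃ p ∈ P, G.Adj p b) ∨ (a = y ∧ ∃ q ∈ Q, G.Adj q b))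

/-- There is a path of length `m` inside `C` from a neighbour of `P` to a neighbour of `Q`. Such
paths correspond to the `(x,y)`-paths of length `m + 2` in the contraction. -/
def Link (G : SimpleGraph V) (C P Q : Set V) (m : ℕ) : Prop :=
  ∃ p ∈ P, ∃ q ∈ Q, ∃ v w, G.Adj p v ∧ G.Adj w q ∧ PathIn G C v w m

/-- At least `d` neighbours of `v` in `C ∪ P ∪ Q` stay distinct when `P` and `Q` are contracted. -/
def KeepsDegree (G : SimpleGraph V) (C P Q : Set V) (d : ℕ) (v : V) : Prop :=
  ∃ N ⊆ G.neighborSet v, d ≤ N.ncard ∧ N ⊆ C ∪ (P ∪ Q) ∧ (N ∩ P).Subsingleton ∧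
    (N ∩ Q).Subsingleton

section HasGoodLengths

variable {k c : ℕ} {L L' : ℕ → Prop}

lemma HasGoodLengths.shift (h : HasGoodLengths k L') (hL : ∀ m, L' m → L (m + c)) :
    HasGoodLengths k L := by
  refine ⟨fun hk => ?_, fun hk => ?_⟩
  · obtain ⟨a, b, ha, hb, hab⟩ := h.1 hk
    exact ⟨a + c, b + c, hL _ ha, hL _ hb, by omega⟩
  · obtain ⟨a, b, d, ha, hb, hd, hab⟩ := h.2 hk
    exact ⟨a + c, b + c, d + c, hL _ ha, hL _ hb, hL _ hd, by omega⟩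

lemma HasGoodLengths.mono (h : HasGoodLengths k L') (hL : ∀ m, L' m → L m) : HasGoodLengths k L :=
  h.shift (c := 0) hL

lemma HasGoodLengths.unshift (h : HasGoodLengths k L') (hL : ∀ n, L' n → ∃ m, n = m + c ∧ L m) :
    HasGoodLengths k L := by
  refine ⟨fun hk => ?_, fun hk => ?_⟩
  · obtain ⟨a, b, ha, hb, hab⟩ := h.1 hk
    obtain ⟨a, rfl, ha'⟩ := hL a ha
    obtain ⟨b, rfl, hb'⟩ := hL b hb
    exact ⟨a, b, ha', hb', by omega⟩
  · obtain ⟨a, b, d, ha, hb, hd, hab⟩ := h.2 hk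
    obtain ⟨a, rfl, ha'⟩ := hL a ha
    obtain ⟨b, rfl, hb'⟩ := hL b hb
    obtain ⟨d, rfl, hd'⟩ := hL d hd
    exact ⟨a, b, d, ha', hb', hd', by omega⟩

lemma HasGoodLengths.two_to_three (h : HasGoodLengths 2 L')
    (hL : ∀ m, L' m → L (m + c) ∧ L (m + c + 2)) : HasGoodLengths 3 L := by
  refine ⟨by omega, fun _ => ?_⟩
  obtain ⟨a, b, ha, hb, hab⟩ := h.1 rfl
  exact ⟨_, _, _, (hL a ha).2, (hL a ha).1, (hL b hb).1, by omega⟩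

end HasGoodLengths

section Neighbors

variable {G : SimpleGraph V} {p q r v : V}

lemma ncard_pair_le : ({p, q} : Set V).ncard ≤ 2 := by
  simpa only [Set.ncard_singleton] using Set.ncard_insert_le p {q}

lemma ncard_triple_le : ({p, q, r} : Set V).ncard ≤ 3 :=
  (Set.ncard_insert_le p {q, r}).trans (Nat.succ_le_succ ncard_pair_le)

lemma neighborSet_eq_triple (hsub : G.neighborSet v ⊆ {p, q, r})
    (h3 : 3 ≤ (G.neighborSet v).ncard) :
    G.neighborSet v = {p, q, r} ∧ p ≠ q ∧ p ≠ r ∧ q ≠ r := by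
  have heq : G.neighborSet v = {p, q, r} :=
    Set.eq_of_subset_of_ncard_le hsub (ncard_triple_le.trans h3)
  refine ⟨heq, ?_⟩
  rw [heq] at h3
  have not_pair {s t : V} (hst : ({p, q, r} : Set V) = {s, t}) : False := by
    have := (hst ▸ h3).trans ncard_pair_le
    omega
  refine ⟨?_, ?_, ?_⟩ <;> rintro rfl
  · exact not_pair (Set.insert_eq_of_mem (by simp))
  · exact not_pair (Set.insert_eq_of_mem (by simp))
  · exact not_pair (s := p) (t := q) (by rw [Set.pair_eq_singleton])

lemma le_ncard_sdiff_singleton {d : ℕ} {a : V} {N : Set V} (h : d + 1 ≤ N.ncard) :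
    d ≤ (N \ {a}).ncard :=
  Nat.le_sub_of_add_le h |>.trans (Set.pred_ncard_le_ncard_sdiff_singleton N a)

end Neighbors

section Contract

variable {G : SimpleGraph V} {C P Q E A W : Set V} {a b v x y e p q r : V} {k d m n : ℕ}

lemma contract_adj_iff (hx : x ∉ C) (hy : y ∉ C) (hb : b ∈ C) :
    (contract G C P Q x y).Adj a b ↔
      a ∈ C ∧ G.Adj a b ∨ (a = x ∧ ∃ p ∈ P, G.Adj p b) ∨ (a = y ∧ ∃ q ∈ Q, G.Adj q b) := by
  rw [contract, SimpleGraph.fromRel_adj]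
  constructor
  · rintro ⟨-, h | ⟨ha, ⟨-, h⟩ | ⟨rfl, -⟩ | ⟨rfl, -⟩⟩⟩
    · exact h.2
    · exact Or.inl ⟨ha, h.symm⟩
    · exact absurd hb hx
    · exact absurd hb hy
  · intro h
    refine ⟨?_, Or.inl ⟨hb, h⟩⟩
    rintro rfl
    rcases h with ⟨-, h⟩ | ⟨rfl, -⟩ | ⟨rfl, -⟩
    · exact h.ne rfl
    · exact hx hb
    · exact hy hb

lemma mem_or_mem_of_contract_adj (h : (contract G C P Q x y).Adj a b) : a ∈ C ∨ b ∈ C := by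
  rw [contract, SimpleGraph.fromRel_adj] at h
  exact h.2.symm.imp And.left And.left

lemma mem_of_contract_adj (h : (contract G C P Q x y).Adj a b) : a ∈ C ∨ a = x ∨ a = y := by
  rw [contract, SimpleGraph.fromRel_adj] at h
  rcases h with ⟨-, ⟨-, h⟩ | h⟩
  · exact h.imp And.left (Or.imp And.left And.left)
  · exact Or.inl h.1

lemma contract_comm : contract G C P Q x y = contract G C Q P y x := by
  unfold contract
  congr 1
  ext a b
  exact and_congr_right fun _ => or_congr_right or_comm

lemma contract_adj_of_mem (hx : x ∉ C) (hy : y ∉ C) (ha : a ∈ C) (hb : b ∈ C) :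
    (contract G C P Q x y).Adj a b ↔ G.Adj a b := by
  have hax : a ≠ x := ne_of_mem_of_not_mem ha hx
  have hay : a ≠ y := ne_of_mem_of_not_mem ha hy
  simp [contract_adj_iff hx hy hb, ha, hax, hay]

lemma contract_adj_left (hxy : x ≠ y) (hx : x ∉ C) (hy : y ∉ C) (hb : b ∈ C) :
    (contract G C P Q x y).Adj x b ↔ ∃ p ∈ P, G.Adj p b := by
  simp [contract_adj_iff hx hy hb, hx, hxy]

lemma contract_adj_right (hxy : x ≠ y) (hx : x ∉ C) (hy : y ∉ C) (hb : b ∈ C) :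
    (contract G C P Q x y).Adj y b ↔ ∃ q ∈ Q, G.Adj q b := by
  rw [contract_comm, contract_adj_left hxy.symm hy hx hb]

lemma exists_link_of_pathIn_contract (hxy : x ≠ y) (hx : x ∉ C) (hy : y ∉ C)
    (h : PathIn (contract G C P Q x y) Set.univ x y n) : ∃ m, n = m + 2 ∧ Link G C P Q m := by
  obtain ⟨v, l, rfl, hxv, h⟩ := h.uncons hxy
  have hv : v ∈ C := (mem_or_mem_of_contract_adj hxv).resolve_left hx
  obtain ⟨w, m, rfl, hyw, h⟩ := h.symm.uncons (ne_of_mem_of_not_mem hv hy).symm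
  have hw : w ∈ C := (mem_or_mem_of_contract_adj hyw).resolve_left hy
  obtain ⟨p, hp, hpv⟩ := (contract_adj_left hxy hx hy hv).1 hxv
  obtain ⟨q, hq, hqw⟩ := (contract_adj_right hxy hx hy hw).1 hyw
  refine ⟨m, rfl, p, hp, q, hq, v, w, hpv, hqw.symm, ?_⟩
  refine (h.symm.transfer hv fun u hu u' hu' huu' => ?_).mono Set.inter_subset_right
  have hu'C : u' ∈ C := (mem_of_contract_adj huu'.symm).resolve_right fun h =>
    h.elim (fun h => hu'.1.2 h) fun h => hu'.2 h
  exact ⟨hu'C, (contract_adj_of_mem hx hy hu hu'C).1 huu'⟩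

lemma Link.exists_pathIn (h : Link G C P Q m) (hP : Disjoint P C) (hQ : Disjoint Q C)
    (hPQ : Disjoint P Q) :
    ∃ p ∈ P, ∃ q ∈ Q, PathIn G (insert p (insert q C)) p q (m + 2) := by
  obtain ⟨p, hp, q, hq, v, w, hpv, hwq, hvw⟩ := h
  refine ⟨p, hp, q, hq, (hvw.symm.cons hwq.symm (hQ.notMem_of_mem_left hq)).symm.cons hpv ?_⟩
  rintro (rfl | h)
  · exact hPQ.notMem_of_mem_left hp hq
  · exact hP.notMem_of_mem_left hp h

lemma Link.pathIn_of_singletons (h : Link G C {p} {q} m) (hp : p ∉ C) (hq : q ∉ C) (hpq : p ≠ q) :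
    PathIn G (insert p (insert q C)) p q (m + 2) := by
  obtain ⟨_, rfl, _, rfl, h'⟩ := h.exists_pathIn (by simpa using hp) (by simpa using hq)
    (by simpa using hpq)
  exact h'

lemma contract_cliqueFreeOn (hx : x ∉ C) (hy : y ∉ C) (h : G.CliqueFreeOn (insert q C) 3) :
    (contract G C P {q} x y).CliqueFreeOn {x}ᶜ 3 := by
  classical
  let f : V → V := Function.update id y q
  have hf (a : V) (ha : a ∈ C) : f a = a :=
    Function.update_of_ne (ne_of_mem_of_not_mem ha hy) _ _
  have hfy : f y = q := Function.update_self _ _ _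
  have map_right {a b : V} (ha : a ≠ x) (hab : (contract G C P {q} x y).Adj a b) (hb : b ∈ C) :
      f a ∈ insert q C ∧ G.Adj (f a) (f b) := by
    rw [hf b hb]
    rcases (contract_adj_iff hx hy hb).1 hab with h | h | ⟨rfl, _, rfl, hqb⟩
    · rw [hf a h.1]
      exact ⟨Or.inr h.1, h.2⟩
    · exact absurd h.1 ha
    · exact ⟨Or.inl hfy, hfy ▸ hqb⟩
  have map {a b : V} (ha : a ≠ x) (hb : b ≠ x) (hab : (contract G C P {q} x y).Adj a b) :
      f a ∈ insert q C ∧ G.Adj (f a) (f b) := by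
    rcases mem_or_mem_of_contract_adj hab with haC | hbC
    · exact ⟨Or.inr ((hf a haC).symm ▸ haC), (map_right hb hab.symm haC).2.symm⟩
    · exact map_right ha hab hbC
  refine cliqueFreeOn_three fun a ha b hb c hc hab hbc hac => ?_
  exact false_of_triangle h (map ha hb hab).1 (map hb hc hbc).1 (map hc hb hbc.symm).1
    (map ha hb hab).2 (map hb hc hbc).2 (map ha hc hac).2

lemma SeparatedBy.of_contract (hxy : x ≠ y) (hx : x ∉ C) (hy : y ∉ C)
    (hC : SeparatedBy G C (W ∪ (P ∪ Q))) (hA : A ⊆ C)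
    (h : SeparatedBy (contract G C P Q x y) A {r}) :
    r ∈ C ∧ SeparatedBy G A (insert r W) ∨ SeparatedBy G A (W ∪ P) ∨ SeparatedBy G A (W ∪ Q) := by
  have mem_C {a b : V} (ha : a ∈ A) (hb : b ∈ C) (hab : G.Adj a b) : b ∈ A ∨ b = r :=
    h a ha b ((contract_adj_of_mem hx hy (hA ha) hb).2 hab)
  have mem_P {a b : V} (ha : a ∈ A) (hb : b ∈ P) (hab : G.Adj a b) : x = r :=
    (h a ha x ((contract_adj_left hxy hx hy (hA ha)).2 ⟨b, hb, hab.symm⟩).symm).resolve_left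
      fun h => hx (hA h)
  have mem_Q {a b : V} (ha : a ∈ A) (hb : b ∈ Q) (hab : G.Adj a b) : y = r :=
    (h a ha y ((contract_adj_right hxy hx hy (hA ha)).2 ⟨b, hb, hab.symm⟩).symm).resolve_left
      fun h => hy (hA h)
  by_cases hr : r ∈ C
  · refine Or.inl ⟨hr, fun a ha b hab => ?_⟩
    rcases hC a (hA ha) b hab with hb | hb | hb | hb
    · exact (mem_C ha hb hab).imp_right Or.inl
    · exact Or.inr (Or.inr hb)
    · exact absurd (mem_P ha hb hab ▸ hr) hx
    · exact absurd (mem_Q ha hb hab ▸ hr) hy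
  refine Or.inr ?_
  have mem_A {a b : V} (ha : a ∈ A) (hb : b ∈ C) (hab : G.Adj a b) : b ∈ A :=
    (mem_C ha hb hab).resolve_right fun h => hr (h ▸ hb)
  by_cases hrx : x = r
  · refine Or.inl fun a ha b hab => ?_
    rcases hC a (hA ha) b hab with hb | hb | hb | hb
    · exact Or.inl (mem_A ha hb hab)
    · exact Or.inr (Or.inl hb)
    · exact Or.inr (Or.inr hb)
    · exact absurd (hrx.trans (mem_Q ha hb hab).symm) hxy
  · refine Or.inr fun a ha b hab => ?_
    rcases hC a (hA ha) b hab with hb | hb | hb | hb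
    · exact Or.inl (mem_A ha hb hab)
    · exact Or.inr (Or.inl hb)
    · exact absurd (mem_P ha hb hab) hrx
    · exact Or.inr (Or.inr hb)

lemma KeepsDegree.of_subset (hC : G.neighborSet v ⊆ C ∪ (P ∪ Q)) (hd : d ≤ (G.neighborSet v).ncard)
    (hP : (G.neighborSet v ∩ P).Subsingleton) (hQ : (G.neighborSet v ∩ Q).Subsingleton) :
    KeepsDegree G C P Q d v :=
  ⟨_, subset_rfl, hd, hC, hP, hQ⟩

lemma KeepsDegree.of_sdiff_singleton {w : V} (hC : G.neighborSet v \ {w} ⊆ C ∪ (P ∪ Q))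
    (hd : d + 1 ≤ (G.neighborSet v).ncard) (hP : ((G.neighborSet v \ {w}) ∩ P).Subsingleton)
    (hQ : ((G.neighborSet v \ {w}) ∩ Q).Subsingleton) : KeepsDegree G C P Q d v :=
  ⟨_, Set.sdiff_subset, le_ncard_sdiff_singleton hd, hC, hP, hQ⟩

lemma KeepsDegree.le_ncard_neighborSet [Finite V] (h : KeepsDegree G C P Q d v) (hxy : x ≠ y)
    (hx : x ∉ C) (hy : y ∉ C) (hv : v ∈ C) :
    d ≤ ((contract G C P Q x y).neighborSet v).ncard := by
  classical
  obtain ⟨N, hN, hd, hC, hP, hQ⟩ := h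
  have hmem {b : V} (hb : b ∈ N) : b ∈ C ∨ b ∉ C ∧ b ∈ P ∨ b ∉ C ∧ b ∉ P ∧ b ∈ Q := by
    have := hC hb
    simp only [Set.mem_union] at this
    tauto
  refine hd.trans (Set.ncard_le_ncard_of_injOn
    (fun b => if b ∈ C then b else if b ∈ P then x else y) (fun b hb => ?_) ?_ (Set.toFinite _))
  · have hvb : G.Adj v b := hN hb
    rw [SimpleGraph.mem_neighborSet, SimpleGraph.adj_comm]
    rcases hmem hb with h | h | h
    · simpa [h, contract_adj_of_mem hx hy h hv] using hvb.symm
    · simpa [h, contract_adj_left hxy hx hy hv] using ⟨b, h.2, hvb.symm⟩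
    · simpa [h, contract_adj_right hxy hx hy hv] using ⟨b, h.2.2, hvb.symm⟩
  · intro b hb b' hb' h
    have notMem (c : V) (hc : c ∈ C) : c ≠ x ∧ c ≠ y :=
      ⟨ne_of_mem_of_not_mem hc hx, ne_of_mem_of_not_mem hc hy⟩
    rcases hmem hb with hbC | hbP | hbQ <;> rcases hmem hb' with hbC' | hbP' | hbQ'
    · simpa [hbC, hbC'] using h
    · exact absurd h (by simp [hbC, hbP', notMem])
    · exact absurd h (by simp [hbC, hbQ', notMem])
    · exact absurd h.symm (by simp [hbC', hbP, notMem])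
    · exact hP ⟨hb, hbP.2⟩ ⟨hb', hbP'.2⟩
    · exact absurd h (by simp [hbP, hbQ', hxy])
    · exact absurd h.symm (by simp [hbC', hbQ, notMem])
    · exact absurd h.symm (by simp [hbQ, hbP', hxy])
    · exact hQ ⟨hb, hbQ.2.2⟩ ⟨hb', hbQ'.2.2⟩

lemma rooted_contract [Finite V] (hxy : x ≠ y) (hx : x ∉ C) (hy : y ∉ C)
    (hC : SeparatedBy G C (W ∪ (P ∪ Q)))
    (hdeg : ∀ v ∈ C, v ≠ e → KeepsDegree G C P Q (k + 1) v)
    (hcut : ∀ A ⊆ C, ¬ A ⊆ E → ∀ r ∈ C, ¬ SeparatedBy G A (insert r W))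
    (hP : ∀ A ⊆ C, ¬ A ⊆ E → ¬ SeparatedBy G A (W ∪ P))
    (hQ : ∀ A ⊆ C, ¬ A ⊆ E → ¬ SeparatedBy G A (W ∪ Q))
    (hne : ∃ v ∈ C, v ≠ e)
    (htf : k = 3 → (∃ q, Q = {q} ∧ G.CliqueFreeOn (insert q C) 3) ∨
      ∃ p, P = {p} ∧ G.CliqueFreeOn (insert p C) 3) :
    Rooted k E (contract G C P Q x y) C x y e where
  ne := hxy
  x_notMem := hx
  y_notMem := hy
  adj_mem := mem_of_contract_adj
  not_adj h := (mem_or_mem_of_contract_adj h).elim hx hy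
  not_separatedBy A hA hAE r hr := by
    rcases SeparatedBy.of_contract hxy hx hy hC hA hr with h | h | h
    · exact hcut A hA hAE r h.1 h.2
    · exact hP A hA hAE h
    · exact hQ A hA hAE h
  deg v hv hve := (hdeg v hv hve).le_ncard_neighborSet hxy hx hy hv
  exists_ne := hne
  cliqueFreeOn hk := by
    rcases htf hk with ⟨q, rfl, h⟩ | ⟨p, rfl, h⟩
    · exact Or.inl (contract_cliqueFreeOn hx hy h)
    · rw [contract_comm]
      exact Or.inr (contract_cliqueFreeOn hy hx h)

end Contract

section Rooted

variable {G : SimpleGraph V} {I C D P Q W E A : Set V} {a b v x y z e p q : V} {k N : ℕ}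

lemma Rooted.symm (h : Rooted k E G I x y z) : Rooted k E G I y x z where
  ne := h.ne.symm
  x_notMem := h.y_notMem
  y_notMem := h.x_notMem
  adj_mem hab := (h.adj_mem hab).imp_right Or.symm
  not_adj hyx := h.not_adj hyx.symm
  not_separatedBy := h.not_separatedBy
  deg := h.deg
  exists_ne := h.exists_ne
  cliqueFreeOn hk := (h.cliqueFreeOn hk).symm

lemma Rooted.mem_of_adj (h : Rooted k E G I x y z) (hab : G.Adj a b) : b ∈ I ∨ b = x ∨ b = y :=
  h.adj_mem hab.symm

lemma Rooted.ne_x (h : Rooted k E G I x y z) (ha : a ∈ I) : a ≠ x :=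
  ne_of_mem_of_not_mem ha h.x_notMem

lemma Rooted.ne_y (h : Rooted k E G I x y z) (ha : a ∈ I) : a ≠ y :=
  ne_of_mem_of_not_mem ha h.y_notMem

lemma Rooted.mem_of_adj_x (h : Rooted k E G I x y z) (ha : G.Adj x a) : a ∈ I := by
  rcases h.mem_of_adj ha with h' | rfl | rfl
  · exact h'
  · exact absurd rfl ha.ne
  · exact absurd ha h.not_adj

lemma Rooted.mem_of_adj_y (h : Rooted k E G I x y z) (ha : G.Adj y a) : a ∈ I :=
  h.symm.mem_of_adj_x ha

lemma Rooted.not_separatedBy_singleton (h : Rooted k ∅ G I x y z) (hA : A ⊆ I) (hne : A.Nonempty)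
    (p : V) : ¬ SeparatedBy G A {p} :=
  h.not_separatedBy A hA (fun h => hne.ne_empty (Set.subset_empty_iff.1 h)) p

lemma GoodBelow.link (hs : GoodBelow V k N) (hr : Rooted k ∅ (contract G C P Q x y) C x y e)
    (hN : C.ncard < N) : HasGoodLengths k (Link G C P Q) :=
  (hs _ _ _ _ _ hr hN).unshift fun _ h =>
    exists_link_of_pathIn_contract hr.ne hr.x_notMem hr.y_notMem h

lemma Rooted.delete_pendant (h : Rooted k {e} G I x y e) (he : e ∈ I)
    (hq : SeparatedBy G {e} {q}) (hne : ∃ v ∈ I, v ≠ e ∧ v ≠ q) :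
    Rooted k ∅ (G.deleteIncidenceSet e) (I \ {e}) x y q where
  ne := h.ne
  x_notMem hx := h.x_notMem hx.1
  y_notMem hy := h.y_notMem hy.1
  adj_mem hab := by
    rw [SimpleGraph.deleteIncidenceSet_adj] at hab
    exact (h.adj_mem hab.1).imp_left fun ha => ⟨ha, hab.2.1⟩
  not_adj hxy := h.not_adj (SimpleGraph.deleteIncidenceSet_adj.1 hxy).1
  not_separatedBy A hA hAE p hp := by
    obtain ⟨a₀, ha₀⟩ := Set.not_subset.1 hAE
    have eq_q {v : V} (hv : G.Adj e v) : v = q := (hq e rfl v hv).resolve_left hv.ne'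
    by_cases hqA : q ∈ A
    · refine h.not_separatedBy (insert e A) (Set.insert_subset he (hA.trans Set.sdiff_subset))
        (fun hsub => (hA ha₀.1).2 (hsub (Or.inr ha₀.1))) p ?_
      rintro a (rfl | ha) b hab
      · exact Or.inl (Or.inr (eq_q hab ▸ hqA))
      by_cases hbe : b = e
      · exact Or.inl (Or.inl hbe)
      · exact (hp a ha b (SimpleGraph.deleteIncidenceSet_adj.2 ⟨hab, (hA ha).2, hbe⟩)).imp_left
          Or.inr
    · refine h.not_separatedBy A (hA.trans Set.sdiff_subset)
        (fun hsub => (hA ha₀.1).2 (hsub ha₀.1)) p fun a ha b hab => ?_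
      refine hp a ha b (SimpleGraph.deleteIncidenceSet_adj.2 ⟨hab, (hA ha).2, ?_⟩)
      rintro rfl
      exact hqA (eq_q hab.symm ▸ ha)
  deg v hv hvq := by
    have hve : ¬ G.Adj v e := fun hve => hvq ((hq e rfl v hve.symm).resolve_left hve.ne)
    convert h.deg v hv.1 hv.2 using 2
    ext b
    simp only [SimpleGraph.mem_neighborSet, SimpleGraph.deleteIncidenceSet_adj]
    exact ⟨And.left, fun hvb => ⟨hvb, hv.2, fun hb => hve (hb ▸ hvb)⟩⟩
  exists_ne := by
    obtain ⟨v, hv, hve, hvq⟩ := hne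
    exact ⟨v, ⟨hv, hve⟩, hvq⟩
  cliqueFreeOn hk := (h.cliqueFreeOn hk).imp (·.anti _ _ (SimpleGraph.deleteIncidenceSet_le G e))
    (·.anti _ _ (SimpleGraph.deleteIncidenceSet_le G e))

lemma Rooted.of_not_pendant (h : Rooted k {e} G I x y e)
    (he : e ∈ I → ∀ q, ¬ SeparatedBy G {e} {q}) : Rooted k ∅ G I x y e where
  __ := h
  not_separatedBy A hA hAE p hp := by
    by_cases hAe : A ⊆ {e}
    · have hAne : A ≠ ∅ := fun h => hAE h.subset
      obtain rfl : A = {e} := (Set.subset_singleton_iff_eq.1 hAe).resolve_left hAne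
      exact he (hA rfl) p hp
    · exact h.not_separatedBy A hA hAe p hp

variable [Finite V]

lemma Rooted.neighborSet_eq_of_subset_pair (h : Rooted k E G I x y z) (hk : 2 ≤ k) (hv : v ∈ I)
    (hvz : v ≠ z) (hI : I ⊆ {z, v}) : k = 2 ∧ G.neighborSet v = {x, y, z} ∧ x ≠ z ∧ y ≠ z := by
  have hsub : G.neighborSet v ⊆ {x, y, z} := fun b hb => by
    rcases h.mem_of_adj hb with hbI | rfl | rfl
    · rcases hI hbI with rfl | rfl
      · simp
      · exact absurd rfl hb.ne
    · simp
    · simp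
  have hdeg := h.deg v hv hvz
  have hle := hdeg.trans ((Set.ncard_le_ncard hsub).trans ncard_triple_le)
  obtain ⟨heq, -, hxz, hyz⟩ := neighborSet_eq_triple hsub (by omega)
  exact ⟨by omega, heq, hxz, hyz⟩

lemma Rooted.exists_ne_ne (h : Rooted k E G I x y z) (hk : 2 ≤ k)
    (hsmall : k = 2 → ∀ v ∈ I, v ≠ z → I ⊆ {z, v} → G.neighborSet v ≠ {x, y, z}) (q : V) :
    ∃ v ∈ I, v ≠ z ∧ v ≠ q := by
  by_contra! hI
  obtain ⟨v, hv, hvz⟩ := h.exists_ne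
  obtain rfl := hI v hv hvz
  have hIv : I ⊆ {z, v} := fun w hw => or_iff_not_imp_left.2 (hI w hw)
  obtain ⟨hk2, hv3, -⟩ := h.neighborSet_eq_of_subset_pair hk hv hvz hIv
  exact hsmall hk2 v hv hvz hIv hv3

lemma GoodBelow.of_pendant (hs : GoodBelow V k N) (hk : 2 ≤ k) (h : Rooted k {e} G I x y e)
    (hN : I.ncard < N)
    (hsmall : k = 2 → ∀ v ∈ I, v ≠ e → I ⊆ {e, v} → G.neighborSet v ≠ {x, y, e}) :
    HasGoodLengths k (PathIn G Set.univ x y) := by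
  by_cases hq : e ∈ I ∧ ∃ q, SeparatedBy G {e} {q}
  · obtain ⟨he, q, hq⟩ := hq
    have hr := h.delete_pendant he hq (h.exists_ne_ne hk hsmall q)
    exact (hs _ _ _ _ _ hr ((Set.ncard_le_ncard Set.sdiff_subset).trans_lt hN)).mono
      fun m hm => hm.mono_graph (SimpleGraph.deleteIncidenceSet_le G e)
  · exact hs _ _ _ _ e (h.of_not_pendant fun he q hq' => hq ⟨he, q, hq'⟩) hN

lemma GoodBelow.link_of_pendant (hs : GoodBelow V k N) (hk : 2 ≤ k)
    (hr : Rooted k {e} (contract G C P Q x y) C x y e) (hN : C.ncard < N)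
    (hsmall : k = 2 → ∀ v ∈ C, v ≠ e → C ⊆ {e, v} → (∃ p ∈ P, G.Adj p v) →
      ¬ ∃ q ∈ Q, G.Adj q v) : HasGoodLengths k (Link G C P Q) := by
  refine (hs.of_pendant hk hr hN fun hk2 v hv hve hC hv3 => ?_).unshift
    fun _ h => exists_link_of_pathIn_contract hr.ne hr.x_notMem hr.y_notMem h
  have adj {w : V} (hw : w ∈ ({x, y, e} : Set V)) : (contract G C P Q x y).Adj w v :=
    (hv3 ▸ hw : w ∈ (contract G C P Q x y).neighborSet v).symm
  exact hsmall hk2 v hv hve hC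
    ((contract_adj_left hr.ne hr.x_notMem hr.y_notMem hv).1 (adj (by simp)))
    ((contract_adj_right hr.ne hr.x_notMem hr.y_notMem hv).1 (adj (by simp)))

lemma Rooted.contract_pair (h : Rooted k E G I x y z) (hC : C ⊆ I) (hpq : p ≠ q) {E' : Set V}
    (hsep : SeparatedBy G C (W ∪ ({p} ∪ {q})))
    (hdeg : ∀ v ∈ C, v ≠ e → k + 1 ≤ (G.neighborSet v ∩ (C ∪ ({p} ∪ {q}))).ncard)
    (hcut : ∀ A ⊆ C, ¬ A ⊆ E' → ∀ r, ¬ SeparatedBy G A (insert r W))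
    (hne : ∃ v ∈ C, v ≠ e) : Rooted k E' (contract G C {p} {q} x y) C x y e := by
  have hcut' (r : V) (A : Set V) (hA : A ⊆ C) (hAE : ¬ A ⊆ E') : ¬ SeparatedBy G A (W ∪ {r}) := by
    rw [Set.union_singleton]
    exact hcut A hA hAE r
  have cliqueFreeOn {r : V} (hr : r ∉ C) (hfree : G.CliqueFreeOn {r}ᶜ 3) :
      G.CliqueFreeOn (insert q C) 3 ∨ G.CliqueFreeOn (insert p C) 3 := by
    rcases ne_or_eq r q with hrq | rfl
    · exact Or.inl (hfree.subset _ (Set.subset_compl_singleton_iff.2 (by simp [hrq, hr])))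
    · exact Or.inr (hfree.subset _ (Set.subset_compl_singleton_iff.2 (by simp [hpq.symm, hr])))
  refine rooted_contract h.ne (fun hx => h.x_notMem (hC hx)) (fun hy => h.y_notMem (hC hy)) hsep
    (fun v hv hve => ⟨_, Set.inter_subset_left, hdeg v hv hve, Set.inter_subset_right,
      Set.subsingleton_singleton.anti Set.inter_subset_right,
      Set.subsingleton_singleton.anti Set.inter_subset_right⟩)
    (fun A hA hAE r _ => hcut A hA hAE r) (hcut' p) (hcut' q) hne fun hk => ?_
  exact ((h.cliqueFreeOn hk).elim (cliqueFreeOn fun hx => h.x_notMem (hC hx))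
    (cliqueFreeOn fun hy => h.y_notMem (hC hy))).imp (⟨q, rfl, ·⟩) (⟨p, rfl, ·⟩)

lemma Rooted.contract_of_separatedBy (h : Rooted k E G I x y z) (hD : D ⊆ I) (hpq : p ≠ q)
    (hN : SeparatedBy G D {p, q}) (hne : ∃ v ∈ D, v ≠ z) :
    Rooted k E (contract G D {p} {q} x y) D x y z := by
  refine h.contract_pair (W := ∅) hD hpq (by rwa [Set.empty_union]) (fun v hv hvz => ?_)
    (fun A hA hAE r => ?_) hne
  · have hsub : G.neighborSet v ⊆ D ∪ ({p} ∪ {q}) := hN v hv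
    rw [Set.inter_eq_left.2 hsub]
    exact h.deg v (hD hv) hvz
  · rw [insert_empty_eq]
    exact h.not_separatedBy A (hA.trans hD) hAE r

end Rooted

/-! ### Minimal counterexamples -/

/-- A rooted graph without good path lengths that is minimal in the number of non-root vertices. -/
structure MinCounterexample (k : ℕ) (G : SimpleGraph V) (I : Set V) (x y z : V) : Prop
    extends Rooted k ∅ G I x y z where
  k_eq : k = 2 ∨ k = 3
  ih : GoodBelow V k I.ncard
  not_good : ¬ HasGoodLengths k (PathIn G Set.univ x y)

/-- The vertex `v` lies on an `(x,y)`-path, given by its two parts, which meet in `v` only. -/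
def OnPathBetween (G : SimpleGraph V) (x y v : V) : Prop :=
  ∃ S T m n, PathIn G S x v m ∧ PathIn G T v y n ∧ ∀ p ∈ S, p ∈ T → p = v

section MinCounterexample

variable {G : SimpleGraph V} {I A D S T U : Set V} {a p q u v w x y z : V} {k m n : ℕ}

lemma OnPathBetween.symm (h : OnPathBetween G x y v) : OnPathBetween G y x v :=
  let ⟨S, T, m, n, hS, hT, hST⟩ := h
  ⟨T, S, n, m, hT.symm, hS.symm, fun p hT hS => hST p hS hT⟩

lemma OnPathBetween.of_pathIn (hS : PathIn G S x w m) (hT : PathIn G T u y n)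
    (hST : Disjoint S T) (hvu : G.Adj v u) (hU : PathIn G U v w k)
    (hUST : ∀ p ∈ U, p ∈ S ∨ p ∈ T → p = w) : OnPathBetween G x y v := by
  have hwT := hST.notMem_of_mem_left hS.right_mem
  have notMem {p : V} (hp : p ∈ U) : p ∉ T := fun hpT => hwT (hUST p hp (Or.inr hpT) ▸ hpT)
  refine ⟨_, _, _, _, hS.append hU.symm fun p hp hpU => hUST p hpU (Or.inl hp),
    hT.cons hvu (notMem hU.left_mem), ?_⟩
  rintro p hp (rfl | hpT)
  · rfl
  · exact absurd hpT (hp.elim (fun h => hST.notMem_of_mem_left h) notMem)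

lemma Rooted.root_mem_componentIn (h : Rooted k ∅ G I x y z) (hv : v ∈ I) (hvu : v ≠ u) :
    x ∈ componentIn G ((I ∪ {x, y}) \ {u}) v ∨ y ∈ componentIn G ((I ∪ {x, y}) \ {u}) v := by
  by_contra! hxy
  refine h.not_separatedBy_singleton (A := componentIn G ((I ∪ {x, y}) \ {u}) v) (fun a ha => ?_)
    ⟨v, mem_componentIn_self ⟨Or.inl hv, hvu⟩⟩ u fun a ha b hab => ?_
  · rcases (componentIn_subset ha).1 with h' | rfl | rfl
    · exact h'
    · exact absurd ha hxy.1
    · exact absurd ha hxy.2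
  · by_cases hbu : b = u
    · exact Or.inr hbu
    · exact Or.inl (mem_componentIn_of_adj ha hab ⟨h.mem_of_adj hab, hbu⟩)

lemma Rooted.onPathBetween_of_adj_x (h : Rooted k ∅ G I x y z) (hxv : G.Adj x v) :
    OnPathBetween G x y v := by
  have hy : y ∈ componentIn G ((I ∪ {x, y}) \ {x}) v :=
    (h.root_mem_componentIn (h.mem_of_adj_x hxv) hxv.ne').resolve_left
      fun hx => (componentIn_subset hx).2 rfl
  obtain ⟨n, hn⟩ := hy
  refine ⟨_, _, 1, n, (PathIn.nil (Set.mem_singleton v)).cons hxv hxv.ne, hn, ?_⟩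
  rintro p (rfl | rfl) hp
  · exact absurd rfl hp.2
  · rfl

lemma Rooted.onPathBetween_of_adj (h : Rooted k ∅ G I x y z) (hu : u ∈ I)
    (huW : OnPathBetween G x y u) (hv : v ∈ I) (huv : G.Adj u v) : OnPathBetween G x y v := by
  obtain ⟨S, T, m, n, hS, hT, hST⟩ := huW
  obtain ⟨S₀, hS₀, hS', splitS⟩ := hS.exists_split
  obtain ⟨T₀, hT₀, hT', splitT⟩ := hT.exists_split
  obtain ⟨r, hr, l, hl⟩ : ∃ r ∈ (S₀ ∪ T₀) \ {u}, ∃ l, PathIn G ((I ∪ {x, y}) \ {u}) v r l := by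
    rcases h.root_mem_componentIn hv huv.ne' with hx | hy
    · exact ⟨x, ⟨Or.inl hS'.left_mem, (h.ne_x hu).symm⟩, hx⟩
    · exact ⟨y, ⟨Or.inr hT'.right_mem, (h.ne_y hu).symm⟩, hy⟩
  obtain ⟨w, ⟨hw, hwu⟩, k, hk⟩ := hl.exists_first_hit hr
  have eq_w (p) (hp : p ∈ ((I ∪ {x, y}) \ {u}) \ (((S₀ ∪ T₀) \ {u}) \ {w}))
      (hp' : p ∈ S₀ ∨ p ∈ T₀) : p = w :=
    by_contra fun hpw => hp.2 ⟨⟨hp', hp.1.2⟩, hpw⟩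
  rcases hw with hw | hw
  · obtain ⟨S₁, S₂, m₁, m₂, hS₁, -, p₁, p₂, hd⟩ := splitS w hw
    refine .of_pathIn p₁ hT' (Set.disjoint_left.2 fun p hp hpT => ?_) huv.symm hk
      fun p hp hp' => eq_w p hp (hp'.imp_left (hS₁ ·))
    obtain rfl := hST p (hS₀ (hS₁ hp)) (hT₀ hpT)
    exact hwu (hd p hp p₂.right_mem).symm
  · obtain ⟨T₁, T₂, m₁, m₂, -, hT₂, p₁, p₂, hd⟩ := splitT w hw
    refine (OnPathBetween.of_pathIn p₂.symm hS'.symm (Set.disjoint_left.2 fun p hp hpS => ?_)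
      huv.symm hk fun p hp hp' => eq_w p hp (hp'.symm.imp_right (hT₂ ·))).symm
    obtain rfl := hST p (hS₀ hpS) (hT₀ (hT₂ hp))
    exact hwu (hd p p₁.left_mem hp).symm

lemma Rooted.onPathBetween (h : Rooted k ∅ G I x y z) (hv : v ∈ I) : OnPathBetween G x y v := by
  by_contra hvW
  refine h.not_separatedBy_singleton (A := {v ∈ I | ¬ OnPathBetween G x y v}) (fun _ => And.left)
    ⟨v, hv, hvW⟩ y ?_
  rintro a ⟨ha, haW⟩ b hab
  rcases h.mem_of_adj hab with hb | rfl | hb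
  · exact Or.inl ⟨hb, fun hbW => haW (h.onPathBetween_of_adj hb hbW ha hab.symm)⟩
  · exact absurd (h.onPathBetween_of_adj_x hab.symm) haW
  · exact Or.inr hb

lemma Rooted.exists_adj_x (h : Rooted k ∅ G I x y z) : ∃ a, G.Adj x a := by
  by_contra! hx
  obtain ⟨v, hv, -⟩ := h.exists_ne
  refine h.not_separatedBy_singleton subset_rfl ⟨v, hv⟩ y fun a _ b hab => ?_
  rcases h.mem_of_adj hab with hb | rfl | hb
  · exact Or.inl hb
  · exact absurd hab.symm (hx a)
  · exact Or.inr hb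

lemma MinCounterexample.symm (h : MinCounterexample k G I x y z) :
    MinCounterexample k G I y x z where
  toRooted := h.toRooted.symm
  k_eq := h.k_eq
  ih := h.ih
  not_good hg := h.not_good (hg.mono fun _ hm => hm.symm)

lemma MinCounterexample.two_le (h : MinCounterexample k G I x y z) : 2 ≤ k := by
  have := h.k_eq
  omega

lemma MinCounterexample.false_of_pathIn_two (h : MinCounterexample 2 G I x y z)
    (hS : PathIn G S x y m) (hT : PathIn G T x y n) (hmn : m = n + 1 ∨ m = n + 2) : False :=
  h.not_good ⟨fun _ => ⟨m, n, hS.univ, hT.univ, hmn⟩, by omega⟩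

variable [Finite V]

/-- The `(p,q)`-paths through a set separated by `{p, q}` extend to `(x,y)`-paths with a common
increase in length, so such a set would give a smaller counterexample. -/
lemma MinCounterexample.not_separatedBy_of_exists_ne (h : MinCounterexample k G I x y z)
    (hD : D ⊆ I) (hne : ∃ v ∈ D, v ≠ z) (hDI : D ≠ I) : ¬ SeparatedBy G D {p, q} := by
  intro hN
  obtain ⟨v, hv, -⟩ := id hne
  obtain ⟨S, T, m, n, hS, hT, hST⟩ := h.onPathBetween (hD hv)
  obtain ⟨p', hp', m', hS'⟩ := hS.exists_before_entering (fun h' => h.x_notMem (hD h')) hv hN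
  obtain ⟨q', hq', n', hT'⟩ := hT.symm.exists_before_entering (fun h' => h.y_notMem (hD h')) hv hN
  have notMem {w : V} (hw : w ∈ S \ D) : w ∉ T := fun hwT => hw.2 (hST w hw.1 hwT ▸ hv)
  have hpq' : p' ≠ q' := fun h' => notMem hS'.right_mem (h' ▸ hT'.right_mem.1)
  have hN' : SeparatedBy G D {p', q'} := fun a ha b hab => by
    rcases hN a ha b hab with h' | h' <;> grind
  have hg := h.ih.link (h.contract_of_separatedBy hD hpq' hN' hne)
    (Set.ncard_lt_ncard (hD.ssubset_of_ne hDI))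
  refine h.not_good (hg.shift (c := 2 + m' + n') fun l hl => ?_)
  have hxq := hS'.append (hl.pathIn_of_singletons hS'.right_mem.2 hT'.right_mem.2 hpq') (by
    rintro w hw (rfl | rfl | h')
    · rfl
    · exact absurd hT'.right_mem.1 (notMem hw)
    · exact absurd h' hw.2)
  have hxy := hxq.append hT'.symm (by
    rintro w (hw | rfl | rfl | hw) hwT
    · exact absurd hwT.1 (notMem hw)
    · exact absurd hwT.1 (notMem hS'.right_mem)
    · rfl
    · exact absurd hw hwT.2)
  rw [show l + (2 + m' + n') = m' + (l + 2) + n' by omega]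
  exact hxy.univ

lemma MinCounterexample.exists_ne_ne (h : MinCounterexample k G I x y z) (p : V) :
    ∃ v ∈ I, v ≠ z ∧ v ≠ p := by
  by_contra! hI
  obtain ⟨v, hv, hvz⟩ := h.exists_ne
  obtain rfl := hI v hv hvz
  have hIv : I ⊆ {z, v} := fun w hw => or_iff_not_imp_left.2 (hI w hw)
  obtain ⟨rfl, hv3, hxz, hyz⟩ := h.neighborSet_eq_of_subset_pair h.two_le hv hvz hIv
  have adj {w : V} (hw : w ∈ ({x, y, z} : Set V)) : G.Adj v w :=
    (hv3 ▸ hw : w ∈ G.neighborSet v)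
  have hvx := adj (w := x) (by simp)
  have hvy := adj (w := y) (by simp)
  have hvz' := adj (w := z) (by simp)
  have hz : z ∈ I := (h.mem_of_adj hvz').resolve_right (by simp [hxz.symm, hyz.symm])
  have hroot : G.Adj z x ∨ G.Adj z y := by
    by_contra! hz'
    refine h.not_separatedBy_singleton (Set.singleton_subset_iff.2 hz) ⟨z, rfl⟩ v ?_
    rintro a rfl b hab
    rcases h.mem_of_adj hab with hb | rfl | rfl
    · exact hIv hb
    · exact absurd hab hz'.1
    · exact absurd hab hz'.2
  have hxvy := pathIn_two hvx.symm hvy h.ne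
  rcases hroot with hzx | hzy
  · exact h.false_of_pathIn_two
      (pathIn_three hzx.symm hvz'.symm hvy h.ne hvx.ne' (h.ne_y hz)) hxvy (Or.inl rfl)
  · exact h.false_of_pathIn_two (pathIn_three hvx.symm hvz' hzy h.ne hxz hvy.ne) hxvy (Or.inl rfl)

lemma MinCounterexample.exists_adj_x_ne (h : MinCounterexample k G I x y z) (a : V) :
    ∃ v, G.Adj x v ∧ v ≠ a := by
  by_contra! hx
  obtain ⟨a', hxa⟩ := h.exists_adj_x
  obtain rfl := hx a' hxa
  have ha := h.mem_of_adj_x hxa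
  have hsep : SeparatedBy G (I \ {a'}) {a', y} := fun v hv b hvb => by
    by_cases hba : b = a'
    · exact Or.inr (Or.inl hba)
    rcases h.mem_of_adj hvb with hb | rfl | hb
    · exact Or.inl ⟨hb, hba⟩
    · exact absurd (hx v hvb.symm) hv.2
    · exact Or.inr (Or.inr hb)
  obtain ⟨v, hv, hvz, hva⟩ := h.exists_ne_ne a'
  have hg := h.ih.link
    (h.contract_of_separatedBy Set.sdiff_subset (h.ne_y ha) hsep ⟨v, ⟨hv, hva⟩, hvz⟩)
    (Set.ncard_lt_ncard (Set.sdiff_singleton_ssubset.2 ha))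
  refine h.not_good (hg.shift (c := 2 + 1) fun m hm => ?_)
  refine ((hm.pathIn_of_singletons (fun h => h.2 rfl) (fun h' => h.y_notMem h'.1)
    (h.ne_y ha)).cons hxa ?_).univ
  rintro (h' | h' | h')
  · exact hxa.ne h'
  · exact h.ne h'
  · exact h.x_notMem h'.1

lemma MinCounterexample.not_separatedBy_sdiff_singleton (h : MinCounterexample k G I x y z)
    (hu : u ∈ I) (r : V) : ¬ SeparatedBy G (I \ {u}) {r, u} := by
  intro hr
  have eq_r {v w : V} (hv : v ∈ I) (hvu : v ≠ u) (hwv : G.Adj w v) (hw : w ∉ I) : w = r := by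
    rcases hr v ⟨hv, hvu⟩ w hwv.symm with h' | h' | rfl
    · exact absurd h'.1 hw
    · exact h'
    · exact absurd hu hw
  obtain ⟨v, hxv, hvu⟩ := h.exists_adj_x_ne u
  obtain ⟨w, hyw, hwu⟩ := h.symm.exists_adj_x_ne u
  exact h.ne ((eq_r (h.mem_of_adj_x hxv) hvu hxv h.x_notMem).trans
    (eq_r (h.mem_of_adj_y hyw) hwu hyw h.y_notMem).symm)

lemma MinCounterexample.not_separatedBy_pair_of_exempt (h : MinCounterexample k G I x y z)
    (hz : z ∈ I) (hN : SeparatedBy G {z} {x, p}) (hA : A ⊆ I \ {z}) (hne : A.Nonempty) (r : V) :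
    ¬ SeparatedBy G A {r, z} := by
  intro hr
  have hAI : A ⊆ I := hA.trans Set.sdiff_subset
  by_cases hpA : p ∈ A
  · by_cases hAz : insert z A = I
    · refine h.not_separatedBy_sdiff_singleton hz r (?_ : SeparatedBy G (I \ {z}) _)
      rwa [← hAz, Set.insert_sdiff_self_of_notMem fun hzA => (hA hzA).2 rfl]
    · refine h.not_separatedBy_of_exists_ne (Set.insert_subset hz hAI) ⟨p, Or.inr hpA, (hA hpA).2⟩
        hAz (p := x) (q := r) ?_
      rintro a (rfl | ha) b hab
      · rcases hN a rfl b hab with h' | h' | rfl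
        · exact absurd h' hab.ne'
        · exact Or.inr (Or.inl h')
        · exact Or.inl (Or.inr hpA)
      · rcases hr a ha b hab with h' | h' | h'
        · exact Or.inl (Or.inr h')
        · exact Or.inr (Or.inr h')
        · exact Or.inl (Or.inl h')
  · refine h.not_separatedBy_singleton hAI hne r fun a ha b hab => ?_
    rcases hr a ha b hab with h' | h' | rfl
    · exact Or.inl h'
    · exact Or.inr h'
    · rcases hN b rfl a hab.symm with h' | rfl | rfl
      · exact absurd h' hab.ne
      · exact absurd (hAI ha) h.x_notMem
      · exact absurd ha hpA

lemma MinCounterexample.not_separatedBy_exempt (h : MinCounterexample k G I x y z) (hz : z ∈ I)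
    (p : V) : ¬ SeparatedBy G {z} {x, p} := by
  intro hN
  have notAdj {v : V} (hv : v ∈ I) (hvp : v ≠ p) : ¬ G.Adj v z := fun hvz => by
    rcases hN z rfl v hvz.symm with h' | h' | h'
    · exact hvz.ne h'
    · exact h.ne_x hv h'
    · exact hvp h'
  have hx : x ∉ I \ {z} := fun h' => h.x_notMem h'.1
  have hy : y ∉ I \ {z} := fun h' => h.y_notMem h'.1
  obtain ⟨v, hv, hvz, hvp⟩ := h.exists_ne_ne p
  have hr : Rooted k ∅ (contract G (I \ {z}) {x} {y} x y) (I \ {z}) x y p := by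
    refine h.contract_pair (W := {z}) Set.sdiff_subset h.ne (fun v _ b hab => ?_)
      (fun v hv hvp => ?_) (fun A hA hAE r => ?_) ⟨v, ⟨hv, hvz⟩, hvp⟩
    · rcases h.mem_of_adj hab with hb | hb | hb
      · exact (em (b = z)).symm.imp (⟨hb, ·⟩) Or.inl
      · exact Or.inr (Or.inr (Or.inl hb))
      · exact Or.inr (Or.inr (Or.inr hb))
    · rw [Set.inter_eq_left.2 (fun b hb => ?_)]
      · exact h.deg v hv.1 hv.2
      · exact (h.mem_of_adj hb).imp_left fun hbI => ⟨hbI, fun hbz => notAdj hv.1 hvp (hbz ▸ hb)⟩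
    · exact h.not_separatedBy_pair_of_exempt hz hN hA
        (Set.nonempty_iff_ne_empty.2 fun h' => hAE h'.subset) r
  have hg := h.ih.link hr (Set.ncard_lt_ncard (Set.sdiff_singleton_ssubset.2 hz))
  exact h.not_good (hg.shift fun m hm => (hm.pathIn_of_singletons hx hy h.ne).univ)

lemma MinCounterexample.not_separatedBy_pair (h : MinCounterexample k G I x y z) (hD : D ⊆ I)
    (hne : D.Nonempty) (hDI : D ≠ I) (p : V) : ¬ SeparatedBy G D {x, p} := by
  by_cases hDz : ∃ v ∈ D, v ≠ z
  · exact h.not_separatedBy_of_exists_ne hD hDz hDI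
  · obtain rfl := hne.subset_singleton_iff.1 fun v hv => by_contra fun hvz => hDz ⟨v, hv, hvz⟩
    exact h.not_separatedBy_exempt (hD rfl) p

lemma MinCounterexample.mem_componentIn_sdiff_singleton (h : MinCounterexample k G I x y z)
    (hu : u ∈ I) (ha : a ∈ I) (hau : a ≠ u) : a ∈ componentIn G ((I ∪ {y}) \ {u}) y := by
  by_contra hc
  have hyu : y ∈ (I ∪ {y}) \ {u} := ⟨Or.inr rfl, (h.ne_y hu).symm⟩
  refine h.not_separatedBy_pair (D := (I \ {u}) \ componentIn G ((I ∪ {y}) \ {u}) y)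
    (fun v hv => hv.1.1) ⟨a, ⟨ha, hau⟩, hc⟩ (fun h' => (h'.symm ▸ hu).1.2 rfl) u ?_
  rintro v ⟨⟨hvI, hvu⟩, hv⟩ b hvb
  by_cases hbu : b = u
  · exact Or.inr (Or.inr hbu)
  by_cases hbc : b ∈ componentIn G ((I ∪ {y}) \ {u}) y
  · exact absurd (mem_componentIn_of_adj hbc hvb.symm ⟨Or.inl hvI, hvu⟩) hv
  rcases h.mem_of_adj hvb with h' | h' | rfl
  · exact Or.inl ⟨⟨h', hbu⟩, hbc⟩
  · exact Or.inr (Or.inl h')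
  · exact absurd (mem_componentIn_self hyu) hbc

end MinCounterexample

section CommonNeighbors

variable {G : SimpleGraph V} {I D P : Set V} {a b c d p q u v w x y z : V} {k m : ℕ}

lemma exists_separatedBy_pair {T : Set V} (hsep : SeparatedBy G {z} (T ∪ {w}))
    (hT : (G.neighborSet z ∩ T).Subsingleton) : ∃ p, SeparatedBy G {z} {w, p} := by
  obtain hT | ⟨p, hp⟩ := hT.eq_empty_or_singleton
  · refine ⟨w, ?_⟩
    rintro a rfl b hab
    refine (hsep a rfl b hab).imp_right fun hb => Or.inl (hb.resolve_left fun hbT => ?_)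
    exact Set.notMem_empty b (hT ▸ ⟨hab, hbT⟩)
  · refine ⟨p, ?_⟩
    rintro a rfl b hab
    exact (hsep a rfl b hab).imp_right fun hb => hb.symm.imp_right fun hbT => hp.subset ⟨hab, hbT⟩

lemma Rooted.x_notMem_union (h : Rooted k ∅ G I x y z) : x ∉ I ∪ {y} := by
  rintro (hx | hx)
  · exact h.x_notMem hx
  · exact h.ne hx

lemma Rooted.mem_union_of_adj (h : Rooted k ∅ G I x y z) (hxv : ¬ G.Adj x v)
    (hvb : G.Adj v b) : b ∈ I ∪ {y} := by
  rcases h.mem_of_adj hvb with hb | rfl | hb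
  · exact Or.inl hb
  · exact absurd hvb.symm hxv
  · exact Or.inr hb

lemma PathIn.exists_first_hit_pair {S : Set V} (h : PathIn G S c a m) (hab : a ≠ b) :
    ∃ w w', (w = a ∧ w' = b ∨ w = b ∧ w' = a) ∧ ∃ n, PathIn G (S \ {w'}) c w n := by
  obtain ⟨w, rfl | rfl, n, hn⟩ := h.exists_first_hit (W := {a, b}) (by simp)
  · exact ⟨w, b, by simp, n, hn.mono (Set.sdiff_subset_sdiff_right (by simp [hab.symm]))⟩
  · exact ⟨w, a, by simp, n, hn.mono (Set.sdiff_subset_sdiff_right (by simp [hab]))⟩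

lemma MinCounterexample.separatedBy_componentIn_sdiff_neighborSet
    (h : MinCounterexample k G I x y z) (hyx : G.neighborSet y ⊆ G.neighborSet x) (d : V) :
    SeparatedBy G (componentIn G (I \ G.neighborSet x) d) (G.neighborSet x) := fun v hv b hb => by
  have hxv : ¬ G.Adj x v := (componentIn_subset hv).2
  by_cases hxb : G.Adj x b
  · exact Or.inr hxb
  rcases h.mem_union_of_adj hxv hb with hb' | rfl
  · exact Or.inl (mem_componentIn_of_adj hv hb ⟨hb', hxb⟩)
  · exact absurd (hyx hb.symm) hxv

variable [Finite V]

lemma MinCounterexample.link_of_subsingleton (h : MinCounterexample k G I x y z)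
    (hD : D ⊆ I) (hDI : D ≠ I) (hsep : SeparatedBy G D (P ∪ {q}))
    (hP : ∀ v ∈ D, (G.neighborSet v ∩ P).Subsingleton)
    (hconn : ∀ A ⊆ D, A.Nonempty → ¬ SeparatedBy G A P) (hne : ∃ v ∈ D, v ≠ z)
    (htf : k = 3 → G.CliqueFreeOn (insert q D) 3) : HasGoodLengths k (Link G D P {q}) := by
  have nonempty {A : Set V} (hA : ¬ A ⊆ ∅) : A.Nonempty :=
    Set.nonempty_iff_ne_empty.2 fun h' => hA h'.subset
  refine h.ih.link (x := x) (y := y) (e := z) (rooted_contract (W := ∅) h.ne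
    (fun hx => h.x_notMem (hD hx)) (fun hy => h.y_notMem (hD hy)) (by rwa [Set.empty_union])
    (fun v hv hvz => ?_) (fun A hA hAE r _ => ?_) (fun A hA hAE => ?_) (fun A hA hAE => ?_) hne
    fun hk => Or.inl ⟨q, rfl, htf hk⟩) (Set.ncard_lt_ncard (hD.ssubset_of_ne hDI))
  · exact .of_subset (hsep v hv) (h.deg v (hD hv) hvz) (hP v hv)
      (Set.subsingleton_singleton.anti Set.inter_subset_right)
  · rw [insert_empty_eq]
    exact h.not_separatedBy A (hA.trans hD) hAE r
  · rw [Set.empty_union]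
    exact hconn A hA (nonempty hAE)
  · rw [Set.empty_union]
    exact h.not_separatedBy A (hA.trans hD) hAE q

/-- Contracting the neighbours of `x` and deleting `x` preserves all the conditions when no vertex
has two neighbours adjacent to `x`, so the component of `y` after the deletion of these
neighbours must be trivial. -/
lemma MinCounterexample.neighborSet_subset (h : MinCounterexample k G I x y z)
    (htf : k = 3 → G.CliqueFreeOn {x}ᶜ 3)
    (huniq : ∀ u ∈ I, (G.neighborSet u ∩ G.neighborSet x).Subsingleton) :
    G.neighborSet y ⊆ G.neighborSet x := by
  obtain ⟨a₀, ha₀⟩ := h.exists_adj_x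
  set C := componentIn G ((I ∪ {y}) \ G.neighborSet x) y \ {y}
  have hCI : C ⊆ I := fun v hv => (componentIn_subset hv.1).1.resolve_right hv.2
  have hCx : ∀ v ∈ C, ¬ G.Adj x v := fun v hv => (componentIn_subset hv.1).2
  have hCne : C ≠ I := fun h' => hCx a₀ (h' ▸ h.mem_of_adj_x ha₀) ha₀
  have hxC : x ∉ C := fun h' => h.x_notMem (hCI h')
  have hyC : y ∉ C := fun h' => h'.2 rfl
  have hsep : SeparatedBy G C (G.neighborSet x ∪ {y}) := fun v hv b hb => by
    by_cases hby : b = y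
    · exact Or.inr (Or.inr hby)
    by_cases hxb : G.Adj x b
    · exact Or.inr (Or.inl hxb)
    have hbI := h.mem_union_of_adj (hCx v hv) hb
    exact Or.inl ⟨mem_componentIn_of_adj hv.1 hb ⟨hbI, hxb⟩, hby⟩
  have hCz : C ⊆ {z} := by
    by_contra hCz
    have hg := h.link_of_subsingleton hCI hCne hsep (fun v hv => huniq v (hCI hv))
      (fun A hA hne hAx => ?_) (Set.not_subset.1 hCz)
      fun hk => (htf hk).subset _ (Set.subset_compl_singleton_iff.2 (by simp [h.ne, hxC]))
    · refine h.not_good (hg.shift (c := 2 + 1) fun m hm => ?_)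
      obtain ⟨p, hp, _, rfl, hpq⟩ := hm.exists_pathIn
        (Set.disjoint_left.2 fun p hp hpC => hCx p hpC hp) (by simpa using hyC)
        (by simpa using h.not_adj)
      exact (hpq.cons hp (by simp [G.ne_of_adj hp, h.ne, hxC])).univ
    · obtain ⟨a, ha, hay⟩ := exists_adj_of_closed_in_componentIn hA hne fun a ha b hb hab =>
        (hAx a ha b hab).resolve_right (hCx b hb)
      exact (hAx a ha y hay).elim (fun hy => hyC (hA hy)) h.not_adj
  by_contra hyx
  obtain ⟨v, hyv, hxv⟩ := Set.not_subset.1 hyx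
  have hvC : v ∈ C := ⟨mem_componentIn_of_adj (mem_componentIn_self ⟨Or.inr rfl, h.not_adj⟩) hyv
    ⟨Or.inl (h.mem_of_adj_y hyv), hxv⟩, G.ne_of_adj hyv.symm⟩
  obtain rfl := hCz hvC
  obtain hCv : C = {v} := hCz.antisymm (Set.singleton_subset_iff.2 hvC)
  rw [hCv] at hsep hCI hCne
  obtain ⟨p, hp⟩ := exists_separatedBy_pair hsep (huniq v (hCI rfl))
  exact h.symm.not_separatedBy_pair hCI ⟨v, rfl⟩ hCne p hp

/-- Here the neighbours of `x` other than `a` are contracted to one root, and `a` is the other. -/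
lemma MinCounterexample.false_of_neighborSet_subset (h : MinCounterexample k G I x y z)
    (htf : k = 3 → G.CliqueFreeOn {x}ᶜ 3)
    (huniq : ∀ u ∈ I, (G.neighborSet u ∩ G.neighborSet x).Subsingleton)
    (hyx : G.neighborSet y ⊆ G.neighborSet x) (hya : G.Adj y a) (hd : d ∈ I) (hxd : ¬ G.Adj x d)
    (had : G.Adj a d) : False := by
  have hxa : G.Adj x a := hyx hya
  have hsep := h.separatedBy_componentIn_sdiff_neighborSet hyx d
  set A := componentIn G (I \ G.neighborSet x) d
  have hAI : A ⊆ I := fun v hv => (componentIn_subset hv).1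
  have hAx : ∀ v ∈ A, ¬ G.Adj x v := fun v hv => (componentIn_subset hv).2
  have hAne : A ≠ I := fun h' => hAx a (h' ▸ h.mem_of_adj_x hxa) hxa
  have hdA : d ∈ A := mem_componentIn_self ⟨hd, hxd⟩
  have hsep' : SeparatedBy G A (G.neighborSet x \ {a} ∪ {a}) := fun v hv b hb => by
    refine (hsep v hv b hb).imp_right fun hxb => ?_
    exact (em (b = a)).symm.imp (⟨hxb, ·⟩) id
  have hxA : x ∉ A := fun h' => h.x_notMem (hAI h')
  have hyA : y ∉ A := fun h' => h.y_notMem (hAI h')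
  have haA : a ∉ A := fun h' => hAx a h' hxa
  by_cases hAz : A ⊆ {z}
  · refine h.not_separatedBy_singleton hAI ⟨d, hdA⟩ a fun v hv b hb =>
      (hsep v hv b hb).imp_right fun hxb => huniq v (hAI hv) ⟨hb, hxb⟩ ⟨?_, hxa⟩
    obtain rfl : v = d := (hAz hv).trans (hAz hdA).symm
    exact had.symm
  have hg := h.link_of_subsingleton (P := G.neighborSet x \ {a}) (q := a) hAI hAne hsep'
    (fun v hv => (huniq v (hAI hv)).anti (Set.inter_subset_inter_right _ Set.sdiff_subset))
    (fun B hB hne hBx => ?_) (Set.not_subset.1 hAz)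
    fun hk => (htf hk).subset _ (Set.subset_compl_singleton_iff.2 (by simp [hxa.ne, hxA]))
  · refine h.not_good (hg.shift (c := 2 + 2) fun m hm => ?_)
    obtain ⟨p, ⟨hxp, hpa⟩, _, rfl, hpq⟩ := hm.exists_pathIn
      (Set.disjoint_left.2 fun p hp hpA => hAx p hpA hp.1) (by simpa using haA) (by simp)
    have hxq := hpq.cons hxp (by simp [G.ne_of_adj hxp, hxa.ne, hxA])
    refine (hxq.symm.cons hya ?_).symm.univ
    rintro (h' | rfl | h' | h')
    · exact h.ne h'.symm
    · exact h.not_adj hxp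
    · exact hya.ne h'
    · exact hyA h'
  · have hAB := componentIn_subset_of_closed hB hne fun v hv b hb hvb =>
      (hBx v hv b hvb).resolve_right fun hxb => hAx b hb hxb.1
    rcases hBx d (hAB hdA) a had.symm with h' | h'
    · exact haA (hB h')
    · exact h'.2 rfl

lemma MinCounterexample.exists_two_common_neighbors (h : MinCounterexample k G I x y z)
    (htf : k = 3 → G.CliqueFreeOn {x}ᶜ 3)
    (hd : ∀ a ∈ I, a ≠ z → G.Adj x a → G.Adj a y → ∃ d ∈ I, ¬ G.Adj x d ∧ G.Adj a d) :
    ∃ u ∈ I, ∃ a b, a ≠ b ∧ G.Adj x a ∧ G.Adj x b ∧ G.Adj u a ∧ G.Adj u b := by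
  by_contra! hno
  have huniq : ∀ u ∈ I, (G.neighborSet u ∩ G.neighborSet x).Subsingleton :=
    fun u hu a ha b hb => by_contra fun hab => hno u hu a b hab ha.2 hb.2 ha.1 hb.1
  have hyx := h.neighborSet_subset htf huniq
  obtain ⟨a, hya, haz⟩ := h.symm.exists_adj_x_ne z
  obtain ⟨d, hdI, hxd, had⟩ := hd a (h.mem_of_adj_y hya) haz (hyx hya) hya.symm
  exact h.false_of_neighborSet_subset htf huniq hyx hya hdI hxd had

lemma MinCounterexample.not_adj_of_adj_x (h : MinCounterexample 2 G I x y z) (hxa : G.Adj x a)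
    (hxb : G.Adj x b) : ¬ G.Adj a b := by
  intro hab
  have hx : x ∉ I ∪ {y} := h.x_notMem_union
  obtain ⟨n, hn⟩ := h.mem_componentIn_sdiff_singleton (h.mem_of_adj_x hxa) (h.mem_of_adj_x hxb)
    hab.ne'
  obtain ⟨w, w', hw, m, hm⟩ := (hn.mono Set.sdiff_subset).exists_first_hit_pair hab.ne'
  obtain ⟨hxw, hxw', hww'⟩ : G.Adj x w ∧ G.Adj x w' ∧ G.Adj w' w := by
    rcases hw with ⟨rfl, rfl⟩ | ⟨rfl, rfl⟩
    · exact ⟨hxb, hxa, hab⟩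
    · exact ⟨hxa, hxb, hab.symm⟩
  have hxy := hm.symm.cons hxw fun h' => hx h'.1
  have hw'y := hm.symm.cons hww' fun h' => h'.2 rfl
  refine h.false_of_pathIn_two (hw'y.cons hxw' ?_) hxy (Or.inl rfl)
  rintro (h' | h')
  · exact hxw'.ne h'
  · exact hx h'.1

lemma MinCounterexample.not_two_common_neighbors (h : MinCounterexample 2 G I x y z) (hu : u ∈ I)
    (hab : a ≠ b) (hxa : G.Adj x a) (hxb : G.Adj x b) (hua : G.Adj u a) : ¬ G.Adj u b := by
  intro hub
  have hx : x ∉ I ∪ {y} := h.x_notMem_union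
  obtain ⟨n, hn⟩ := h.mem_componentIn_sdiff_singleton hu (h.mem_of_adj_x hxa) hua.ne'
  obtain ⟨w, w', hw, m, hm⟩ := hn.exists_first_hit_pair hab
  obtain ⟨hxw, hxw', huw, huw'⟩ : G.Adj x w ∧ G.Adj x w' ∧ G.Adj u w ∧ G.Adj u w' := by
    rcases hw with ⟨rfl, rfl⟩ | ⟨rfl, rfl⟩
    · exact ⟨hxa, hxb, hua, hub⟩
    · exact ⟨hxb, hxa, hub, hua⟩
  have hxy := hm.symm.cons hxw fun h' => hx h'.1.1
  have huy := hm.symm.cons huw fun h' => h'.1.2 rfl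
  have hw'y := huy.cons huw'.symm fun h' => h'.elim (fun h' => huw'.ne h'.symm) fun h' => h'.2 rfl
  refine h.false_of_pathIn_two (hw'y.cons hxw' ?_) hxy (Or.inr rfl)
  rintro (h' | h' | h')
  · exact hxw'.ne h'
  · exact h.ne_x hu h'.symm
  · exact hx h'.1.1

lemma MinCounterexample.false_of_two (h : MinCounterexample 2 G I x y z) : False := by
  obtain ⟨u, hu, a, b, hab, hxa, hxb, hua, hub⟩ :=
    h.exists_two_common_neighbors (by omega) fun a ha haz hxa _ => by
      obtain ⟨d, had, hd⟩ := Set.exists_mem_notMem_of_ncard_lt_ncard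
        ((ncard_pair_le (p := x) (q := y)).trans_lt (h.deg a ha haz))
      have hdI := (h.mem_of_adj had).resolve_right hd
      exact ⟨d, hdI, fun hxd => h.not_adj_of_adj_x hxa hxd had, had⟩
  exact h.not_two_common_neighbors hu hab hxa hxb hua hub

theorem goodBelow_two (N : ℕ) : GoodBelow V 2 N := by
  induction N with
  | zero => exact fun G I x y z _ h => absurd h (Nat.not_lt_zero _)
  | succ N ih =>
    intro G I x y z hr hN
    by_contra hbad
    exact MinCounterexample.false_of_two ⟨hr, Or.inl rfl, fun G' I' x' y' z' hr' hN' =>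
      ih G' I' x' y' z' hr' (hN'.trans_le (Nat.le_of_lt_succ hN)), hbad⟩

end CommonNeighbors

section ThreePaths

variable {G : SimpleGraph V} {I A S₁ S₂ S₃ : Set V} {a b e q u v x y z : V} {k l₁ l₂ l₃ : ℕ}

lemma MinCounterexample.false_of_pathIn_three (h : MinCounterexample 3 G I x y z)
    (h₁ : PathIn G S₁ x y l₁) (h₂ : PathIn G S₂ x y l₂) (h₃ : PathIn G S₃ x y l₃)
    (hl : (l₁ = l₂ + 2 ∧ l₂ = l₃ + 2) ∨ (l₁ = l₂ + 1 ∧ l₂ = l₃ + 2) ∨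
      (l₁ = l₂ + 2 ∧ l₂ = l₃ + 1)) : False :=
  h.not_good ⟨by omega, fun _ => ⟨l₁, l₂, l₃, h₁.univ, h₂.univ, h₃.univ, hl⟩⟩

variable [Finite V]

lemma MinCounterexample.contract_insert (h : MinCounterexample k G I x y z) (hA : A ⊆ I)
    (hne : A.Nonempty) (hz : z ∉ A) (hu : u ∈ I) (huA : u ∉ A) (hqx : q ≠ x)
    (hN : SeparatedBy G A {x, u, q}) :
    Rooted k {u} (contract G (insert u A) {x} {q} x y) (insert u A) x y u := by
  have hN' {v b : V} (hv : v ∈ A) (hb : G.Adj v b) : b ∈ insert u A ∪ ({x} ∪ {q}) := by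
    rcases hN v hv b hb with h' | rfl | rfl | rfl <;> simp [*]
  obtain ⟨v, hv⟩ := hne
  refine h.contract_pair (W := (insert u A ∪ ({x} ∪ {q}))ᶜ) (Set.insert_subset hu hA) hqx.symm
    (fun w _ b _ => or_iff_not_imp_left.2 fun hb => ?_) (fun w hw hwu => ?_)
    (fun B hB hBu r hr => ?_) ⟨v, Or.inr hv, ne_of_mem_of_not_mem hv huA⟩
  · exact (em (b ∈ ({x} ∪ {q} : Set V))).symm.imp (fun hb' => not_or.2 ⟨hb, hb'⟩) id
  · have hwA := hw.resolve_left hwu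
    have hsub : G.neighborSet w ⊆ insert u A ∪ ({x} ∪ {q}) := fun b hb => hN' hwA hb
    rw [Set.inter_eq_left.2 hsub]
    exact h.deg w (hA hwA) (ne_of_mem_of_not_mem hwA hz)
  · have hBA : B \ {u} ⊆ A := fun w hw => (hB hw.1).resolve_left hw.2
    obtain ⟨w, hw⟩ := Set.not_subset.1 hBu
    refine h.not_separatedBy_of_exists_ne (p := u) (q := r) (hBA.trans hA)
      ⟨w, hw, ne_of_mem_of_not_mem (hBA hw) hz⟩ (fun h' => (h'.symm ▸ hu).2 rfl)
      fun a ha b hab => ?_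
    by_cases hbu : b = u
    · exact Or.inr (Or.inl hbu)
    rcases hr a ha.1 b hab with hb | rfl | hb
    · exact Or.inl ⟨hb, hbu⟩
    · exact Or.inr (Or.inr rfl)
    · exact absurd (hN' (hBA ha) hab) hb

lemma MinCounterexample.exists_pathIn_avoiding (h : MinCounterexample k G I x y z) (hA : A ⊆ I)
    (hne : A.Nonempty) (hu : u ∈ I) (huA : u ∉ A) (hqA : q ∉ A) (hqx : q ≠ x) (hqu : q ≠ u)
    (hN : SeparatedBy G A {x, u, q}) : ∃ n, PathIn G ((I ∪ {y}) \ insert u A) q y n := by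
  have hq : q ∈ I ∪ {y} := by
    by_contra hq
    refine h.not_separatedBy_pair hA hne (fun h' => huA (h' ▸ hu)) u fun a ha b hab => ?_
    rcases hN a ha b hab with h' | rfl | rfl | rfl
    · exact Or.inl h'
    · simp
    · simp
    · exact absurd ((h.mem_of_adj hab).imp_right fun h' => h'.resolve_left hqx) hq
  have hqU : q ∈ (I ∪ {y}) \ insert u A := ⟨hq, fun h' => h'.elim hqu hqA⟩
  by_contra! hy
  have hyD : y ∉ componentIn G ((I ∪ {y}) \ insert u A) q := fun ⟨n, hn⟩ => hy n hn
  refine h.not_separatedBy_pair (D := componentIn G ((I ∪ {y}) \ insert u A) q ∪ A) ?_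
    (hne.mono Set.subset_union_right) (fun h' => ?_) u ?_
  · refine Set.union_subset (fun v hv => (componentIn_subset hv).1.resolve_right ?_) hA
    rintro rfl
    exact hyD hv
  · exact (h'.symm ▸ hu).elim (fun hu' => (componentIn_subset hu').2 (Or.inl rfl)) huA
  · rintro a (ha | ha) b hab
    · by_cases hb : b ∈ insert u A
      · exact hb.symm.imp Or.inr Or.inr
      rcases h.mem_of_adj hab with h' | h' | h'
      · exact Or.inl (Or.inl (mem_componentIn_of_adj ha hab ⟨Or.inl h', hb⟩))
      · exact Or.inr (Or.inl h')
      · exact Or.inl (Or.inl (mem_componentIn_of_adj ha hab ⟨Or.inr h', hb⟩))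
    · rcases hN a ha b hab with h' | h' | h' | rfl
      · exact Or.inl (Or.inr h')
      · exact Or.inr (Or.inl h')
      · exact Or.inr (Or.inr h')
      · exact Or.inl (Or.inl (mem_componentIn_self hqU))

/-- The set together with `u` can be contracted with roots `x` and `q`, and `q` is joined to `y` by
a path that avoids it. -/
lemma MinCounterexample.not_separatedBy_triple (h : MinCounterexample 3 G I x y z) (hA : A ⊆ I)
    (hne : A.Nonempty) (hzA : z ∉ A) (huA : u ∉ A) (hqA : q ∉ A) (hu : u ∈ I) (hqx : q ≠ x)
    (hqu : q ≠ u) (hAI : insert u A ≠ I) : ¬ SeparatedBy G A {x, u, q} := by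
  intro hN
  have hCI : insert u A ⊆ I := Set.insert_subset hu hA
  have hg := h.ih.link_of_pendant h.two_le (h.contract_insert hA hne hzA hu huA hqx hN)
    (Set.ncard_lt_ncard (hCI.ssubset_of_ne hAI)) (by omega)
  obtain ⟨l, hl⟩ := h.exists_pathIn_avoiding hA hne hu huA hqA hqx hqu hN
  refine h.not_good (hg.shift (c := 2 + l) fun m hm => ?_)
  have hxq := hm.pathIn_of_singletons (fun h' => h.x_notMem (hCI h'))
    (fun h' => h'.elim hqu hqA) hqx.symm
  rw [← add_assoc]
  refine (hxq.append hl ?_).univ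
  rintro v (rfl | rfl | hv) hvU
  · exact absurd hvU.1 h.x_notMem_union
  · rfl
  · exact absurd hv hvU.2

/-- Otherwise `y` could be deleted, with `q` taking over the role of `y`. -/
lemma MinCounterexample.exists_ncard_lt_of_adj_y (h : MinCounterexample 3 G I x y z)
    (hqy : G.Adj q y) (hne : ¬ I \ {q} ⊆ {e}) :
    ∃ w ∈ I, w ≠ q ∧ w ≠ e ∧ (G.neighborSet w \ {y}).ncard < 4 := by
  by_contra! hdeg
  have hq : q ∈ I := h.mem_of_adj_y hqy.symm
  have hxC : x ∉ I \ {q} := fun h' => h.x_notMem h'.1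
  have hqC : q ∉ I \ {q} := fun h' => h'.2 rfl
  have mem {v b : V} (hb : G.Adj v b) (hby : b ≠ y) :
      b ∈ I \ {q} ∪ ({x} ∪ {q}) := by
    rcases h.mem_of_adj hb with h' | h' | h'
    · exact (em (b = q)).symm.imp (⟨h', ·⟩) Or.inr
    · exact Or.inr (Or.inl h')
    · exact absurd h' hby
  have hr : Rooted 3 ∅ (contract G (I \ {q}) {x} {q} x y) (I \ {q}) x y e := by
    refine h.contract_pair (W := {y}) Set.sdiff_subset (h.ne_x hq).symm (fun v _ b hb => ?_)
      (fun v hv hve => (hdeg v hv.1 hv.2 hve).trans (Set.ncard_le_ncard ?_))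
      (fun A hA hAE r => ?_) (Set.not_subset.1 hne)
    · by_cases hby : b = y
      · exact Or.inr (Or.inl hby)
      · exact (mem hb hby).imp_right Or.inr
    · exact fun b hb => ⟨hb.1, mem hb.1 hb.2⟩
    · rw [Set.pair_comm]
      exact h.symm.not_separatedBy_pair (hA.trans Set.sdiff_subset)
        (Set.nonempty_iff_ne_empty.2 fun h' => hAE h'.subset) (fun h' => hqC (hA (h' ▸ hq))) r
  have hg := h.ih.link hr (Set.ncard_lt_ncard (Set.sdiff_singleton_ssubset.2 hq))
  refine h.not_good (hg.shift (c := 2 + 1) fun m hm => ?_)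
  have hxq := hm.pathIn_of_singletons hxC hqC (h.ne_x hq).symm
  refine (hxq.symm.cons hqy.symm ?_).symm.univ
  rintro (h' | h' | h')
  · exact h.ne h'.symm
  · exact hqy.ne h'.symm
  · exact h.y_notMem h'.1

lemma MinCounterexample.eq_of_common_neighbors (h : MinCounterexample 3 G I x y z) (hu : u ∈ I)
    (huv : u ≠ v) (hxv : G.Adj x v) (hxa : G.Adj x a) (hxb : G.Adj x b) (hua : G.Adj u a)
    (hub : G.Adj u b) (hva : G.Adj v a) (hvb : G.Adj v b) : a = b := by
  by_contra hab
  have hux := h.ne_x hu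
  have false_of_hit {a b : V} {S : Set V} {m : ℕ} (hxa : G.Adj x a) (hxb : G.Adj x b)
      (hua : G.Adj u a) (hub : G.Adj u b) (hva : G.Adj v a) (hvb : G.Adj v b)
      (hm : PathIn G S a y m) (hxS : x ∉ S) (huS : u ∉ S) (hvS : v ∉ S) (hbS : b ∉ S) :
      False := by
    have hxy := hm.cons hxa hxS
    have hxvy := (hm.cons hva hvS).cons hxv (by grind [SimpleGraph.Adj.ne])
    have huy := hm.cons hua huS
    have hvbuy := (huy.cons hub.symm (by grind [SimpleGraph.Adj.ne])).cons hvb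
      (by grind [SimpleGraph.Adj.ne])
    exact h.false_of_pathIn_three (hvbuy.cons hxv (by grind [SimpleGraph.Adj.ne])) hxvy hxy
      (by omega)
  obtain ⟨l, hl⟩ := h.mem_componentIn_sdiff_singleton hu (h.mem_of_adj_x hxa) hua.ne'
  obtain ⟨w, hw, m, hm⟩ := hl.exists_first_hit (W := {a, b, v}) (by simp)
  have hxS : x ∉ ((I ∪ {y}) \ {u}) \ ({a, b, v} \ {w}) := fun h' => h.x_notMem_union h'.1.1
  have huS : u ∉ ((I ∪ {y}) \ {u}) \ ({a, b, v} \ {w}) := fun h' => h'.1.2 rfl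
  have notMem {t : V} (ht : t ∈ ({a, b, v} : Set V)) (htw : t ≠ w) :
      t ∉ ((I ∪ {y}) \ {u}) \ ({a, b, v} \ {w}) := fun h' => h'.2 ⟨ht, htw⟩
  rcases hw with rfl | rfl | rfl
  · exact false_of_hit hxa hxb hua hub hva hvb hm.symm hxS huS (notMem (by simp) hva.ne)
      (notMem (by simp) (Ne.symm hab))
  · exact false_of_hit hxb hxa hub hua hvb hva hm.symm hxS huS (notMem (by simp) hvb.ne)
      (notMem (by simp) hab)
  · have haS := notMem (t := a) (by simp) hva.ne'
    have hbS := notMem (t := b) (by simp) hvb.ne'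
    have hxy := hm.symm.cons hxv hxS
    have hxay := (hm.symm.cons hva.symm haS).cons hxa (by grind [SimpleGraph.Adj.ne])
    have huby := (hm.symm.cons hvb.symm hbS).cons hub (by grind [SimpleGraph.Adj.ne])
    have hxauby := (huby.cons hua.symm (by grind [SimpleGraph.Adj.ne])).cons hxa
      (by grind [SimpleGraph.Adj.ne])
    exact h.false_of_pathIn_three hxauby hxay hxy (by omega)

end ThreePaths

/-! ### Three common neighbours -/

section TwinHubs

/-- A minimal counterexample with two vertices `u`, `v` whose set `T` of common neighbours in the
neighbourhood of `x` has at least three elements. -/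
structure TwinHubs (G : SimpleGraph V) (I : Set V) (x y z u v : V) (T : Set V) : Prop
    extends MinCounterexample 3 G I x y z where
  triangleFree : G.CliqueFreeOn {x}ᶜ 3
  u_mem : u ∈ I
  v_mem : v ∈ I
  u_ne_v : u ≠ v
  mem_iff : ∀ t, t ∈ T ↔ G.Adj x t ∧ G.Adj u t ∧ G.Adj v t
  three_le : 3 ≤ T.ncard

namespace TwinHubs

variable {G : SimpleGraph V} {I S T : Set V} {a b d t u v w x y z : V} {m : ℕ}

protected lemma symm (h : TwinHubs G I x y z u v T) : TwinHubs G I x y z v u T where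
  toMinCounterexample := h.toMinCounterexample
  triangleFree := h.triangleFree
  u_mem := h.v_mem
  v_mem := h.u_mem
  u_ne_v := h.u_ne_v.symm
  mem_iff t := (h.mem_iff t).trans (and_congr_right fun _ => and_comm)
  three_le := h.three_le

lemma adj_x (h : TwinHubs G I x y z u v T) (ht : t ∈ T) : G.Adj x t :=
  ((h.mem_iff t).1 ht).1

lemma adj_u (h : TwinHubs G I x y z u v T) (ht : t ∈ T) : G.Adj u t :=
  ((h.mem_iff t).1 ht).2.1

lemma adj_v (h : TwinHubs G I x y z u v T) (ht : t ∈ T) : G.Adj v t :=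
  ((h.mem_iff t).1 ht).2.2

lemma ne_y_of_mem (h : TwinHubs G I x y z u v T) (ht : t ∈ T) : t ≠ y := fun h' =>
  h.not_adj (h' ▸ h.adj_x ht)

lemma separatedBy_componentIn (h : TwinHubs G I x y z u v T) :
    SeparatedBy G (componentIn G ((I ∪ {y}) \ {u, v}) y) ({x} ∪ {u, v}) := fun w hw b hb => by
  by_cases hbuv : b ∈ ({u, v} : Set V)
  · exact Or.inr (Or.inr hbuv)
  rcases h.mem_of_adj hb with hb' | hb' | hb'
  · exact Or.inl (mem_componentIn_of_adj hw hb ⟨Or.inl hb', hbuv⟩)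
  · exact Or.inr (Or.inl hb')
  · exact Or.inl (mem_componentIn_of_adj hw hb ⟨Or.inr hb', hbuv⟩)

lemma mem_componentIn_self (h : TwinHubs G I x y z u v T) :
    y ∈ componentIn G ((I ∪ {y}) \ {u, v}) y :=
  GoodPaths.mem_componentIn_self
    ⟨Or.inr rfl, by simp [(h.ne_y h.u_mem).symm, (h.ne_y h.v_mem).symm]⟩

lemma of_mem_componentIn_sdiff (hw : w ∈ componentIn G (I \ ({u, v} ∪ T)) d) :
    w ∈ I ∧ w ≠ u ∧ w ≠ v ∧ w ∉ T := by
  obtain ⟨hwI, hw⟩ := componentIn_subset hw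
  exact ⟨hwI, fun h' => hw (by simp [h']), fun h' => hw (by simp [h']), fun h' => hw (Or.inr h')⟩

variable [Finite V]

lemma exists_pair_ne (h : TwinHubs G I x y z u v T) (s : V) :
    ∃ a ∈ T, ∃ b ∈ T, a ≠ b ∧ a ≠ s ∧ b ≠ s := by
  obtain ⟨a, b, ha, hb, hab⟩ :=
    (Set.one_lt_ncard_iff).1 (le_ncard_sdiff_singleton (a := s) h.three_le)
  exact ⟨a, ha.1, b, hb.1, hab, ha.2, hb.2⟩

lemma notMem_componentIn (h : TwinHubs G I x y z u v T) (ht : t ∈ T) :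
    t ∉ componentIn G ((I ∪ {y}) \ {u, v}) y := by
  rintro ⟨l, hl⟩
  obtain ⟨s, hs, m, hm⟩ := hl.exists_first_hit ht
  obtain ⟨b, hb, c, hc, hbc, hbs, hcs⟩ := h.exists_pair_ne s
  set R := ((I ∪ {y}) \ {u, v}) \ (T \ {s})
  have hxR : x ∉ R := fun h' => h.x_notMem_union h'.1.1
  have huR : u ∉ R := fun h' => h'.1.2 (Or.inl rfl)
  have hvR : v ∉ R := fun h' => h'.1.2 (Or.inr rfl)
  have hbR : b ∉ R := fun h' => h'.2 ⟨hb, hbs⟩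
  have hcR : c ∉ R := fun h' => h'.2 ⟨hc, hcs⟩
  clear_value R
  have hxu := h.ne_x h.u_mem
  have hxv := h.ne_x h.v_mem
  have huv := h.u_ne_v
  have hxb := h.adj_x hb
  have hxc := h.adj_x hc
  have hub := h.adj_u hb
  have huc := h.adj_u hc
  have hvb := h.adj_v hb
  have hvc := h.adj_v hc
  have hxsy := hm.symm.cons (h.adj_x hs) hxR
  have hbusy := (hm.symm.cons (h.adj_u hs) huR).cons hub.symm
    (by grind [SimpleGraph.Adj.ne])
  have hcvsy := (hm.symm.cons (h.adj_v hs) hvR).cons hvc.symm (by grind [SimpleGraph.Adj.ne])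
  have hbucvsy := (hcvsy.cons huc (by grind [SimpleGraph.Adj.ne])).cons hub.symm
    (by grind [SimpleGraph.Adj.ne])
  exact h.false_of_pathIn_three (hbucvsy.cons hxb (by grind [SimpleGraph.Adj.ne]))
    (hbusy.cons hxb (by grind [SimpleGraph.Adj.ne])) hxsy (by omega)

lemma keepsDegree (h : TwinHubs G I x y z u v T)
    (hw : w ∈ componentIn G ((I ∪ {y}) \ {u, v}) y \ {y}) (hwz : w ≠ z) :
    KeepsDegree G (componentIn G ((I ∪ {y}) \ {u, v}) y \ {y}) {u, v} {y} 3 w := by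
  have hsep {b : V} (hb : G.Adj w b) (hbx : b ≠ x) :
      b ∈ componentIn G ((I ∪ {y}) \ {u, v}) y \ {y} ∪ ({u, v} ∪ {y}) := by
    by_cases hby : b = y
    · exact Or.inr (Or.inr hby)
    · exact (h.separatedBy_componentIn w hw.1 b hb).imp (⟨·, hby⟩)
        fun hb' => Or.inl (hb'.resolve_left hbx)
  have hdeg := h.deg w ((componentIn_subset hw.1).1.resolve_right hw.2) hwz
  by_cases hxw : G.Adj x w
  · refine .of_sdiff_singleton (w := x) (fun b hb => hsep hb.1 hb.2) hdeg ?_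
      (Set.subsingleton_singleton.anti Set.inter_subset_right)
    have hT (hu : G.Adj w u) (hv : G.Adj w v) : False :=
      h.notMem_componentIn ((h.mem_iff w).2 ⟨hxw, hu.symm, hv.symm⟩) hw.1
    rintro _ ⟨⟨hs, -⟩, rfl | rfl⟩ _ ⟨⟨ht, -⟩, rfl | rfl⟩
    · rfl
    · exact (hT hs ht).elim
    · exact (hT ht hs).elim
    · rfl
  · refine .of_sdiff_singleton (w := v)
      (fun b hb => hsep hb.1 fun hbx => hxw (hbx ▸ G.adj_symm hb.1)) hdeg ?_
      (Set.subsingleton_singleton.anti Set.inter_subset_right)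
    rintro s ⟨⟨-, hs⟩, hs'⟩ t ⟨⟨-, ht⟩, ht'⟩
    exact (hs'.resolve_right hs).trans (ht'.resolve_right ht).symm

lemma rooted_contract (h : TwinHubs G I x y z u v T)
    (hne : ∃ w ∈ componentIn G ((I ∪ {y}) \ {u, v}) y \ {y}, w ≠ z) :
    Rooted 2 ∅ (contract G (componentIn G ((I ∪ {y}) \ {u, v}) y \ {y}) {u, v} {y} x y)
      (componentIn G ((I ∪ {y}) \ {u, v}) y \ {y}) x y z := by
  set C := componentIn G ((I ∪ {y}) \ {u, v}) y \ {y}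
  have hCI : C ⊆ I := fun w hw => (componentIn_subset hw.1).1.resolve_right hw.2
  have huC : u ∉ C := fun h' => (componentIn_subset h'.1).2 (Or.inl rfl)
  have not_sep {A : Set V} (hA : A ⊆ C) (hAE : ¬ A ⊆ ∅) (p : V) : ¬ SeparatedBy G A {x, p} :=
    h.not_separatedBy_pair (hA.trans hCI) (Set.nonempty_iff_ne_empty.2 fun h' => hAE h'.subset)
      (fun h' => huC (hA (h' ▸ h.u_mem))) p
  have notMem {b : V} (hb : b ∈ C) : b ∉ ({x} ∪ {u, v} : Set V) := fun h' =>
    h'.elim (fun hbx => h.x_notMem (hCI (hbx ▸ hb))) (componentIn_subset hb.1).2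
  refine GoodPaths.rooted_contract (W := {x}) h.ne (fun h' => h.x_notMem (hCI h'))
    (fun h' => h'.2 rfl) (fun w hw b hb => ?_) (fun w hw hwz => h.keepsDegree hw hwz)
    (fun A hA hAE r _ => ?_) (fun A hA hAE hsep => ?_) (fun A hA hAE => not_sep hA hAE y) hne
    (by omega)
  · by_cases hby : b = y
    · exact Or.inr (Or.inr (Or.inr hby))
    · exact (h.separatedBy_componentIn w hw.1 b hb).imp (⟨·, hby⟩) (Or.imp_right Or.inl)
  · rw [Set.pair_comm]
    exact not_sep hA hAE r
  · obtain ⟨a, ha, hay⟩ := exists_adj_of_closed_in_componentIn hA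
      (Set.nonempty_iff_ne_empty.2 fun h' => hAE h'.subset)
      fun a ha b hb hab => (hsep a ha b hab).resolve_right (notMem hb)
    rcases hsep a ha y hay with hy | hy | hy | hy
    · exact (hA hy).2 rfl
    · exact h.ne hy.symm
    · exact h.ne_y h.u_mem hy.symm
    · exact h.ne_y h.v_mem hy.symm

lemma pathIn_of_pathIn_u (h : TwinHubs G I x y z u v T) (hS : PathIn G S u y m) (hx : x ∉ S)
    (hv : v ∉ S) (hT : Disjoint T S) :
    PathIn G Set.univ x y (m + 2) ∧ PathIn G Set.univ x y (m + 4) := by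
  obtain ⟨a, ha, b, hb, hab, -, -⟩ := h.exists_pair_ne x
  have haS := Set.disjoint_left.1 hT ha
  have hbS := Set.disjoint_left.1 hT hb
  have hxa := h.adj_x ha
  have hxb := h.adj_x hb
  have hvb := h.adj_v hb
  have hva := h.adj_v ha
  have hvx := h.ne_x h.v_mem
  have hvbuy := (hS.cons (h.adj_u hb).symm hbS).cons hvb (by grind [SimpleGraph.Adj.ne])
  exact ⟨((hS.cons (h.adj_u ha).symm haS).cons hxa (by grind [SimpleGraph.Adj.ne])).univ,
    ((hvbuy.cons hva.symm (by grind [SimpleGraph.Adj.ne])).cons hxa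
      (by grind [SimpleGraph.Adj.ne])).univ⟩

lemma componentIn_subset_pair (h : TwinHubs G I x y z u v T) :
    componentIn G ((I ∪ {y}) \ {u, v}) y ⊆ {y, z} := by
  by_contra hne
  obtain ⟨w, hw, hwyz⟩ := Set.not_subset.1 hne
  rw [Set.mem_insert_iff, Set.mem_singleton_iff, not_or] at hwyz
  have hr := h.rooted_contract ⟨w, ⟨hw, hwyz.1⟩, hwyz.2⟩
  set C := componentIn G ((I ∪ {y}) \ {u, v}) y \ {y} with hC
  have huC : u ∉ C := fun h' => (componentIn_subset h'.1).2 (Or.inl rfl)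
  have hvC : v ∉ C := fun h' => (componentIn_subset h'.1).2 (Or.inr rfl)
  have hxC : x ∉ C := fun h' => h.x_notMem_union (componentIn_subset h'.1).1
  have hTC {t : V} (ht : t ∈ T) : t ∉ C := fun h' => h.notMem_componentIn ht h'.1
  have huy := h.ne_y h.u_mem
  have hvy := h.ne_y h.v_mem
  refine h.not_good (((goodBelow_two _).link hr (Nat.lt_succ_self _)).two_to_three (c := 4)
    fun m hm => ?_)
  obtain ⟨p, hp, _, rfl, hpy⟩ := hm.exists_pathIn (by simp [huC, hvC]) (by simp [hC])
    (by simp [huy.symm, hvy.symm])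
  rcases hp with rfl | rfl
  · refine h.pathIn_of_pathIn_u hpy (by simp [(h.ne_x h.u_mem).symm, h.ne, hxC])
      (by simp [h.u_ne_v.symm, hvy, hvC]) (Set.disjoint_left.2 fun t ht => ?_)
    simp [(h.adj_u ht).ne', h.ne_y_of_mem ht, hTC ht]
  · refine h.symm.pathIn_of_pathIn_u hpy (by simp [(h.ne_x h.v_mem).symm, h.ne, hxC])
      (by simp [h.u_ne_v, huy, huC]) (Set.disjoint_left.2 fun t ht => ?_)
    simp [(h.adj_v ht).ne', h.ne_y_of_mem ht, hTC ht]

lemma not_adj_y (h : TwinHubs G I x y z u v T) (huy : G.Adj u y) (hz : z ∈ I)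
    (hzN : SeparatedBy G {z} {x, u, v, y}) : ¬ G.Adj z y := by
  intro hzy
  have hxy := h.ne
  have hux := h.ne_x h.u_mem
  have hvx := h.ne_x h.v_mem
  have hvy := h.ne_y h.v_mem
  have huv := h.u_ne_v
  have hzu : ¬ G.Adj z u := fun hzu =>
    false_of_triangle h.triangleFree (h.ne_x hz) hux hxy.symm hzu huy hzy
  have hxz : G.Adj x z := by
    by_contra hxz
    refine h.toMinCounterexample.symm.not_separatedBy_pair (D := {z}) (by simpa using hz) ⟨z, rfl⟩
      (fun h' => let ⟨w, hw, hwz⟩ := h.exists_ne; hwz (h'.symm.subset hw)) v ?_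
    rintro _ rfl b hb
    rcases hzN _ rfl b hb with h' | rfl | rfl | rfl | rfl
    · exact Or.inl h'
    · exact absurd hb.symm hxz
    · exact absurd hb hzu
    · simp
    · simp
  obtain ⟨a, ha, b, hb, hab, -, -⟩ := h.exists_pair_ne x
  have hxa := h.adj_x ha
  have hxb := h.adj_x hb
  have hay := h.ne_y_of_mem ha
  have hby := h.ne_y_of_mem hb
  have hua := h.adj_u ha
  have hub := h.adj_u hb
  have hva := h.adj_v ha
  have hvb := h.adj_v hb
  have hxauy := pathIn_three hxa hua.symm huy hxy hux.symm hay
  have hvbuy := (pathIn_two hub.symm huy hby).cons hvb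
    (by grind [SimpleGraph.Adj.ne])
  have hxavbuy := (hvbuy.cons hva.symm (by grind [SimpleGraph.Adj.ne])).cons hxa
    (by grind [SimpleGraph.Adj.ne])
  exact h.false_of_pathIn_three hxavbuy hxauy (pathIn_two hxz hzy hxy) (by omega)

lemma neighborSet_y_subset (h : TwinHubs G I x y z u v T) : G.neighborSet y ⊆ {u, v} := by
  have hsub {w : V} (hyw : G.Adj y w) (hwuv : w ∉ ({u, v} : Set V)) : w = z :=
    (h.componentIn_subset_pair (mem_componentIn_of_adj h.mem_componentIn_self hyw
      ⟨Or.inl (h.mem_of_adj_y hyw), hwuv⟩)).resolve_left hyw.ne'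
  by_contra hne
  obtain ⟨w, hyw, hwuv⟩ := Set.not_subset.1 hne
  obtain rfl := hsub hyw hwuv
  have hw := h.mem_of_adj_y hyw
  have hwN : SeparatedBy G {w} {x, u, v, y} := by
    rintro _ rfl b hb
    rcases h.separatedBy_componentIn _
      (mem_componentIn_of_adj h.mem_componentIn_self hyw ⟨Or.inl hw, hwuv⟩) b hb with h' | h'
    · rcases h.componentIn_subset_pair h' with h' | h'
      · simp [h']
      · exact Or.inl h'
    · rcases h' with rfl | rfl | rfl <;> simp
  obtain ⟨s, hys, hsw⟩ := h.toMinCounterexample.symm.exists_adj_x_ne w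
  by_cases hsuv : s ∈ ({u, v} : Set V)
  · rcases hsuv with rfl | rfl
    · exact h.not_adj_y hys.symm hw hwN hyw.symm
    · rw [Set.insert_comm u s] at hwN
      exact h.symm.not_adj_y hys.symm hw hwN hyw.symm
  · exact hsw (hsub hys hsuv)

lemma adj_u_y (h : TwinHubs G I x y z u v T) : G.Adj u y := by
  obtain ⟨s, hs, hsv⟩ := h.toMinCounterexample.symm.exists_adj_x_ne v
  obtain rfl := (h.neighborSet_y_subset hs).resolve_right hsv
  exact hs.symm

lemma ncard_neighborSet_sdiff_lt (h : TwinHubs G I x y z u v T) :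
    (G.neighborSet u \ {y}).ncard < 4 := by
  obtain ⟨a, ha, -⟩ := h.exists_pair_ne x
  have hne : ¬ I \ {v} ⊆ {z} := fun h' => (h.adj_u ha).ne <|
    (h' ⟨h.u_mem, h.u_ne_v⟩).trans (h' ⟨h.mem_of_adj_x (h.adj_x ha), (h.adj_v ha).ne'⟩).symm
  obtain ⟨w, hw, hwv, hwz, hlt⟩ := h.exists_ncard_lt_of_adj_y h.symm.adj_u_y hne
  by_cases hwu : w = u
  · exact hwu ▸ hlt
  have hwy : y ∉ G.neighborSet w := fun hwy =>
    (h.neighborSet_y_subset (G.adj_symm hwy)).elim hwu hwv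
  rw [Set.sdiff_singleton_eq_self hwy] at hlt
  exact absurd (h.deg w hw hwz) hlt.not_ge

lemma mem_of_adj_u (h : TwinHubs G I x y z u v T) (hw : G.Adj u w) (hwy : w ≠ y) : w ∈ T := by
  have hsub : T ⊆ G.neighborSet u \ {y} := fun t ht => ⟨h.adj_u ht, h.ne_y_of_mem ht⟩
  have heq := Set.eq_of_subset_of_ncard_le hsub
    ((Nat.lt_succ_iff.1 h.ncard_neighborSet_sdiff_lt).trans h.three_le)
  exact heq ▸ ⟨hw, hwy⟩

lemma inter_subsingleton (h : TwinHubs G I x y z u v T) (hw : w ∈ I) (hwu : w ≠ u) (hwv : w ≠ v) :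
    (G.neighborSet w ∩ T).Subsingleton := by
  rintro a ⟨hwa : G.Adj w a, ha⟩ b ⟨hwb : G.Adj w b, hb⟩
  by_contra hab
  obtain ⟨c, hc, hcab⟩ := Set.exists_mem_notMem_of_ncard_lt_ncard
    ((ncard_pair_le (p := a) (q := b)).trans_lt h.three_le)
  obtain ⟨hca, hcb⟩ : c ≠ a ∧ c ≠ b := not_or.1 hcab
  have hxy := h.ne
  have hux := h.ne_x h.u_mem
  have hvx := h.ne_x h.v_mem
  have hvy := h.ne_y h.v_mem
  have hwx := h.ne_x hw
  have hwy := h.ne_y hw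
  have huv := h.u_ne_v
  have huy := h.adj_u_y
  have hxa := h.adj_x ha
  have hxb := h.adj_x hb
  have hxc := h.adj_x hc
  have hay := h.ne_y_of_mem ha
  have hby := h.ne_y_of_mem hb
  have hcy := h.ne_y_of_mem hc
  have hua := h.adj_u ha
  have hub := h.adj_u hb
  have huc := h.adj_u hc
  have hva := h.adj_v ha
  have hvb := h.adj_v hb
  have hvc := h.adj_v hc
  have hwc : w ≠ c := by
    rintro rfl
    exact false_of_triangle h.triangleFree hux hwx hxa.ne' huc hwa hua
  have hxcuy := pathIn_three hxc huc.symm huy hxy hux.symm hcy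
  have hvbuy := (pathIn_two hub.symm huy hby).cons hvb (by grind [SimpleGraph.Adj.ne])
  have hxavbuy := (hvbuy.cons hva.symm (by grind [SimpleGraph.Adj.ne])).cons hxa
    (by grind [SimpleGraph.Adj.ne])
  have hvcuy := (pathIn_two huc.symm huy hcy).cons hvc (by grind [SimpleGraph.Adj.ne])
  have hwbvcuy := (hvcuy.cons hvb.symm (by grind [SimpleGraph.Adj.ne])).cons hwb
    (by grind [SimpleGraph.Adj.ne])
  have hxawbvcuy := (hwbvcuy.cons hwa.symm
    (by simp [hwa.ne', hab, hva.ne', Ne.symm hca, hua.ne', hay])).cons hxa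
    (by simp [hxa.ne, hwx.symm, hxb.ne, hvx.symm, hxc.ne, hux.symm, hxy])
  exact h.false_of_pathIn_three hxawbvcuy hxavbuy hxcuy (by omega)

lemma separatedBy_componentIn_sdiff (h : TwinHubs G I x y z u v T) (d : V) :
    SeparatedBy G (componentIn G (I \ ({u, v} ∪ T)) d) (T ∪ {x}) := fun w hw s hs => by
  have hwU := componentIn_subset hw
  have hwy := h.ne_y hwU.1
  have hwT : w ∉ T := fun h' => hwU.2 (Or.inr h')
  by_cases hsT : s ∈ T
  · exact Or.inr (Or.inl hsT)
  rcases h.mem_of_adj hs with h' | h' | rfl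
  · refine Or.inl (mem_componentIn_of_adj hw hs ⟨h', ?_⟩)
    rintro ((rfl | rfl) | h'')
    · exact hwT (h.mem_of_adj_u hs.symm hwy)
    · exact hwT (h.symm.mem_of_adj_u hs.symm hwy)
    · exact hsT h''
  · exact Or.inr (Or.inr h')
  · exact absurd (Or.inl (h.neighborSet_y_subset hs.symm)) hwU.2

lemma exists_adj_sdiff (h : TwinHubs G I x y z u v T) (ha : a ∈ T) (haz : a ≠ z) :
    ∃ d ∈ I \ ({u, v} ∪ T), G.Adj a d := by
  have haI := h.mem_of_adj_x (h.adj_x ha)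
  obtain ⟨d, had : G.Adj a d, hd⟩ := Set.exists_mem_notMem_of_ncard_lt_ncard
    ((ncard_triple_le (p := x) (q := u) (r := v)).trans_lt (h.deg a haI haz))
  simp only [Set.mem_insert_iff, Set.mem_singleton_iff, not_or] at hd
  refine ⟨d, ⟨?_, ?_⟩, had⟩
  · refine (h.mem_of_adj had).resolve_right (not_or.2 ⟨hd.1, ?_⟩)
    rintro rfl
    exact (h.neighborSet_y_subset had.symm).elim (h.adj_u ha).ne' (h.adj_v ha).ne'
  · rintro ((h' | h') | hdT)
    · exact hd.2.1 h'
    · exact hd.2.2 h'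
    · exact false_of_triangle h.triangleFree (h.ne_x h.u_mem) (h.adj_x ha).ne' hd.1 (h.adj_u ha)
        had (h.adj_u hdT)

lemma componentIn_sdiff_not_subset (h : TwinHubs G I x y z u v T) (hd : d ∈ I \ ({u, v} ∪ T))
    (ha : a ∈ T) (had : G.Adj a d) :
    ∃ w ∈ componentIn G (I \ ({u, v} ∪ T)) d, w ≠ z := by
  by_contra! hz
  have hdA := GoodPaths.mem_componentIn_self (G := G) hd
  refine h.not_separatedBy_pair (D := componentIn G (I \ ({u, v} ∪ T)) d)
    (componentIn_subset.trans Set.sdiff_subset) ⟨d, hdA⟩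
    (fun h' => (componentIn_subset (h'.symm.subset h.u_mem)).2 (by simp)) a fun w hw s hs => ?_
  obtain rfl : w = d := (hz w hw).trans (hz d hdA).symm
  rcases h.separatedBy_componentIn_sdiff w w hdA s hs with h' | h' | h'
  · exact Or.inl h'
  · exact Or.inr (Or.inr (h.inter_subsingleton hd.1 (fun h' => hd.2 (by simp [h']))
      (fun h' => hd.2 (by simp [h'])) ⟨hs, h'⟩ ⟨had.symm, ha⟩))
  · exact Or.inr (Or.inl h')

lemma rooted_contract_sdiff (h : TwinHubs G I x y z u v T) (hd : d ∈ I \ ({u, v} ∪ T))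
    (ha : a ∈ T) (had : G.Adj a d) (hw : w ∈ componentIn G (I \ ({u, v} ∪ T)) d)
    (hxw : G.Adj x w) :
    Rooted 2 ∅ (contract G (componentIn G (I \ ({u, v} ∪ T)) d) T {x} x y)
      (componentIn G (I \ ({u, v} ∪ T)) d) x y z := by
  have hA {b : V} (hb : b ∈ componentIn G (I \ ({u, v} ∪ T)) d) := of_mem_componentIn_sdiff hb
  have hne := h.componentIn_sdiff_not_subset hd ha had
  have hsep := h.separatedBy_componentIn_sdiff d
  have hdA := GoodPaths.mem_componentIn_self (G := G) hd
  set A := componentIn G (I \ ({u, v} ∪ T)) d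
  have hxA : x ∉ A := fun h' => h.x_notMem (hA h').1
  have subset_of_sep {B S : Set V} (hB : B ⊆ A) (hBE : ¬ B ⊆ ∅) (hS : SeparatedBy G B (∅ ∪ S))
      (hSA : ∀ s ∈ S, s ∉ A) : A ⊆ B :=
    componentIn_subset_of_closed hB (Set.nonempty_iff_ne_empty.2 fun h' => hBE h'.subset)
      fun b hb s hs hbs => (hS b hb s hbs).resolve_right fun h' => hSA s (h'.resolve_left id) hs
  refine GoodPaths.rooted_contract (W := ∅) h.ne hxA (fun h' => h.y_notMem (hA h').1)
    (by rwa [Set.empty_union]) (fun b hb hbz => ?_) (fun B hB hBE r _ => ?_)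
    (fun B hB hBE hS => ?_) (fun B hB hBE hS => ?_) hne (by omega)
  · exact .of_subset (hsep b hb) ((Nat.le_succ 3).trans (h.deg b (hA hb).1 hbz))
      (h.inter_subsingleton (hA hb).1 (hA hb).2.1 (hA hb).2.2.1)
      (Set.subsingleton_singleton.anti Set.inter_subset_right)
  · rw [insert_empty_eq]
    exact h.not_separatedBy B (fun b hb => (hA (hB hb)).1) hBE r
  · have hwB := subset_of_sep hB hBE hS (fun t ht htA => (hA htA).2.2.2 ht) hw
    rcases hS w hwB x hxw.symm with h' | h' | h'
    · exact hxA (hB h')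
    · exact h'
    · exact (h.adj_x h').ne rfl
  · have hdB := subset_of_sep hB hBE hS (by simpa using hxA) hdA
    rcases hS d hdB a had.symm with h' | h' | h'
    · exact (hA (hB h')).2.2.2 ha
    · exact h'
    · exact (h.adj_x ha).ne' h'

lemma pathIn_of_pathIn_mem (h : TwinHubs G I x y z u v T) (hS : PathIn G S t x m) (ht : t ∈ T)
    (hST : ∀ s ∈ T, s ∈ S → s = t) (hu : u ∉ S) (hv : v ∉ S) (hy : y ∉ S) :
    PathIn G Set.univ x y (m + 2) ∧ PathIn G Set.univ x y (m + 4) := by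
  obtain ⟨s, hs, -, -, -, hst, -⟩ := h.exists_pair_ne t
  have hsS : s ∉ S := fun h' => hst (hST s hs h')
  have huv := h.u_ne_v
  have huy := h.adj_u_y
  have hvy := h.symm.adj_u_y
  have hut := h.adj_u ht
  have hus := h.adj_u hs
  have hvs := h.adj_v hs
  have hsy := h.ne_y_of_mem hs
  have hyutx := (hS.cons hut hu).cons huy.symm (by grind [SimpleGraph.Adj.ne])
  have husvtx := ((hS.cons (h.adj_v ht) hv).cons hvs.symm (by grind [SimpleGraph.Adj.ne])).cons hus
    (by grind [SimpleGraph.Adj.ne])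
  exact ⟨hyutx.symm.univ, (husvtx.cons huy.symm (by grind [SimpleGraph.Adj.ne])).symm.univ⟩

lemma not_adj_x_of_mem_componentIn_sdiff (h : TwinHubs G I x y z u v T)
    (hd : d ∈ I \ ({u, v} ∪ T)) (ha : a ∈ T) (had : G.Adj a d)
    (hw : w ∈ componentIn G (I \ ({u, v} ∪ T)) d) : ¬ G.Adj x w := by
  intro hxw
  have hA {b : V} (hb : b ∈ componentIn G (I \ ({u, v} ∪ T)) d) := of_mem_componentIn_sdiff hb
  have hr := h.rooted_contract_sdiff hd ha had hw hxw
  set A := componentIn G (I \ ({u, v} ∪ T)) d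
  refine h.not_good (((goodBelow_two _).link hr (Nat.lt_succ_self _)).two_to_three (c := 4)
    fun m hm => ?_)
  obtain ⟨t, ht, _, rfl, htx⟩ := hm.exists_pathIn
    (Set.disjoint_left.2 fun t ht htA => (hA htA).2.2.2 ht)
    (by simpa using fun h' => h.x_notMem (hA h').1) (by simpa using fun h' => (h.adj_x h').ne rfl)
  refine h.pathIn_of_pathIn_mem htx ht ?_ ?_ ?_ ?_
  · rintro s hs (rfl | rfl | hsA)
    · rfl
    · exact absurd rfl (h.adj_x hs).ne
    · exact absurd hs (hA hsA).2.2.2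
  · rintro (h' | h' | h')
    · exact (h.adj_u ht).ne h'
    · exact h.ne_x h.u_mem h'
    · exact (hA h').2.1 rfl
  · rintro (h' | h' | h')
    · exact (h.adj_v ht).ne h'
    · exact h.ne_x h.v_mem h'
    · exact (hA h').2.2.1 rfl
  · rintro (h' | h' | h')
    · exact h.ne_y_of_mem ht h'.symm
    · exact h.ne h'.symm
    · exact h.y_notMem (hA h').1

lemma pathIn_of_pathIn_insert (h : TwinHubs G I x y z u v T) (ha : a ∈ T) (hb : b ∈ T) (hxS : x ∉ S)
    (hyS : y ∉ S) (huS : u ∉ S) (hba : PathIn G (insert b (insert a S)) b a m) :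
    PathIn G Set.univ x y (m + 3) := by
  have hyb := (hba.cons (h.adj_u hb) (by simp [huS, (h.adj_u hb).ne, (h.adj_u ha).ne])).cons
    h.adj_u_y.symm (by
      simp [hyS, h.adj_u_y.ne', (h.ne_y_of_mem hb).symm, (h.ne_y_of_mem ha).symm])
  exact (hyb.symm.cons (h.adj_x ha) (by
    simp [hxS, h.ne, (h.ne_x h.u_mem).symm, (h.adj_x hb).ne, (h.adj_x ha).ne])).univ

protected lemma false (h : TwinHubs G I x y z u v T) : False := by
  obtain ⟨a, ha, -, -, -, haz, -⟩ := h.exists_pair_ne z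
  obtain ⟨d, hd, had⟩ := h.exists_adj_sdiff ha haz
  have hA {b : V} (hb : b ∈ componentIn G (I \ ({u, v} ∪ T)) d) := of_mem_componentIn_sdiff hb
  have hxA := fun w => h.not_adj_x_of_mem_componentIn_sdiff (w := w) hd ha had
  have hne := h.componentIn_sdiff_not_subset hd ha had
  have hsep := h.separatedBy_componentIn_sdiff d
  have hdA := GoodPaths.mem_componentIn_self (G := G) hd
  set A := componentIn G (I \ ({u, v} ∪ T)) d
  have hxnA : x ∉ A := fun h' => h.x_notMem (hA h').1
  have haA : a ∉ A := fun h' => (hA h').2.2.2 ha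
  have hg := h.link_of_subsingleton (D := A) (P := T \ {a}) (q := a) (fun w hw => (hA hw).1)
    (fun h' => (hA (h'.symm.subset h.u_mem)).2.1 rfl) (fun w hw s hs => ?_)
    (fun w hw => (h.inter_subsingleton (hA hw).1 (hA hw).2.1 (hA hw).2.2.1).anti
      (Set.inter_subset_inter_right _ Set.sdiff_subset)) (fun B hB hBne hS => ?_) hne
    fun _ => h.triangleFree.subset _
      (Set.subset_compl_singleton_iff.2 (by simp [(h.adj_x ha).ne, hxnA]))
  · have huA : u ∉ A := fun h' => (hA h').2.1 rfl
    have hyA : y ∉ A := fun h' => h.y_notMem (hA h').1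
    refine h.not_good (hg.shift (c := 5) fun m hm => ?_)
    obtain ⟨q, ⟨hq, hqa⟩, _, rfl, hqA⟩ := hm.exists_pathIn
      (Set.disjoint_left.2 fun t ht htA => (hA htA).2.2.2 ht.1) (by simpa using haA) (by simp)
    exact h.pathIn_of_pathIn_insert ha hq hxnA hyA huA hqA
  · rcases hsep w hw s hs with h' | h'
    · exact Or.inl h'
    · have hsx : s ≠ x := fun hsx => hxA w hw (hsx ▸ hs.symm)
      by_cases hsa : s = a <;> grind
  · have hAB : A ⊆ B := GoodPaths.componentIn_subset_of_closed hB hBne fun b hb s hs hbs =>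
      (hS b hb s hbs).resolve_right fun h' => (hA hs).2.2.2 h'.1
    rcases hS d (hAB hdA) a had.symm with h' | h'
    · exact haA (hB h')
    · exact h'.2 rfl

end TwinHubs

end TwinHubs

/-! ### Two common neighbours -/

section Hub

/-- A minimal counterexample with a vertex `u` whose set `T` of common neighbours with `x` has at
least two elements. -/
structure Hub (G : SimpleGraph V) (I : Set V) (x y z u : V) (T : Set V) : Prop
    extends MinCounterexample 3 G I x y z where
  triangleFree : G.CliqueFreeOn {x}ᶜ 3
  u_mem : u ∈ I
  mem_iff : ∀ t, t ∈ T ↔ G.Adj x t ∧ G.Adj u t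
  nontrivial : T.Nontrivial

/-- The component of `y` in `G - x - u - T`. -/
def hubComponent (G : SimpleGraph V) (I : Set V) (y u : V) (T : Set V) : Set V :=
  componentIn G ((I ∪ {y}) \ insert u T) y

/-- `A` is a set of vertices in the component of `y` in `G - x - u - T`, not containing `y`, which
only `x`, `u` and one further vertex `w` of that component separate from the rest of `G`. -/
structure IsCapped (G : SimpleGraph V) (I : Set V) (x y u : V) (T A : Set V) (w : V) : Prop where
  subset : A ⊆ hubComponent G I y u T \ {y}
  mem : w ∈ hubComponent G I y u T
  notMem : w ∉ A
  separatedBy : SeparatedBy G A {x, u, w}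

variable {G : SimpleGraph V} {I A S T : Set V} {b p q t u v w x y z : V} {n : ℕ}

lemma PathIn.fan (hS : PathIn G S p q n) (hx : x ∉ S) (hu : u ∉ S) (hb : b ∉ S) (hux : u ≠ x)
    (hxp : G.Adj x p) (hup : G.Adj u p) (hub : G.Adj u b) (hxb : G.Adj x b) :
    PathIn G Set.univ x q (n + 1) ∧ PathIn G Set.univ x q (n + 1 + 2) :=
  ⟨(hS.cons hxp hx).univ, (((hS.cons hup hu).cons hub.symm (by simp [hub.ne', hb])).cons hxb
    (by simp [hxb.ne, hux.symm, hx])).univ⟩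

namespace Hub

lemma adj_x (h : Hub G I x y z u T) (ht : t ∈ T) : G.Adj x t := ((h.mem_iff t).1 ht).1

lemma adj_u (h : Hub G I x y z u T) (ht : t ∈ T) : G.Adj u t := ((h.mem_iff t).1 ht).2

lemma subset (h : Hub G I x y z u T) : T ⊆ I := fun _ ht => h.mem_of_adj_x (h.adj_x ht)

lemma u_notMem (h : Hub G I x y z u T) : u ∉ T := fun h' => (h.adj_u h').ne rfl

lemma u_ne_x (h : Hub G I x y z u T) : u ≠ x := h.ne_x h.u_mem

lemma u_ne_y (h : Hub G I x y z u T) : u ≠ y := h.ne_y h.u_mem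

lemma ne_y_of_mem (h : Hub G I x y z u T) (ht : t ∈ T) : t ≠ y := h.ne_y (h.subset ht)

lemma not_adj_of_adj_u (h : Hub G I x y z u T) (huv : G.Adj u v) (hvx : v ≠ x) (ht : t ∈ T) :
    ¬ G.Adj v t := fun hvt =>
  false_of_triangle h.triangleFree h.u_ne_x hvx (h.adj_x ht).ne' huv hvt (h.adj_u ht)

lemma mem_hubComponent_self (h : Hub G I x y z u T) : y ∈ hubComponent G I y u T :=
  mem_componentIn_self ⟨Or.inr rfl, by
    simpa [h.u_ne_y.symm] using fun h' => h.ne_y_of_mem h' rfl⟩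

lemma of_mem_hubComponent (h : Hub G I x y z u T) (hv : v ∈ hubComponent G I y u T) :
    (v ∈ I ∨ v = y) ∧ v ≠ u ∧ v ∉ T ∧ v ≠ x := by
  obtain ⟨hvI, hvuT⟩ := componentIn_subset hv
  exact ⟨hvI, fun h' => hvuT (Or.inl h'), fun h' => hvuT (Or.inr h'), fun h' =>
    h.x_notMem_union (h' ▸ hvI)⟩

lemma separatedBy_hubComponent (h : Hub G I x y z u T) :
    SeparatedBy G (hubComponent G I y u T) ({x, u} ∪ T) := fun v hv b hb => by
  by_cases hbu : b ∈ insert u T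
  · exact Or.inr (hbu.imp Or.inr id)
  rcases h.mem_of_adj hb with h' | h' | h'
  · exact Or.inl (mem_componentIn_of_adj hv hb ⟨Or.inl h', hbu⟩)
  · exact Or.inr (Or.inl (Or.inl h'))
  · exact Or.inl (mem_componentIn_of_adj hv hb ⟨Or.inr h', hbu⟩)

lemma isCapped_empty (h : Hub G I x y z u T) : IsCapped G I x y u T ∅ y where
  subset := Set.empty_subset _
  mem := h.mem_hubComponent_self
  notMem := Set.notMem_empty y
  separatedBy := by simp [SeparatedBy]

lemma subset_of_isCapped (h : Hub G I x y z u T) (hA : IsCapped G I x y u T A w) : A ⊆ I :=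
  fun _ hv => (h.of_mem_hubComponent (hA.subset hv).1).1.resolve_right (hA.subset hv).2

variable [Finite V]

lemma exempt_mem_of_isCapped (h : Hub G I x y z u T) (hA : IsCapped G I x y u T A w)
    (hne : A.Nonempty) : z ∈ A := by
  have hw := h.of_mem_hubComponent hA.mem
  have hsub {v : V} (hv : v ∈ A) := h.of_mem_hubComponent (hA.subset hv).1
  obtain ⟨t, ht⟩ := h.nontrivial.nonempty
  by_contra hz
  refine h.not_separatedBy_triple (h.subset_of_isCapped hA) hne hz (fun h' => (hsub h').2.1 rfl)
    hA.notMem h.u_mem hw.2.2.2 hw.2.1 (fun hI => ?_) hA.separatedBy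
  rcases hI.symm.subset (h.subset ht) with rfl | htA
  · exact h.u_notMem ht
  · exact (hsub htA).2.2.1 ht

lemma exists_sdiff_singleton (h : Hub G I x y z u T) (hv : v ∈ I) (hvu : v ≠ u) (hvT : v ∉ T) :
    ∃ w, x ∉ G.neighborSet v \ {w} ∧ u ∉ G.neighborSet v \ {w} ∧
      ((G.neighborSet v \ {w}) ∩ T).Subsingleton := by
  by_cases hxv : G.Adj x v
  · refine ⟨x, by simp, fun h' => hvT ((h.mem_iff v).2 ⟨hxv, h'.1.symm⟩), ?_⟩
    rintro a ⟨⟨hva, -⟩, ha⟩ b ⟨⟨hvb, -⟩, hb⟩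
    exact h.eq_of_common_neighbors h.u_mem hvu.symm hxv (h.adj_x ha) (h.adj_x hb) (h.adj_u ha)
      (h.adj_u hb) hva hvb
  by_cases huv : G.Adj u v
  · refine ⟨u, fun h' => hxv h'.1.symm, by simp, ?_⟩
    rintro a ⟨⟨hva, -⟩, ha⟩
    exact absurd hva (h.not_adj_of_adj_u huv (h.ne_x hv) ha)
  by_contra! hT
  obtain ⟨c, ⟨⟨hvc, -⟩, hc⟩, -⟩ := hT x (by simp) fun h' => huv h'.1.symm
  obtain ⟨a, ⟨⟨hva, hac⟩, ha⟩, b, ⟨⟨hvb, hbc⟩, hb⟩, hab⟩ :=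
    hT c (fun h' => hxv h'.1.symm) fun h' => huv h'.1.symm
  have hsub : {a, b, c} ⊆ {t | G.Adj x t ∧ G.Adj u t ∧ G.Adj v t} := by
    rintro t (rfl | rfl | rfl)
    exacts [⟨h.adj_x ha, h.adj_u ha, hva⟩, ⟨h.adj_x hb, h.adj_u hb, hvb⟩,
      ⟨h.adj_x hc, h.adj_u hc, hvc⟩]
  exact TwinHubs.false (T := {t | G.Adj x t ∧ G.Adj u t ∧ G.Adj v t})
    ⟨h.toMinCounterexample, h.triangleFree, h.u_mem, hv, hvu.symm, fun _ => Iff.rfl,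
      (Set.ncard_eq_three.2 ⟨a, b, c, hab, hac, hbc, rfl⟩).symm.le.trans (Set.ncard_le_ncard hsub)⟩

end Hub
end Hub

section HubCover

/-- A capped set which together with its cap `w` contains the exempt vertex `z` and every vertex
other than `y` of the component of `y` in `G - x - u - T`. -/
structure IsCover (G : SimpleGraph V) (I : Set V) (x y z u : V) (T A : Set V) (w : V) : Prop
    extends IsCapped G I x y u T A w where
  nonempty : (hubComponent G I y u T \ {y}).Nonempty
  exempt_mem : z ∈ insert w A
  subset_insert : hubComponent G I y u T \ {y} ⊆ insert w A

variable {G : SimpleGraph V} {I A B D S T : Set V} {e r u v w x y z : V}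

lemma SeparatedBy.absorb (hD : SeparatedBy G D (A ∪ S)) (hA : SeparatedBy G A (insert w S))
    (hDA : Disjoint D A) (hDS : Disjoint D S) :
    SeparatedBy G D S ∨ SeparatedBy G (D ∪ A) S := by
  by_cases hw : w ∈ D
  · right
    rintro a (ha | ha) b hab
    · exact (hD a ha b hab).elim (fun h' => Or.inl (Or.inl h')) (Or.imp_left Or.inr)
    · rcases hA a ha b hab with h' | rfl | h'
      exacts [Or.inl (Or.inr h'), Or.inl (Or.inl hw), Or.inr h']
  · refine Or.inl fun a ha b hab => (hD a ha b hab).imp_right fun h' => h'.resolve_left fun hb => ?_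
    rcases hA b hb a hab.symm with h' | rfl | h'
    exacts [Set.disjoint_left.1 hDA ha h', hw ha, Set.disjoint_left.1 hDS ha h']

namespace Hub

lemma disjoint_hubComponent (h : Hub G I x y z u T) :
    Disjoint (hubComponent G I y u T) ({x, u} ∪ T) := by
  refine Set.disjoint_left.2 fun v hv => ?_
  have := h.of_mem_hubComponent hv
  simp [this]

lemma not_separatedBy_union_of_isCapped (h : Hub G I x y z u T) (hA : IsCapped G I x y u T A w)
    (hD : D ⊆ (hubComponent G I y u T \ {y}) \ A) (hne : D.Nonempty) :
    ¬ SeparatedBy G D (A ∪ ({x, u} ∪ T)) := fun hS => by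
  have hDY : D ⊆ hubComponent G I y u T \ {y} := hD.trans Set.sdiff_subset
  have hy : y ∉ ({x, u} ∪ T : Set V) :=
    Set.disjoint_left.1 h.disjoint_hubComponent h.mem_hubComponent_self
  have key : ∀ B ⊆ hubComponent G I y u T \ {y}, B.Nonempty → ¬ SeparatedBy G B ({x, u} ∪ T) := by
    intro B hB hBne hS
    obtain ⟨a, ha, hay⟩ := exists_adj_of_closed_in_componentIn hB hBne fun a ha b hb hab =>
      (hS a ha b hab).resolve_right (Set.disjoint_left.1 h.disjoint_hubComponent hb.1)
    exact (hS a ha y hay).elim (fun h' => (hB h').2 rfl) hy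
  have hAS : SeparatedBy G A (insert w ({x, u} ∪ T)) := fun a ha b hab => by
    have := hA.separatedBy a ha b hab
    grind
  exact (hS.absorb hAS (Set.disjoint_left.2 fun v hv => (hD hv).2)
    (h.disjoint_hubComponent.mono_left (hDY.trans Set.sdiff_subset))).elim (key D hDY hne)
    (key _ (Set.union_subset hDY hA.subset) (hne.mono Set.subset_union_left))

variable [Finite V]

lemma not_separatedBy_insert_of_maximal (h : Hub G I x y z u T) (hA : IsCapped G I x y u T A w)
    (hmax : ∀ B v, IsCapped G I x y u T B v → A ⊆ B → B ⊆ A)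
    (hD : D ⊆ (hubComponent G I y u T \ {y}) \ A) (hne : D.Nonempty)
    (hr : r ∈ hubComponent G I y u T) (hrA : r ∉ A) :
    ¬ SeparatedBy G D (insert r (A ∪ {x, u})) := by
  have hDY : D ⊆ hubComponent G I y u T \ {y} := hD.trans Set.sdiff_subset
  wlog hrD : r ∉ D generalizing r
  · refine fun hS => this h.mem_hubComponent_self (fun h' => (hA.subset h').2 rfl)
      (fun h' => (hDY h').2 rfl) fun a ha b hab => ?_
    rcases hS a ha b hab with h' | rfl | h'
    exacts [Or.inl h', Or.inl (not_not.1 hrD), Or.inr (Or.inr h')]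
  intro hS
  obtain ⟨d, hd⟩ := hne
  have hnc : ∀ B, A ⊆ B → D ⊆ B → ¬ IsCapped G I x y u T B r := fun B hAB hDB hB =>
    (hD hd).2 (hmax B r hB hAB (hDB hd))
  have hDS : SeparatedBy G D (A ∪ {x, u, r}) := fun a ha b hab => by
    have := hS a ha b hab
    grind
  have hAS : SeparatedBy G A (insert w {x, u, r}) := fun a ha b hab => by
    have := hA.separatedBy a ha b hab
    grind
  have hdisj : Disjoint D {x, u, r} := Set.disjoint_left.2 fun v hv => by
    have := h.of_mem_hubComponent (hDY hv).1
    grind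
  rcases hDS.absorb hAS (Set.disjoint_left.2 fun v hv => (hD hv).2) hdisj with h' | h'
  · have hDr : IsCapped G I x y u T D r := ⟨hDY, hr, hrD, h'⟩
    have hzD := h.exempt_mem_of_isCapped hDr ⟨d, hd⟩
    obtain rfl : A = ∅ := Set.not_nonempty_iff_eq_empty.1 fun hne =>
      (hD hzD).2 (h.exempt_mem_of_isCapped hA hne)
    exact hnc D (Set.empty_subset _) subset_rfl hDr
  · exact hnc _ Set.subset_union_right Set.subset_union_left
      ⟨Set.union_subset hDY hA.subset, hr, fun h' => h'.elim hrD hrA, h'⟩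

lemma rooted_contract_of_maximal (h : Hub G I x y z u T) (hA : IsCapped G I x y u T A w)
    (hmax : ∀ B v, IsCapped G I x y u T B v → A ⊆ B → B ⊆ A)
    (he : A = ∅ ∧ e = z ∨ z ∈ A ∧ e = w)
    (hne : ∃ v ∈ (hubComponent G I y u T \ {y}) \ A, v ≠ e) :
    Rooted 2 ∅ (contract G ((hubComponent G I y u T \ {y}) \ A) T {y} x y)
      ((hubComponent G I y u T \ {y}) \ A) x y e := by
  have hY {v : V} (hv : v ∈ hubComponent G I y u T) := h.of_mem_hubComponent hv
  have hYN := h.separatedBy_hubComponent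
  have hAN := hA.separatedBy
  have hyY := h.mem_hubComponent_self
  have hyA : y ∉ A := fun h' => (hA.subset h').2 rfl
  have hnonempty {B : Set V} (hB : ¬ B ⊆ ∅) : B.Nonempty :=
    (Set.nonempty_of_not_subset hB).mono Set.sdiff_subset
  refine rooted_contract (W := A ∪ {x, u}) h.ne (fun h' => (hY h'.1.1).2.2.2 rfl)
    (fun h' => h'.1.2 rfl) (fun v hv b hb => ?_) (fun v hv hve => ?_) (fun B hB hBne r hr => ?_)
    (fun B hB hBne => ?_) (fun B hB hBne => ?_) hne (by omega)
  · have := hYN v hv.1.1 b hb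
    grind
  · obtain ⟨a, hxa, hua, haT⟩ := h.exists_sdiff_singleton ((hY hv.1.1).1.resolve_right hv.1.2)
      (hY hv.1.1).2.1 (hY hv.1.1).2.2.1
    refine .of_sdiff_singleton (fun b hb => ?_) (h.deg v ((hY hv.1.1).1.resolve_right hv.1.2) ?_)
      haT fun b hb c hc => hb.2.trans hc.2.symm
    · have hbA : b ∉ A := fun hbA => by
        have := hAN b hbA v hb.1.symm
        have := hY hv.1.1
        grind
      have := hYN v hv.1.1 b hb.1
      grind
    · grind
  · exact h.not_separatedBy_insert_of_maximal hA hmax hB (hnonempty hBne)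
      hr.1.1 hr.2
  · rw [Set.union_assoc]
    exact h.not_separatedBy_union_of_isCapped hA hB (hnonempty hBne)
  · rw [Set.union_singleton]
    exact h.not_separatedBy_insert_of_maximal hA hmax hB (hnonempty hBne) hyY hyA

lemma subset_singleton_of_maximal (h : Hub G I x y z u T) (hA : IsCapped G I x y u T A w)
    (hmax : ∀ B v, IsCapped G I x y u T B v → A ⊆ B → B ⊆ A)
    (he : A = ∅ ∧ e = z ∨ z ∈ A ∧ e = w) : (hubComponent G I y u T \ {y}) \ A ⊆ {e} := by
  by_contra hne
  have hr := h.rooted_contract_of_maximal hA hmax he (Set.not_subset.1 hne)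
  have hY {v : V} (hv : v ∈ (hubComponent G I y u T \ {y}) \ A) := h.of_mem_hubComponent hv.1.1
  have hTy : Disjoint T {y} := by simpa using fun h' => h.ne_y_of_mem h' rfl
  refine h.not_good (((goodBelow_two _).link hr (Nat.lt_succ_self _)).two_to_three (c := 3)
    fun m hm => ?_)
  obtain ⟨p, hp, q, rfl, hpq⟩ := hm.exists_pathIn
    (Set.disjoint_left.2 fun t ht htC => (hY htC).2.2.1 ht) (by simp) hTy
  obtain ⟨b, hb, hbp⟩ := h.nontrivial.exists_ne p
  refine hpq.fan ?_ ?_ ?_ h.u_ne_x (h.adj_x hp) (h.adj_u hp) (h.adj_u hb) (h.adj_x hb)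
  · have := h.adj_x hp
    have := h.ne
    grind [SimpleGraph.Adj.ne]
  · have := h.adj_u hp
    have := h.u_ne_y
    grind [SimpleGraph.Adj.ne]
  · have := h.ne_y_of_mem hb
    grind

lemma exists_cover (h : Hub G I x y z u T) (hY : (hubComponent G I y u T \ {y}).Nonempty) :
    ∃ A w, IsCover G I x y z u T A w := by
  obtain ⟨A, ⟨w, hA⟩, hmax⟩ := Set.Finite.exists_maximal
    (Set.toFinite {A : Set V | ∃ w, IsCapped G I x y u T A w}) ⟨∅, y, h.isCapped_empty⟩
  have hmax' : ∀ B v, IsCapped G I x y u T B v → A ⊆ B → B ⊆ A := fun B v hB => hmax ⟨v, hB⟩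
  rcases A.eq_empty_or_nonempty with rfl | hne
  · have hsub := h.subset_singleton_of_maximal hA hmax' (Or.inl ⟨rfl, rfl⟩)
    rw [Set.sdiff_empty] at hsub
    refine ⟨∅, z, ⟨Set.empty_subset _, ?_, Set.notMem_empty z, by simp [SeparatedBy]⟩, hY,
      Set.mem_insert z ∅, by simpa using hsub⟩
    obtain ⟨v, hv⟩ := hY
    exact hsub hv ▸ hv.1
  · have hzA := h.exempt_mem_of_isCapped hA hne
    exact ⟨A, w, hA, hY, Or.inr hzA, Set.sdiff_subset_iff.1
      (h.subset_singleton_of_maximal hA hmax' (Or.inr ⟨hzA, rfl⟩)) |>.trans (by simp)⟩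

end Hub

end HubCover

section HubCoverFalse

variable {G : SimpleGraph V} {I A T : Set V} {b q u w x y z : V}

namespace Hub

lemma subset_sdiff (h : Hub G I x y z u T) (hC : IsCover G I x y z u T A w) :
    T ⊆ I \ insert u (insert w A) := by
  refine fun t ht => ⟨h.subset ht, ?_⟩
  rintro (rfl | rfl | htA)
  · exact h.u_notMem ht
  · exact (h.of_mem_hubComponent hC.mem).2.2.1 ht
  · exact (h.of_mem_hubComponent (hC.subset htA).1).2.2.1 ht

lemma separatedBy_sdiff (h : Hub G I x y z u T) (hC : IsCover G I x y z u T A w) :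
    SeparatedBy G (I \ insert u (insert w A)) {x, u, y, w} := fun v hv b hb => by
  have hx := h.x_notMem
  have hbA : b ∉ A := fun hbA => by
    have := hC.separatedBy b hbA v hb.symm
    grind
  have := h.mem_of_adj hb
  grind

lemma not_separatedBy_sdiff [Finite V] (h : Hub G I x y z u T) (hC : IsCover G I x y z u T A w)
    (hq : q = y ∨ q = w) : ¬ SeparatedBy G (I \ insert u (insert w A)) {x, u, q} := by
  obtain ⟨v, hv⟩ := hC.nonempty
  have hvY := h.of_mem_hubComponent hv.1
  have hvA := hC.subset_insert hv
  have hw := h.of_mem_hubComponent hC.mem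
  have hxy := h.ne
  have huy := h.u_ne_y
  have hy := h.y_notMem
  refine h.not_separatedBy_triple Set.sdiff_subset (h.nontrivial.nonempty.mono (h.subset_sdiff hC))
    (fun h' => h'.2 (Or.inr hC.exempt_mem)) (by simp) (by grind) h.u_mem (by grind) (by grind)
    fun hI => ?_
  have := hI.symm.subset (hvY.1.resolve_right hv.2)
  grind

variable [Finite V]

lemma cap_ne_y (h : Hub G I x y z u T) (hC : IsCover G I x y z u T A w) : w ≠ y := by
  rintro rfl
  exact h.not_separatedBy_sdiff hC (Or.inl rfl) fun v hv b hb => by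
    have := h.separatedBy_sdiff hC v hv b hb
    grind

lemma of_adj_y (h : Hub G I x y z u T) (hC : IsCover G I x y z u T A w) (hb : G.Adj y b) :
    b = w ∨ b = u ∨ b ∈ T := by
  rcases h.separatedBy_hubComponent y h.mem_hubComponent_self b hb with hbY | (rfl | h') | h'
  · rcases hC.subset_insert ⟨hbY, hb.ne'⟩ with h' | hbA
    · exact Or.inl h'
    · rcases hC.separatedBy b hbA y hb.symm with h' | rfl | rfl | rfl
      exacts [absurd rfl (hC.subset h').2, absurd rfl h.ne, absurd rfl h.u_ne_y,
        absurd rfl (h.cap_ne_y hC)]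
  exacts [absurd hb.symm h.not_adj, Or.inr (Or.inl h'), Or.inr (Or.inr h')]

lemma not_adj_y_of_isCover (h : Hub G I x y z u T) (hC : IsCover G I x y z u T A w) :
    ¬ G.Adj u y := by
  intro huy
  refine h.not_separatedBy_sdiff hC (Or.inr rfl) fun v hv b hb => ?_
  rcases h.separatedBy_sdiff hC v hv b hb with h' | rfl | rfl | rfl | rfl
  any_goals grind
  rcases h.of_adj_y hC hb.symm with rfl | rfl | hvT
  exacts [absurd (by simp) hv.2, absurd (by simp) hv.2,
    absurd hb.symm (h.not_adj_of_adj_u huy h.ne.symm hvT)]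

lemma exists_mem_adj_cap (h : Hub G I x y z u T) (hC : IsCover G I x y z u T A w) :
    ∃ t ∈ T, G.Adj t w := by
  by_contra! hw
  refine h.not_separatedBy_sdiff hC (Or.inl rfl) fun v hv b hb => ?_
  rcases h.separatedBy_sdiff hC v hv b hb with h' | rfl | rfl | rfl | rfl
  any_goals grind
  rcases h.separatedBy_hubComponent b hC.mem v hb.symm with hvY | (rfl | rfl) | hvT
  · have := @hC.subset_insert v
    have := h.y_notMem
    grind
  exacts [absurd hv.1 h.x_notMem, absurd (Or.inl rfl) hv.2, absurd hb (hw v hvT)]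

lemma cap_adj_y (h : Hub G I x y z u T) (hC : IsCover G I x y z u T A w) : G.Adj w y := by
  obtain ⟨a, ha, hay⟩ := exists_adj_of_closed_in_componentIn subset_rfl hC.nonempty
    fun _ _ b hb _ => hb
  have haY := h.of_mem_hubComponent ha.1
  obtain rfl | h' | h' := h.of_adj_y hC hay.symm
  exacts [hay, absurd h' haY.2.1, absurd h' haY.2.2.1]

lemma false_of_isCover (h : Hub G I x y z u T) (hC : IsCover G I x y z u T A w) : False := by
  have hwy := h.cap_adj_y hC
  have hw := h.of_mem_hubComponent hC.mem
  obtain ⟨c, hc, hcw⟩ := h.exists_mem_adj_cap hC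
  obtain ⟨a, hya, haw⟩ := h.toMinCounterexample.symm.exists_adj_x_ne w
  have ha : a ∈ T := ((h.of_adj_y hC hya).resolve_left haw).resolve_left fun hau =>
    h.not_adj_y_of_isCover hC (hau ▸ hya.symm)
  have hac : a ≠ c := by
    rintro rfl
    exact false_of_triangle h.triangleFree (h.adj_x ha).ne' hw.2.2.2 h.ne.symm hcw hwy hya.symm
  have hxy := h.ne
  have hux := h.u_ne_x
  have huy := h.u_ne_y
  have hxa := h.adj_x ha
  have hxc := h.adj_x hc
  have hua := h.adj_u ha
  have huc := h.adj_u hc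
  have hcy := h.ne_y_of_mem hc
  have hwx := hw.2.2.2
  have hwu := hw.2.1
  have hcuaxwy := ((pathIn_three huc hcw hwy huy hwu.symm hcy).cons hua.symm
    (by simp [hua.ne', hac, haw, hya.ne'])).cons hxa
    (by simp [hxa.ne, hux.symm, hxc.ne, hwx.symm, hxy])
  exact h.false_of_pathIn_three hcuaxwy.univ (pathIn_three hxc hcw hwy hxy hwx.symm hcy)
    (pathIn_two hxa hya.symm hxy) (by omega)

lemma hubComponent_subset (h : Hub G I x y z u T) : hubComponent G I y u T ⊆ {y} := by
  by_contra hY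
  obtain ⟨A, w, hC⟩ := h.exists_cover (Set.nonempty_of_not_subset hY)
  exact h.false_of_isCover hC

end Hub

end HubCoverFalse

section FarSide

/-- The component of `x` in `G - u - y` minus the neighbours of `y`, without `x` itself. -/
def farSide (G : SimpleGraph V) (I : Set V) (x y u : V) : Set V :=
  componentIn G ((I ∪ {x}) \ insert u (G.neighborSet y)) x \ {x}

variable {G : SimpleGraph V} {I A T : Set V} {a b q t u v w x y z : V}

namespace Hub

lemma not_adj_y_x (h : Hub G I x y z u T) : ¬ G.Adj y x := fun h' => h.not_adj h'.symm

lemma of_mem_farSide (h : Hub G I x y z u T) (hv : v ∈ farSide G I x y u) :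
    v ∈ I ∧ v ≠ x ∧ v ≠ u ∧ v ≠ y ∧ ¬ G.Adj y v := by
  obtain ⟨hvI, hvu⟩ := componentIn_subset hv.1
  have hvI := hvI.resolve_right hv.2
  exact ⟨hvI, hv.2, fun h' => hvu (Or.inl h'), h.ne_y hvI, fun h' => hvu (Or.inr h')⟩

lemma mem_farSide (h : Hub G I x y z u T) (hxb : G.Adj x b) (hbu : b ≠ u) (hyb : ¬ G.Adj y b) :
    b ∈ farSide G I x y u :=
  ⟨mem_componentIn_of_adj (mem_componentIn_self ⟨Or.inr rfl, by
    simp [h.u_ne_x.symm, h.not_adj_y_x]⟩) hxb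
    ⟨Or.inl (h.mem_of_adj_x hxb), by simp [hbu, hyb]⟩, hxb.ne'⟩

lemma separatedBy_farSide (h : Hub G I x y z u T) :
    SeparatedBy G (farSide G I x y u) ({u} ∪ ({x} ∪ G.neighborSet y)) := fun v hv b hb => by
  have hvy : b ≠ y := fun h' => (h.of_mem_farSide hv).2.2.2.2 (h' ▸ hb).symm
  by_cases hbU : b ∈ insert u (G.neighborSet y)
  · exact Or.inr (hbU.imp_right Or.inr)
  by_cases hbx : b = x
  · exact Or.inr (Or.inr (Or.inl hbx))
  exact Or.inl ⟨mem_componentIn_of_adj hv.1 hb ⟨Or.inl (((h.mem_of_adj hb).resolve_right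
    fun h' => h'.elim hbx hvy)), hbU⟩, hbx⟩

lemma exists_farSide_adj_x (hne : A.Nonempty) (hA : A ⊆ farSide G I x y u)
    (hcl : SeparatedBy G A ((farSide G I x y u)ᶜ)) : ∃ a ∈ A, G.Adj x a := by
  obtain ⟨a, ha, hax⟩ := exists_adj_of_closed_in_componentIn hA hne fun a ha b hb hab =>
    (hcl a ha b hab).resolve_right fun h' => h' hb
  exact ⟨a, ha, hax.symm⟩

lemma farSide_ne (h : Hub G I x y z u T) (hA : A ⊆ farSide G I x y u) : A ≠ I := fun h' =>
  (h.of_mem_farSide (hA (h' ▸ h.u_mem))).2.2.1 rfl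

variable [Finite V]

lemma mem_of_adj_y (h : Hub G I x y z u T) (hb : G.Adj y b) : b ∈ T := by
  have mem_or_eq {b : V} (hb : G.Adj y b) : b ∈ T ∨ b = u := by
    rcases h.separatedBy_hubComponent y h.mem_hubComponent_self b hb with h' | (rfl | h') | h'
    exacts [absurd (h.hubComponent_subset h') hb.ne', absurd hb.symm h.not_adj, Or.inr h',
      Or.inl h']
  obtain hbT | rfl := mem_or_eq hb
  · exact hbT
  · obtain ⟨c, hc, hcb⟩ := h.toMinCounterexample.symm.exists_adj_x_ne b
    exact absurd hc
      (h.not_adj_of_adj_u hb.symm h.ne.symm ((mem_or_eq hc).resolve_right hcb))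

lemma not_adj_y_u (h : Hub G I x y z u T) : ¬ G.Adj y u := fun h' => h.u_notMem (h.mem_of_adj_y h')

lemma not_adj_u_of_adj_neighborSet (h : Hub G I x y z u T) (hvx : v ≠ x) (hq : G.Adj y q)
    (hvq : G.Adj v q) : ¬ G.Adj u v := fun huv =>
  h.not_adj_of_adj_u huv hvx (h.mem_of_adj_y hq) hvq

lemma eq_of_adj_x_of_adj_y (h : Hub G I x y z u T) (hvu : v ≠ u) (hxv : G.Adj x v)
    (hya : G.Adj y a) (hyb : G.Adj y b) (hva : G.Adj v a) (hvb : G.Adj v b) : a = b :=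
  h.eq_of_common_neighbors h.u_mem hvu.symm hxv (h.adj_x (h.mem_of_adj_y hya))
    (h.adj_x (h.mem_of_adj_y hyb)) (h.adj_u (h.mem_of_adj_y hya)) (h.adj_u (h.mem_of_adj_y hyb))
    hva hvb

lemma not_farSide_subset_singleton (h : Hub G I x y z u T) (hne : (farSide G I x y u).Nonempty) :
    ¬ farSide G I x y u ⊆ {z} := fun hCz => by
  obtain ⟨b, hb, hxb⟩ := exists_farSide_adj_x hne subset_rfl fun v _ b _ => em _
  obtain rfl := hCz hb
  have hbC := h.of_mem_farSide hb
  have hN {c : V} (hc : G.Adj b c) : c = u ∨ c = x ∨ G.Adj y c :=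
    (h.separatedBy_farSide b hb c hc).resolve_left fun h' => hc.ne' (hCz h')
  obtain ⟨p, hp⟩ : ∃ p, SeparatedBy G {b} {x, p} := by
    by_cases hq : ∃ q, G.Adj y q ∧ G.Adj b q
    · obtain ⟨q, hyq, hbq⟩ := hq
      refine ⟨q, ?_⟩
      rintro _ rfl c hc
      rcases hN hc with rfl | h' | hyc
      · exact absurd hc.symm (h.not_adj_u_of_adj_neighborSet hbC.2.1 hyq hbq)
      · exact Or.inr (Or.inl h')
      · exact Or.inr (Or.inr (h.eq_of_adj_x_of_adj_y hbC.2.2.1 hxb hyc hyq hc hbq))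
    · refine ⟨u, ?_⟩
      rintro _ rfl c hc
      rcases hN hc with h' | h' | hyc
      exacts [Or.inr (Or.inr h'), Or.inr (Or.inl h'), absurd ⟨c, hyc, hc⟩ hq]
  exact h.not_separatedBy_pair (Set.singleton_subset_iff.2 hbC.1) (Set.singleton_nonempty b)
    (h.farSide_ne (Set.singleton_subset_iff.2 hb)) p hp

lemma exists_sdiff_singleton_neighborSet (h : Hub G I x y z u T) (hv : v ∈ farSide G I x y u) :
    ∃ w, u ∉ G.neighborSet v \ {w} ∧
      ((G.neighborSet v \ {w}) ∩ G.neighborSet y).Subsingleton := by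
  have hvC := h.of_mem_farSide hv
  by_cases hvT : v ∈ T
  · exact ⟨u, by simp, fun q hq => absurd (h.adj_u hvT)
      (h.not_adj_u_of_adj_neighborSet hvC.2.1 hq.2 hq.1.1)⟩
  · obtain ⟨w, -, huw, hw⟩ := h.exists_sdiff_singleton hvC.1 hvC.2.2.1 hvT
    exact ⟨w, huw, hw.anti (Set.inter_subset_inter_right _ fun _ => h.mem_of_adj_y)⟩

lemma rooted_contract_farSide (h : Hub G I x y z u T) (hne : (farSide G I x y u).Nonempty) :
    Rooted 2 {z} (contract G (farSide G I x y u) {x} (G.neighborSet y) x y) (farSide G I x y u)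
      x y z := by
  have hC {v : V} (hv : v ∈ farSide G I x y u) := h.of_mem_farSide hv
  refine rooted_contract (W := {u}) h.ne (fun h' => (hC h').2.1 rfl) (fun h' => (hC h').2.2.2.1 rfl)
    h.separatedBy_farSide (fun v hv hvz => ?_) (fun A hA hAz r _ hS => ?_) (fun A hA hAz hS => ?_)
    (fun A hA hAz hS => ?_) (Set.not_subset.1 (h.not_farSide_subset_singleton hne)) (by omega)
  · obtain ⟨w, huw, hw⟩ := h.exists_sdiff_singleton_neighborSet hv
    refine .of_sdiff_singleton (fun b hb => ?_) (h.deg v (hC hv).1 hvz)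
      (fun a ha b hb => ha.2.trans hb.2.symm) hw
    exact (h.separatedBy_farSide v hv b hb.1).imp_right
      fun h' => h'.resolve_left fun hbu => huw (hbu ▸ hb)
  · exact h.not_separatedBy_of_exists_ne (fun v hv => (hC (hA hv)).1) (Set.not_subset.1 hAz)
      (h.farSide_ne hA) hS
  · exact h.not_separatedBy_of_exists_ne (fun v hv => (hC (hA hv)).1) (Set.not_subset.1 hAz)
      (h.farSide_ne hA) hS
  · obtain ⟨a, ha, hxa⟩ := exists_farSide_adj_x
      ((Set.nonempty_of_not_subset hAz).mono Set.sdiff_subset) hA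
      fun a ha b hab => (hS a ha b hab).imp_right fun h' hb =>
        h'.elim (hC hb).2.2.1 (hC hb).2.2.2.2
    rcases hS a ha x hxa.symm with h' | h' | h'
    exacts [(hC (hA h')).2.1 rfl, h.u_ne_x h'.symm, h.not_adj_y_x h']

lemma adj_y_of_adj_x (h : Hub G I x y z u T) (hxb : G.Adj x b) : b = u ∨ G.Adj y b := by
  by_contra! hb
  have hC {v : V} (hv : v ∈ farSide G I x y u) := h.of_mem_farSide hv
  have hr := h.rooted_contract_farSide ⟨b, h.mem_farSide hxb hb.1 hb.2⟩
  have hg := (goodBelow_two _).link_of_pendant le_rfl hr (Nat.lt_succ_self _) ?_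
  · refine h.not_good (hg.two_to_three (c := 3) fun m hm => ?_)
    obtain ⟨p, rfl, q, hq, hpq⟩ := hm.exists_pathIn
      (by simpa using fun h' => (hC h').2.1 rfl)
      (Set.disjoint_left.2 fun q hq hqC => (hC hqC).2.2.2.2 hq)
      (by simpa using h.not_adj_y_x)
    obtain ⟨b, hb, hbq⟩ := h.toMinCounterexample.symm.exists_adj_x_ne q
    have hqT := h.mem_of_adj_y hq
    have hbT := h.mem_of_adj_y hb
    have hyC : y ∉ farSide G I p y u := fun h' => (hC h').2.2.2.1 rfl
    have huC : u ∉ farSide G I p y u := fun h' => (hC h').2.2.1 rfl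
    have hbC : b ∉ farSide G I p y u := fun h' => (hC h').2.2.2.2 hb
    rw [Set.insert_comm] at hpq
    have := hpq.symm.fan (by simp [hq.ne, h.ne.symm, hyC])
      (by simp [(h.adj_u hqT).ne, h.u_ne_x, huC]) (by simp [hbq, (h.adj_x hbT).ne', hbC]) h.u_ne_y
      hq (h.adj_u hqT) (h.adj_u hbT) hb
    exact ⟨this.1.symm, this.2.symm⟩
  · rintro - v hv hvz hCv ⟨p, rfl, hxv⟩ ⟨q, hq, hqv⟩
    obtain ⟨d, hvd, hd⟩ := Set.exists_mem_notMem_of_ncard_lt_ncard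
      (ncard_triple_le.trans_lt (h.deg v (hC hv).1 hvz) : ({z, p, q} : Set V).ncard < _)
    rcases h.separatedBy_farSide v hv d hvd with h' | rfl | rfl | hyd
    · rcases hCv h' with rfl | rfl
      exacts [hd (Or.inl rfl), SimpleGraph.Adj.ne hvd rfl]
    · exact h.not_adj_u_of_adj_neighborSet (hC hv).2.1 hq hqv.symm hvd.symm
    · exact hd (Or.inr (Or.inl rfl))
    · exact hd (Or.inr (Or.inr (h.eq_of_adj_x_of_adj_y (hC hv).2.2.1 hxv hyd hq hvd hqv.symm)))

lemma adj_y (h : Hub G I x y z u T) (ht : t ∈ T) : G.Adj y t :=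
  (h.adj_y_of_adj_x (h.adj_x ht)).resolve_left fun h' => h.u_notMem (h' ▸ ht)

end Hub

end FarSide

section Petal

/-- The component of `d` in `G - x - y - u - T`. -/
def petal (G : SimpleGraph V) (I : Set V) (u : V) (T : Set V) (d : V) : Set V :=
  componentIn G (I \ insert u T) d

variable {G : SimpleGraph V} {I A T : Set V} {a d u v w x y z : V}

namespace Hub

lemma of_mem_petal (h : Hub G I x y z u T) (hv : v ∈ petal G I u T d) :
    v ∈ I ∧ v ≠ u ∧ v ∉ T ∧ v ≠ x ∧ v ≠ y := by
  obtain ⟨hvI, hvT⟩ := componentIn_subset hv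
  exact ⟨hvI, fun h' => hvT (Or.inl h'), fun h' => hvT (Or.inr h'), h.ne_x hvI, h.ne_y hvI⟩

lemma petal_ne (h : Hub G I x y z u T) (hA : A ⊆ petal G I u T d) : A ≠ I := fun h' =>
  (h.of_mem_petal (hA (h' ▸ h.u_mem))).2.1 rfl

variable [Finite V]

lemma separatedBy_sdiff_insert (h : Hub G I x y z u T) :
    SeparatedBy G (I \ insert u T) (insert u T) := fun v hv b hb => by
  by_cases hbT : b ∈ insert u T
  · exact Or.inr hbT
  rcases h.mem_of_adj hb with h' | rfl | rfl
  · exact Or.inl ⟨h', hbT⟩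
  · exact absurd ((h.adj_y_of_adj_x hb.symm).imp_right h.mem_of_adj_y) hv.2
  · exact absurd (Or.inr (h.mem_of_adj_y hb.symm)) hv.2

lemma exists_adj_notMem (h : Hub G I x y z u T) (ha : a ∈ T) (haz : a ≠ z) :
    ∃ d ∈ I \ insert u T, G.Adj a d := by
  obtain ⟨d, had, hd⟩ := Set.exists_mem_notMem_of_ncard_lt_ncard
    (ncard_triple_le.trans_lt (h.deg a (h.subset ha) haz) : ({x, y, u} : Set V).ncard < _)
  simp only [Set.mem_insert_iff, Set.mem_singleton_iff, not_or] at hd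
  refine ⟨d, ⟨(h.mem_of_adj had).resolve_right (by tauto), ?_⟩, had⟩
  rintro (h' | hdT)
  exacts [hd.2.2 h', h.not_adj_of_adj_u (h.adj_u hdT) hd.1 ha had.symm]

lemma subsingleton_neighborSet_inter (h : Hub G I x y z u T) (hT : 2 < T.ncard) (hw : w ∈ I)
    (hwu : w ≠ u) : (G.neighborSet w ∩ T).Subsingleton := by
  rintro a ⟨hwa, ha⟩ b ⟨hwb, hb⟩
  by_contra hab
  obtain ⟨c, hc, hcab⟩ := Set.exists_mem_notMem_of_ncard_lt_ncard
    (ncard_pair_le.trans_lt hT : ({a, b} : Set V).ncard < _)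
  have hwT : w ∉ T := fun h' => h.not_adj_of_adj_u (h.adj_u h') (h.ne_x hw) ha hwa
  have hwa : G.Adj w a := hwa
  have hwb : G.Adj w b := hwb
  have hxy := h.ne
  have hux := h.u_ne_x
  have huy := h.u_ne_y
  have hwx := h.ne_x hw
  have hwy := h.ne_y hw
  have hxa := h.adj_x ha
  have hxb := h.adj_x hb
  have hxc := h.adj_x hc
  have hua := h.adj_u ha
  have hub := h.adj_u hb
  have huc := h.adj_u hc
  have hay := (h.adj_y ha).symm
  have hby := h.ne_y_of_mem hb
  have hcy := h.ne_y_of_mem hc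
  have hxbuay := (pathIn_three hub.symm hua hay hby (Ne.symm hab) huy).cons hxb
    (by grind [SimpleGraph.Adj.ne])
  have hxcubway := (((pathIn_three hwb.symm hwa hay hby (Ne.symm hab) hwy).cons hub
    (by grind [SimpleGraph.Adj.ne])).cons huc.symm (by grind [SimpleGraph.Adj.ne])).cons hxc
    (by simp [hxa.ne, hxb.ne, hxc.ne, hux.symm, hwx.symm, hxy])
  exact h.false_of_pathIn_three hxcubway hxbuay (pathIn_two hxa hay hxy) (by omega)

lemma separatedBy_petal (h : Hub G I x y z u T) :
    SeparatedBy G (petal G I u T d) ({u} ∪ ({a} ∪ T \ {a})) := fun v hv b hb => by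
  rcases h.separatedBy_sdiff_insert v (componentIn_subset hv) b hb with h' | h'
  · exact Or.inl (mem_componentIn_of_adj hv hb h')
  · by_cases hba : b = a <;> simp_all

lemma not_petal_subset_singleton (h : Hub G I x y z u T) (hT : 2 < T.ncard) (ha : a ∈ T)
    (hd : d ∈ I \ insert u T) (had : G.Adj a d) : ¬ petal G I u T d ⊆ {z} := fun hz => by
  have hdC : d ∈ petal G I u T d := mem_componentIn_self hd
  have hdu := (h.of_mem_petal hdC).2.1
  refine h.not_separatedBy_singleton (Set.singleton_subset_iff.2 hd.1) ⟨d, rfl⟩ a ?_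
  rintro _ rfl b hb
  rcases h.separatedBy_petal (a := a) _ hdC b hb with h' | rfl | h' | h'
  · exact Or.inl ((hz h').trans (hz hdC).symm)
  · exact absurd had.symm (h.not_adj_of_adj_u hb.symm (h.ne_x hd.1) ha)
  · exact Or.inr h'
  · exact absurd (h.subsingleton_neighborSet_inter hT hd.1 hdu ⟨hb, h'.1⟩ ⟨had.symm, ha⟩) h'.2

lemma rooted_contract_petal (h : Hub G I x y z u T) (hT : 2 < T.ncard) (ha : a ∈ T)
    (hd : d ∈ I \ insert u T) (had : G.Adj a d) :
    Rooted 2 {z} (contract G (petal G I u T d) {a} (T \ {a}) x y) (petal G I u T d) x y z := by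
  have hC {v : V} (hv : v ∈ petal G I u T d) := h.of_mem_petal hv
  refine rooted_contract (W := {u}) h.ne (fun h' => (hC h').2.2.2.1 rfl)
    (fun h' => (hC h').2.2.2.2 rfl) h.separatedBy_petal (fun v hv hvz => ?_)
    (fun A hA hAz r _ hS => ?_) (fun A hA hAz hS => ?_) (fun A hA hAz hS => ?_)
    (Set.not_subset.1 (h.not_petal_subset_singleton hT ha hd had)) (by omega)
  · refine .of_sdiff_singleton (w := u) (fun b hb => ?_) (h.deg v (hC hv).1 hvz)
      (fun p hp q hq => hp.2.trans hq.2.symm) ?_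
    · exact (h.separatedBy_petal v hv b hb.1).imp_right fun h' => h'.resolve_left hb.2
    · exact (h.subsingleton_neighborSet_inter hT (hC hv).1 (hC hv).2.1).anti
        (Set.inter_subset_inter Set.sdiff_subset Set.sdiff_subset)
  · exact h.not_separatedBy_of_exists_ne (fun v hv => (hC (hA hv)).1) (Set.not_subset.1 hAz)
      (h.petal_ne hA) hS
  · exact h.not_separatedBy_of_exists_ne (fun v hv => (hC (hA hv)).1) (Set.not_subset.1 hAz)
      (h.petal_ne hA) hS
  · have hdA : d ∈ A := componentIn_subset_of_closed hA
      ((Set.nonempty_of_not_subset hAz).mono Set.sdiff_subset)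
      (fun v hv b hb hvb => (hS v hv b hvb).resolve_right fun h' =>
        h'.elim (hC hb).2.1 fun hbT => (hC hb).2.2.1 hbT.1) (mem_componentIn_self hd)
    rcases hS d hdA a had.symm with haA | rfl | haT
    exacts [(hC (hA haA)).2.2.1 ha, h.u_notMem ha, haT.2 rfl]

lemma ncard_eq_two (h : Hub G I x y z u T) : T.ncard = 2 := by
  refine le_antisymm (not_lt.1 fun hT => ?_) (Set.one_lt_ncard_iff_nontrivial.2 h.nontrivial)
  obtain ⟨a, ha, haz⟩ := h.nontrivial.exists_ne z
  obtain ⟨d, hd, had⟩ := h.exists_adj_notMem ha haz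
  have hC {v : V} (hv : v ∈ petal G I u T d) := h.of_mem_petal hv
  have hg := (goodBelow_two _).link_of_pendant le_rfl (h.rooted_contract_petal hT ha hd had)
    (Nat.lt_succ_self _) ?_
  · refine h.not_good (hg.two_to_three (c := 4) fun m hm => ?_)
    obtain ⟨p, rfl, q, hq, hpq⟩ := hm.exists_pathIn
      (by simpa using fun h' => (hC h').2.2.1 ha)
      (Set.disjoint_left.2 fun q hq hqC => (hC hqC).2.2.1 hq.1) (by simp)
    obtain ⟨c, hc, hcpq⟩ := Set.exists_mem_notMem_of_ncard_lt_ncard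
      (ncard_pair_le.trans_lt hT : ({p, q} : Set V).ncard < _)
    have hyC : y ∉ petal G I u T d := fun h' => (hC h').2.2.2.2 rfl
    have hxC : x ∉ petal G I u T d := fun h' => (hC h').2.2.2.1 rfl
    have huC : u ∉ petal G I u T d := fun h' => (hC h').2.1 rfl
    have hcC : c ∉ petal G I u T d := fun h' => (hC h').2.2.1 hc
    have hpqy := hpq.symm.cons (h.adj_y hq.1)
      (by simp [(h.adj_y ha).ne, (h.adj_y hq.1).ne, hyC])
    exact hpqy.symm.fan (by simp [h.ne, (h.adj_x hq.1).ne, (h.adj_x ha).ne, hxC])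
      (by simp [h.u_ne_y, (h.adj_u hq.1).ne, (h.adj_u ha).ne, huC])
      (by simpa [(h.adj_y hc).ne', hcC, and_comm] using hcpq) h.u_ne_x (h.adj_x ha) (h.adj_u ha)
      (h.adj_u hc) (h.adj_x hc)
  · rintro - v hv - - ⟨p, rfl, hpv⟩ ⟨q, hq, hqv⟩
    exact hq.2 (h.subsingleton_neighborSet_inter hT (hC hv).1 (hC hv).2.1 ⟨hqv.symm, hq.1⟩
      ⟨hpv.symm, ha⟩)

end Hub

end Petal

section HubPair

variable {G : SimpleGraph V} {I A S T : Set V} {a b e p q u v x y z : V} {n : ℕ}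

lemma PathIn.extend_ends (hS : PathIn G S p q n) (hxp : G.Adj x p) (hyq : G.Adj y q) (hxy : x ≠ y)
    (hx : x ∉ S) (hy : y ∉ S) : PathIn G Set.univ x y (n + 2) :=
  ((hS.symm.cons hyq hy).symm.cons hxp (by simp [hxy, hx])).univ

variable [Finite V]

namespace Hub

lemma separatedBy_sdiff_common (h : Hub G I x y z u T) : SeparatedBy G (I \ T) ({x} ∪ T) :=
  fun v hv b hb => by
    by_cases hbT : b ∈ T
    · exact Or.inr (Or.inr hbT)
    rcases h.mem_of_adj hb with h' | h' | rfl
    exacts [Or.inl ⟨h', hbT⟩, Or.inr (Or.inl h'), absurd (h.mem_of_adj_y hb.symm) hv.2]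

lemma rooted_contract_sdiff (h : Hub G I x y z u {a, b}) (hab : a ≠ b)
    (he : ∀ v ∈ I \ {a, b}, v ≠ e → ¬ G.Adj x v ∧ v ≠ z) :
    Rooted 3 ∅ (contract G (I \ {a, b}) {a} {b} x y) (I \ {a, b}) x y e := by
  refine h.contract_pair (W := {x}) Set.sdiff_subset hab h.separatedBy_sdiff_common
    (fun v hv hve => ?_) (fun A hA hne r hS => ?_) ?_
  · rw [Set.inter_eq_left.2 fun b hb => ?_]
    · exact h.deg v hv.1 (he v hv hve).2
    · rcases h.separatedBy_sdiff_common v hv b hb with h' | rfl | h'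
      exacts [Or.inl h', absurd hb.symm (he v hv hve).1, Or.inr h']
  · rw [Set.pair_comm] at hS
    refine h.not_separatedBy_pair (hA.trans Set.sdiff_subset)
      ((Set.nonempty_of_not_subset hne).mono Set.sdiff_subset) ?_ r hS
    rintro rfl
    exact (hA (h.subset (Or.inl rfl))).2 (Or.inl rfl)
  · obtain ⟨c, hc, hcz⟩ := h.nontrivial.exists_ne z
    obtain ⟨d, ⟨hdI, hd⟩, -⟩ := h.exists_adj_notMem hc hcz
    rw [Set.mem_insert_iff, not_or] at hd
    by_cases hue : u = e
    · exact ⟨d, ⟨hdI, hd.2⟩, fun h' => hd.1 (h'.trans hue.symm)⟩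
    · exact ⟨u, ⟨h.u_mem, h.u_notMem⟩, hue⟩

lemma ncard_lt_of_subset_sdiff (h : Hub G I x y z u T) (hA : A ⊆ I \ T) : A.ncard < I.ncard :=
  have ⟨_, ht⟩ := h.nontrivial.nonempty
  Set.ncard_lt_ncard ⟨hA.trans Set.sdiff_subset, fun h' => (hA (h' (h.subset ht))).2 ht⟩

lemma false_of_pair (h : Hub G I x y z u {a, b}) (hab : a ≠ b)
    (he : ∀ v ∈ I \ {a, b}, v ≠ e → ¬ G.Adj x v ∧ v ≠ z) : False := by
  refine h.not_good ((h.ih.link (h.rooted_contract_sdiff hab he)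
    (h.ncard_lt_of_subset_sdiff subset_rfl)).shift (c := 4) fun m hm => ?_)
  have hab' := hm.pathIn_of_singletons (by simp) (by simp) hab
  have hxa := h.adj_x (Or.inl rfl)
  have hxb := h.adj_x (Or.inr rfl)
  have hya := h.adj_y (Or.inl rfl)
  have hyb := h.adj_y (Or.inr rfl)
  exact hab'.extend_ends hxa hyb h.ne (by simp [hxa.ne, hxb.ne, h.x_notMem])
    (by simp [hya.ne, hyb.ne, h.y_notMem])

lemma not_separatedBy_of_subset_sdiff_insert (h : Hub G I x y z u T) (ha : a ∈ T)
    (hA : A ⊆ I \ insert u T) (hne : A.Nonempty) : ¬ SeparatedBy G A {a, u} := fun hS => by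
  have hAI := hA.trans Set.sdiff_subset
  by_cases hAz : A ⊆ {z}
  · obtain rfl := (Set.subset_singleton_iff_eq.1 hAz).resolve_left hne.ne_empty
    have hzI := hA rfl
    by_cases huz : G.Adj u z
    · refine h.not_separatedBy_singleton hAI hne u ?_
      rintro _ rfl c hc
      rcases hS _ rfl c hc with h' | rfl | h'
      exacts [Or.inl h', absurd hc (h.not_adj_of_adj_u huz (h.ne_x hzI.1) ha), Or.inr h']
    · refine h.not_separatedBy_singleton hAI hne a ?_
      rintro _ rfl c hc
      rcases hS _ rfl c hc with h' | h' | rfl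
      exacts [Or.inl h', Or.inr h', absurd hc.symm huz]
  · refine h.not_separatedBy_of_exists_ne hAI (Set.not_subset.1 hAz) ?_ hS
    rintro rfl
    exact (hA h.u_mem).2 (Or.inl rfl)

lemma exists_sdiff_insert_ne (h : Hub G I x y z u T) (hzu : z ≠ u) (hzT : z ∉ T) :
    ∃ v ∈ I \ insert u T, v ≠ z := by
  obtain ⟨a, ha⟩ := h.nontrivial.nonempty
  obtain ⟨d, hd, had⟩ := h.exists_adj_notMem ha fun h' => hzT (h' ▸ ha)
  obtain ⟨c, huc, hc⟩ := Set.exists_mem_notMem_of_ncard_lt_ncard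
    (((Set.ncard_insert_le x T).trans (by rw [h.ncard_eq_two])).trans_lt
      (h.deg u h.u_mem hzu.symm) : (insert x T).ncard < _)
  rw [Set.mem_insert_iff, not_or] at hc
  by_cases hdz : d = z
  · refine ⟨c, ⟨?_, ?_⟩, ?_⟩
    · rcases h.mem_of_adj huc with h' | h' | rfl
      exacts [h', absurd h' hc.1, absurd huc.symm h.not_adj_y_u]
    · rintro (rfl | h')
      exacts [SimpleGraph.irrefl _ huc, hc.2 h']
    · rintro rfl
      exact h.not_adj_of_adj_u huc hc.1 ha (hdz ▸ had.symm)
  · exact ⟨d, hd, hdz⟩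

lemma rooted_contract_sdiff_insert (h : Hub G I x y z u {a, b}) (hzu : z ≠ u)
    (hz : z ∉ ({a, b} : Set V)) :
    Rooted 3 ∅ (contract G (I \ {u, a, b}) {a, u} {b} x y) (I \ {u, a, b}) x y z := by
  have ha : a ∈ ({a, b} : Set V) := Or.inl rfl
  have hsep : SeparatedBy G (I \ {u, a, b}) (∅ ∪ ({a, u} ∪ {b})) := by
    convert h.separatedBy_sdiff_insert using 1
    ext
    simp only [Set.union_singleton, Set.union_insert, insert_empty_eq, Set.mem_insert_iff,
      Set.mem_singleton_iff]
    tauto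
  refine rooted_contract h.ne (fun h' => h.x_notMem h'.1) (fun h' => h.y_notMem h'.1) hsep
    (fun v hv hvz => ?_) (fun A hA hne r _ hS => ?_) (fun A hA hne hS => ?_)
    (fun A hA hne hS => ?_) (h.exists_sdiff_insert_ne hzu hz) (fun _ => Or.inl ⟨b, rfl, ?_⟩)
  · refine .of_subset (fun c hc => (hsep v hv c hc).imp_right (Or.resolve_left · id))
      (h.deg v hv.1 hvz) ?_
      (Set.subsingleton_singleton.anti Set.inter_subset_right)
    have hau : G.Adj v a → ¬ G.Adj v u := fun hva hvu =>
      h.not_adj_of_adj_u hvu.symm (h.ne_x hv.1) ha hva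
    rintro p ⟨hp, rfl | rfl⟩ q ⟨hq, rfl | rfl⟩
    exacts [rfl, absurd hq (hau hp), absurd hp (hau hq), rfl]
  · rw [insert_empty_eq] at hS
    exact h.not_separatedBy_singleton (hA.trans Set.sdiff_subset)
      ((Set.nonempty_of_not_subset hne).mono Set.sdiff_subset) r hS
  · rw [Set.empty_union] at hS
    exact h.not_separatedBy_of_subset_sdiff_insert ha hA
      ((Set.nonempty_of_not_subset hne).mono Set.sdiff_subset) hS
  · rw [Set.empty_union] at hS
    exact h.not_separatedBy_singleton (hA.trans Set.sdiff_subset)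
      ((Set.nonempty_of_not_subset hne).mono Set.sdiff_subset) b hS
  · exact h.triangleFree.subset _ (Set.subset_compl_singleton_iff.2
      (by simp [(h.adj_x (Or.inr rfl)).ne, h.x_notMem]))

lemma false_of_pair_of_adj (h : Hub G I x y z u {a, b}) (hab : a ≠ b) (hxu : G.Adj x u)
    (hzu : z ≠ u) (hz : z ∉ ({a, b} : Set V)) : False := by
  have hlt : (I \ {u, a, b}).ncard < I.ncard :=
    h.ncard_lt_of_subset_sdiff (Set.sdiff_subset_sdiff_right (Set.subset_insert _ _))
  refine h.not_good ((h.ih.link (h.rooted_contract_sdiff_insert hzu hz) hlt).shift (c := 4)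
    fun m hm => ?_)
  have hxa := h.adj_x (Or.inl rfl)
  have hxb := h.adj_x (Or.inr rfl)
  have hya := h.adj_y (Or.inl rfl)
  have hyb := h.adj_y (Or.inr rfl)
  have hbu := (h.adj_u (Or.inr rfl)).ne'
  obtain ⟨p, hp, q, rfl, hpq⟩ := hm.exists_pathIn
    (Set.disjoint_left.2 (by grind)) (by simp) (by simp [hbu, hab.symm])
  obtain ⟨hxp, hyp⟩ : G.Adj x p ∧ y ≠ p := by
    rcases hp with rfl | rfl
    exacts [⟨hxa, hya.ne⟩, ⟨hxu, h.u_ne_y.symm⟩]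
  exact hpq.extend_ends hxp hyb h.ne (by simp [hxp.ne, hxb.ne, h.x_notMem])
    (by simp [hyp, hyb.ne, h.y_notMem])

protected lemma false (h : Hub G I x y z u T) : False := by
  obtain ⟨a, b, hab, rfl⟩ := Set.ncard_eq_two.1 h.ncard_eq_two
  have eq_u {v : V} (hv : v ∈ I \ {a, b}) (hxv : G.Adj x v) : v = u :=
    (h.adj_y_of_adj_x hxv).resolve_right fun h' => hv.2 (h.mem_of_adj_y h')
  by_cases hz : z = u ∨ z ∈ ({a, b} : Set V)
  · refine h.false_of_pair (e := u) hab fun v hv hvu => ⟨fun h' => hvu (eq_u hv h'), ?_⟩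
    rintro rfl
    exact hz.elim hvu hv.2
  rw [not_or] at hz
  by_cases hxu : G.Adj x u
  · exact h.false_of_pair_of_adj hab hxu hz.1 hz.2
  · exact h.false_of_pair (e := z) hab fun v hv hvz => ⟨fun h' => hxu (eq_u hv h' ▸ h'), hvz⟩

end Hub

end HubPair

/-! ### Three good paths -/

section MainInduction

variable {G : SimpleGraph V} {A I S : Set V} {a b p x y z : V} {n : ℕ}

lemma PathIn.two_le (h : PathIn G S a b n) (hab : a ≠ b) (hadj : ¬ G.Adj a b) : 2 ≤ n := by
  obtain ⟨p, -, rfl, -⟩ := h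
  by_contra! hp
  interval_cases hl : p.length
  exacts [hab (Walk.eq_of_length_eq_zero hl), hadj (Walk.adj_of_length_eq_one hl)]

lemma subset_singleton_of_separatedBy (hG : KConnected G 2) (hS : SeparatedBy G A {p}) :
    A ⊆ {p} ∨ Aᶜ ⊆ {p} := by
  by_contra! h
  obtain ⟨⟨b, hb, hbp⟩, ⟨t, ht, htp⟩⟩ := h.imp Set.not_subset.1 Set.not_subset.1
  obtain ⟨W⟩ := (hG.2 {p} (Set.finite_singleton p) (by simp)).preconnected ⟨b, hbp⟩ ⟨t, htp⟩
  obtain ⟨d, -, hd, hd'⟩ := W.exists_boundary_dart {v | (v : V) ∈ A} hb ht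
  exact (hS d.fst hd d.snd d.adj).elim hd' d.snd.2

lemma deleteEdges_adj_iff (hax : a ≠ x) (hay : a ≠ y) :
    (G.deleteEdges {s(x, y)}).Adj a b ↔ G.Adj a b := by
  simp [hax, hay]

lemma addEdge_adj_iff (hax : a ≠ x) (hay : a ≠ y) : (AddEdge G x y).Adj a b ↔ G.Adj a b := by
  simp [AddEdge, hax, hay]

lemma exists_ne_ne_of_kConnected (hG : KConnected G 2) (x y : V) : ∃ v, v ≠ x ∧ v ≠ y := by
  by_contra! h
  have huniv : (Set.univ : Set V) ⊆ {x, y} := fun v _ => or_iff_not_imp_left.2 (h v)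
  have := (Set.ncard_le_ncard huniv).trans ncard_pair_le
  rw [Set.ncard_univ] at this
  exact hG.1.not_ge this

lemma not_separatedBy_deleteEdges (hxy : x ≠ y) (hG : KConnected (AddEdge G x y) 2)
    (hdeg : ∀ v, v ≠ x → v ≠ y → (G.neighborSet v).Nonempty) (hA : A ⊆ {x, y}ᶜ)
    (hne : A.Nonempty) : ¬ SeparatedBy (G.deleteEdges {s(x, y)}) A {p} := fun hS => by
  have hA {a : V} (ha : a ∈ A) : a ≠ x ∧ a ≠ y := by simpa using hA ha
  rcases subset_singleton_of_separatedBy hG fun a ha b hab => hS a ha b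
    ((deleteEdges_adj_iff (hA ha).1 (hA ha).2).2
      ((addEdge_adj_iff (hA ha).1 (hA ha).2).1 hab)) with h | h
  · obtain ⟨a, ha⟩ := hne
    obtain rfl := h ha
    obtain ⟨b, hab⟩ := hdeg a (hA ha).1 (hA ha).2
    rcases hS a ha b ((deleteEdges_adj_iff (hA ha).1 (hA ha).2).2 hab) with h' | h'
    exacts [hab.ne' (h h'), hab.ne' h']
  · exact hxy ((h fun hx => (hA hx).1 rfl).trans (h fun hy => (hA hy).2 rfl).symm)

lemma rooted_deleteEdges (hxy : x ≠ y) (hG : KConnected (AddEdge G x y) 2)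
    (hdeg : ∀ v, v ≠ x → v ≠ y → 4 ≤ (G.neighborSet v).ncard) (hfree : G.CliqueFreeOn {x}ᶜ 3) :
    Rooted 3 ∅ (G.deleteEdges {s(x, y)}) {x, y}ᶜ x y x where
  ne := hxy
  x_notMem := by simp
  y_notMem := by simp
  adj_mem {a b} _ := by
    simp only [Set.mem_compl_iff, Set.mem_insert_iff, Set.mem_singleton_iff, not_or]
    tauto
  not_adj := by simp
  not_separatedBy A hA hne p := not_separatedBy_deleteEdges hxy hG
    (fun v hvx hvy => Set.nonempty_of_ncard_ne_zero (by have := hdeg v hvx hvy; omega)) hA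
    ((Set.nonempty_of_not_subset hne).mono Set.sdiff_subset)
  deg v hv _ := by
    rw [Set.mem_compl_iff, Set.mem_insert_iff, Set.mem_singleton_iff, not_or] at hv
    exact (hdeg v hv.1 hv.2).trans_eq
      (congrArg _ (Set.ext fun _ => (deleteEdges_adj_iff hv.1 hv.2).symm))
  exists_ne := by
    obtain ⟨v, hvx, hvy⟩ := exists_ne_ne_of_kConnected hG x y
    exact ⟨v, by simp [hvx, hvy], hvx⟩
  cliqueFreeOn _ := Or.inl fun _ hs ht => hfree hs (ht.mono (G.deleteEdges_le _))

variable [Finite V]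

lemma MinCounterexample.exists_hub (h : MinCounterexample 3 G I x y z)
    (hfree : G.CliqueFreeOn {x}ᶜ 3) : ∃ u T, Hub G I x y z u T := by
  obtain ⟨u, hu, a, b, hab, hxa, hxb, hua, hub⟩ :
      ∃ u ∈ I, ∃ a b, a ≠ b ∧ G.Adj x a ∧ G.Adj x b ∧ G.Adj u a ∧ G.Adj u b := by
    by_cases hd : ∀ a ∈ I, a ≠ z → G.Adj x a → G.Adj a y → ∃ d ∈ I, ¬ G.Adj x d ∧ G.Adj a d
    · exact h.exists_two_common_neighbors (fun _ => hfree) hd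
    push Not at hd
    obtain ⟨a, ha, haz, -, -, hN⟩ := hd
    have adj_x {d : V} (had : G.Adj a d) (hdx : d ≠ x) (hdy : d ≠ y) : G.Adj x d := by
      by_contra hxd
      exact hN d ((h.mem_of_adj had).resolve_right (by tauto)) hxd had
    have hdeg := h.deg a ha haz
    obtain ⟨b, hab, hb⟩ := Set.exists_mem_notMem_of_ncard_lt_ncard
      (ncard_pair_le.trans_lt (by omega) : ({x, y} : Set V).ncard < (G.neighborSet a).ncard)
    obtain ⟨c, hac, hc⟩ := Set.exists_mem_notMem_of_ncard_lt_ncard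
      (ncard_triple_le.trans_lt hdeg : ({x, y, b} : Set V).ncard < _)
    simp only [Set.mem_insert_iff, Set.mem_singleton_iff, not_or] at hb hc
    exact ⟨a, ha, b, c, Ne.symm hc.2.2, adj_x hab hb.1 hb.2, adj_x hac hc.1 hc.2.1, hab, hac⟩
  exact ⟨u, {t | G.Adj x t ∧ G.Adj u t}, h, hfree, hu, fun _ => Iff.rfl, a, ⟨hxa, hua⟩, b,
    ⟨hxb, hub⟩, hab⟩

theorem goodBelow_three (N : ℕ) : GoodBelow V 3 N := by
  induction N with
  | zero => exact fun G I x y z _ h => absurd h (Nat.not_lt_zero _)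
  | succ N ih =>
    intro G I x y z hr hN
    by_contra hgood
    have h : MinCounterexample 3 G I x y z :=
      ⟨hr, Or.inr rfl, fun G' I' x' y' z' hr' hN' => ih G' I' x' y' z' hr' (by omega), hgood⟩
    rcases h.cliqueFreeOn rfl with hfree | hfree
    · obtain ⟨u, T, hT⟩ := h.exists_hub hfree
      exact hT.false
    · obtain ⟨u, T, hT⟩ := h.symm.exists_hub hfree
      exact hT.false

end MainInduction

end GoodPaths

/-- Lemma 5: if `G + xy` is 2-connected, every vertex other than `x, y` has degree at
least 4, and `G - x` is triangle-free, then `G` contains three good `(x,y)`-paths. -/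
theorem three_good_paths {V : Type*} [Fintype V] (G : SimpleGraph V) (x y : V) (hxy : x ≠ y)
    (h2 : KConnected (AddEdge G x y) 2)
    (hdeg : ∀ v, v ≠ x → v ≠ y → 4 ≤ (G.neighborSet v).ncard)
    (htf : (G.induce {v | v ≠ x}).CliqueFree 3) :
    ∃ (P1 P2 P3 : G.Walk x y), P1.IsPath ∧ P2.IsPath ∧ P3.IsPath ∧
      GoodTriple P1.length P2.length P3.length := by
  have hfree : G.CliqueFreeOn {x}ᶜ 3 := (G.cliqueFree_induce_iff _ _).1 htf
  have hr := GoodPaths.rooted_deleteEdges hxy h2 hdeg hfree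
  obtain ⟨a, b, c, ha, hb, hc, habc⟩ :=
    (GoodPaths.goodBelow_three _ _ _ x y x hr (Nat.lt_succ_self _)).2 rfl
  have hc2 : 2 ≤ c := hc.two_le hxy hr.not_adj
  obtain ⟨P1, hP1, rfl, -⟩ := ha.mono_graph (G.deleteEdges_le _)
  obtain ⟨P2, hP2, rfl, -⟩ := hb.mono_graph (G.deleteEdges_le _)
  obtain ⟨P3, hP3, rfl, -⟩ := hc.mono_graph (G.deleteEdges_le _)
  exact ⟨P1, P2, P3, hP1, hP2, hP3, hc2, by omega, by omega, habc⟩
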